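/- Let α ∈ (0, π/4) and set N_S(α) = 2⌊π/(8α)⌋ − ⌊2⌊π/(8α)⌋ − π/(4α)⌋. Then the maximum number of switchings over time optimal trajectories of (Σ)_S starting at the north pole and ending at a point of the closed upper hemisphere equals N_S(α): (a) every time optimal trajectory γ of (Σ)_S on [0,T] with γ(0) = (0,0,1) and γ(T)₃ ≥ 0 has at most N_S(α) switching times; (b) there exists such a time optimal trajectory whose control has exactly N_S(α) switching times. -/

import Mathlib

open Real MeasureTheory intervalIntegral

/-- The drift vector field on the sphere: `F_S(y) = cos α·(−y₂, y₁, 0)`. -/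
noncomputable def FS (α : ℝ) (y : Fin 3 → ℝ) : Fin 3 → ℝ :=
  ![Real.cos α * (-(y 1)), Real.cos α * y 0, 0]

/-- The controlled vector field on the sphere: `G_S(y) = sin α·(0, −y₃, y₂)`. -/
noncomputable def GS (α : ℝ) (y : Fin 3 → ℝ) : Fin 3 → ℝ :=
  ![0, Real.sin α * (-(y 2)), Real.sin α * y 1]

/-- An admissible pair for `(Σ)_S` on `[a,b]`: a measurable control `u : [a,b] → [-1,1]`
together with an absolutely continuous curve `γ : [a,b] → S²` solving
`γ' = F_S(γ) + u·G_S(γ)` a.e. (expressed in integral form, componentwise). -/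
structure AdmissiblePairS (α a b : ℝ) (γ : ℝ → Fin 3 → ℝ) (u : ℝ → ℝ) : Prop where
  hab : a ≤ b
  humeas : Measurable u
  hubound : ∀ t ∈ Set.Icc a b, |u t| ≤ 1
  hsph : ∀ t ∈ Set.Icc a b, (γ t 0) ^ 2 + (γ t 1) ^ 2 + (γ t 2) ^ 2 = 1
  hcont : ContinuousOn γ (Set.Icc a b)
  hode : ∀ t ∈ Set.Icc a b, ∀ i,
    γ t i = γ a i + ∫ s in a..t, (FS α (γ s) i + u s * GS α (γ s) i)

/-- Time optimality for `(Σ)_S`. -/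
def TimeOptimalS (α a b : ℝ) (γ : ℝ → Fin 3 → ℝ) (u : ℝ → ℝ) : Prop :=
  AdmissiblePairS α a b γ u ∧
  ∀ a' b' γ' u', AdmissiblePairS α a' b' γ' u' →
    γ' a' = γ a → γ' b' = γ b → b - a ≤ b' - a'

/-- `t` is a switching time of the control `u : [a,b] → [-1,1]`. -/
def IsSwitching (a b : ℝ) (u : ℝ → ℝ) (t : ℝ) : Prop :=
  t ∈ Set.Icc a b ∧ ∀ ε > 0, ¬ ∃ c : ℝ, (c = 1 ∨ c = -1) ∧
    ∀ᵐ s ∂(volume.restrict (Set.Ioo (t - ε) (t + ε) ∩ Set.Icc a b)), u s = c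

/-- `N_S(α) = 2⌊π/(8α)⌋ − ⌊2⌊π/(8α)⌋ − π/(4α)⌋`. -/
noncomputable def NS (α : ℝ) : ℤ :=
  2 * ⌊π / (8 * α)⌋ - ⌊((2 * ⌊π / (8 * α)⌋ : ℤ) : ℝ) - π / (4 * α)⌋

open scoped Matrix Topology

/-!
By the maximum principle a time optimal trajectory `γ` carries a momentum `M`, moved by the same
rotations as `γ` and orthogonal to it, such that the control is the sign of `M · 0`. The switching
points are then determined by angles that grow by a constant step `2 * halfStep ≥ 2α`. Reflecting
a piece of the trajectory across the equator shows that an optimal trajectory crosses the equator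
at most once, so that one ending in the upper hemisphere stays there; the angles are therefore at
most `π / 2`, which leaves room for at most `NS α` of them. Conversely, each further switching
raises the colatitude that can be attained by at most `2α`. An optimal trajectory to the point of
colatitude `r` on the meridian through the rotation axes, where `r < π / 2` is larger than
`2 * (NS α - 1) * α`, exists by compactness, and must switch `NS α` times.
-/

/-! ### Absolutely continuous functions with a prescribed derivative -/

/-- `f` is absolutely continuous on `[a, b]` with almost everywhere derivative `φ`; unlike with
`deriv`, the derivative is part of the data and may be changed on a null set. -/
def HasACDeriv (a b : ℝ) (f φ : ℝ → ℝ) : Prop :=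
  AbsolutelyContinuousOnInterval f a b ∧ ∀ᵐ t, t ∈ Set.Ioo a b → HasDerivAt f (φ t) t

theorem absolutelyContinuousOnInterval_congr {X : Type*} [PseudoMetricSpace X] {a b : ℝ}
    {f g : ℝ → X} (hf : AbsolutelyContinuousOnInterval f a b) (h : Set.EqOn f g (Set.uIcc a b)) :
    AbsolutelyContinuousOnInterval g a b := by
  rw [absolutelyContinuousOnInterval_iff] at hf ⊢
  intro ε hε
  obtain ⟨δ, hδ, H⟩ := hf ε hε
  refine ⟨δ, hδ, fun E hE hl => (Finset.sum_congr rfl fun i hi => ?_).trans_lt (H E hE hl)⟩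
  rw [h (hE.1 i hi).1, h (hE.1 i hi).2]

theorem absolutelyContinuousOnInterval_lipschitz_comp {X Y : Type*} [PseudoMetricSpace X]
    [PseudoMetricSpace Y] {a b : ℝ} {f : ℝ → X} {F : X → Y} {K : NNReal} (hF : LipschitzWith K F)
    (hf : AbsolutelyContinuousOnInterval f a b) :
    AbsolutelyContinuousOnInterval (fun t => F (f t)) a b := by
  rw [absolutelyContinuousOnInterval_iff] at hf ⊢
  intro ε hε
  obtain ⟨δ, hδ, H⟩ := hf (ε / (K + 1)) (by positivity)
  refine ⟨δ, hδ, fun E hE hl => ?_⟩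
  have hlt := H E hE hl
  rw [lt_div_iff₀ (by positivity)] at hlt
  have hnonneg : 0 ≤ ∑ i ∈ Finset.range E.1, dist (f (E.2 i).1) (f (E.2 i).2) :=
    Finset.sum_nonneg fun i _ => dist_nonneg
  calc ∑ i ∈ Finset.range E.1, dist (F (f (E.2 i).1)) (F (f (E.2 i).2))
      ≤ K * ∑ i ∈ Finset.range E.1, dist (f (E.2 i).1) (f (E.2 i).2) := by
        rw [Finset.mul_sum]
        exact Finset.sum_le_sum fun i _ => hF.dist_le_mul _ _
    _ < ε := by nlinarith

theorem ae_mem_Ioo_iff_ae_mem_Icc {a b : ℝ} {P : ℝ → Prop} :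
    (∀ᵐ t, t ∈ Set.Ioo a b → P t) ↔ ∀ᵐ t, t ∈ Set.Icc a b → P t := by
  rw [← ae_restrict_iff' measurableSet_Ioo, ← ae_restrict_iff' measurableSet_Icc,
    Measure.restrict_congr_set Ioo_ae_eq_Icc]

namespace HasACDeriv

variable {a b : ℝ} {f g φ ψ : ℝ → ℝ}

theorem continuousOn (h : HasACDeriv a b f φ) : ContinuousOn f (Set.Icc a b) :=
  h.1.continuousOn.mono Set.Icc_subset_uIcc

theorem add (hf : HasACDeriv a b f φ) (hg : HasACDeriv a b g ψ) :
    HasACDeriv a b (fun t => f t + g t) (fun t => φ t + ψ t) := by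
  refine ⟨hf.1.add hg.1, ?_⟩
  filter_upwards [hf.2, hg.2] with t hft hgt ht using (hft ht).add (hgt ht)

theorem neg (hf : HasACDeriv a b f φ) : HasACDeriv a b (fun t => -f t) (fun t => -φ t) := by
  refine ⟨hf.1.neg, ?_⟩
  filter_upwards [hf.2] with t hft ht using (hft ht).neg

theorem sub (hf : HasACDeriv a b f φ) (hg : HasACDeriv a b g ψ) :
    HasACDeriv a b (fun t => f t - g t) (fun t => φ t - ψ t) := by
  simpa only [sub_eq_add_neg] using hf.add hg.neg

theorem const_mul (c : ℝ) (hf : HasACDeriv a b f φ) :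
    HasACDeriv a b (fun t => c * f t) (fun t => c * φ t) := by
  refine ⟨hf.1.const_mul c, ?_⟩
  filter_upwards [hf.2] with t hft ht using (hft ht).const_mul c

theorem mul (hf : HasACDeriv a b f φ) (hg : HasACDeriv a b g ψ) :
    HasACDeriv a b (fun t => f t * g t) (fun t => φ t * g t + f t * ψ t) := by
  refine ⟨hf.1.mul hg.1, ?_⟩
  filter_upwards [hf.2, hg.2] with t hft hgt ht using (hft ht).mul (hgt ht)

theorem lipschitz_comp {F F' : ℝ → ℝ} {K : NNReal} (hF : LipschitzWith K F)
    (hF' : ∀ x, HasDerivAt F (F' x) x) (hf : HasACDeriv a b f φ) :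
    HasACDeriv a b (fun t => F (f t)) (fun t => F' (f t) * φ t) := by
  refine ⟨absolutelyContinuousOnInterval_lipschitz_comp hF hf.1, ?_⟩
  filter_upwards [hf.2] with t hft ht using (hF' (f t)).comp t (hft ht)

theorem congr_deriv_ae (hf : HasACDeriv a b f φ) (h : ∀ᵐ t, t ∈ Set.Ioo a b → φ t = ψ t) :
    HasACDeriv a b f ψ := by
  refine ⟨hf.1, ?_⟩
  filter_upwards [hf.2, h] with t hft heq ht using heq ht ▸ hft ht

theorem congr (hab : a ≤ b) (hf : HasACDeriv a b f φ) (hfg : Set.EqOn f g (Set.Icc a b))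
    (hφψ : Set.EqOn φ ψ (Set.Ioo a b)) : HasACDeriv a b g ψ := by
  refine ⟨absolutelyContinuousOnInterval_congr hf.1 (by rwa [Set.uIcc_of_le hab]), ?_⟩
  filter_upwards [hf.2] with t hft ht
  refine hφψ ht ▸ (hft ht).congr_of_eventuallyEq ?_
  filter_upwards [Icc_mem_nhds ht.1 ht.2] with s hs using (hfg hs).symm

theorem mono {a' b' : ℝ} (hf : HasACDeriv a b f φ) (ha : a ≤ a') (hab : a' ≤ b') (hb : b' ≤ b) :
    HasACDeriv a' b' f φ := by
  refine ⟨hf.1.mono ?_, ?_⟩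
  · rw [Set.uIcc_of_le hab, Set.uIcc_of_le (ha.trans (hab.trans hb))]
    exact Set.Icc_subset_Icc ha hb
  · filter_upwards [hf.2] with t hft ht using hft (Set.Ioo_subset_Ioo ha hb ht)

theorem ae_deriv_eq (hf : HasACDeriv a b f φ) : ∀ᵐ t, t ∈ Set.Ioc a b → deriv f t = φ t := by
  filter_upwards [ae_mem_Ioo_iff_ae_mem_Icc.1 hf.2] with t hft ht
    using (hft (Set.Ioc_subset_Icc_self ht)).deriv

theorem intervalIntegrable (hab : a ≤ b) (hf : HasACDeriv a b f φ) :
    IntervalIntegrable φ volume a b := by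
  refine hf.1.intervalIntegrable_deriv.congr_ae ?_
  rw [Set.uIoc_of_le hab, Filter.EventuallyEq, ae_restrict_iff' measurableSet_Ioc]
  exact hf.ae_deriv_eq

theorem eq_add_integral (hf : HasACDeriv a b f φ) {t : ℝ} (ht : t ∈ Set.Icc a b) :
    f t = f a + ∫ s in a..t, φ s := by
  have hft := hf.mono le_rfl ht.1 ht.2
  rw [← sub_eq_iff_eq_add', ← hft.1.integral_deriv_eq_sub]
  refine intervalIntegral.integral_congr_ae ?_
  rw [Set.uIoc_of_le ht.1]
  exact hft.ae_deriv_eq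

theorem of_eq_add_integral (hab : a ≤ b) (hφ : IntervalIntegrable φ volume a b)
    (h : ∀ t ∈ Set.Icc a b, f t = f a + ∫ s in a..t, φ s) : HasACDeriv a b f φ := by
  have hprim : HasACDeriv a b (fun t => f a + ∫ s in a..t, φ s) φ := by
    refine ⟨((LipschitzWith.const (f a)).lipschitzOnWith).absolutelyContinuousOnInterval.add
      (hφ.absolutelyContinuousOnInterval_intervalIntegral (by simp)), ?_⟩
    filter_upwards [hφ.ae_hasDerivAt_integral] with t hder ht
    exact (hder (Set.Icc_subset_uIcc (Set.Ioo_subset_Icc_self ht)) a (by simp)).const_add _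
  exact hprim.congr hab (fun t ht => (h t ht).symm) fun _ _ => rfl

theorem eq_left_of_ae_eq_zero (hf : HasACDeriv a b f φ) (h : ∀ᵐ t, t ∈ Set.Ioo a b → φ t = 0)
    {t : ℝ} (ht : t ∈ Set.Icc a b) : f t = f a := by
  simpa using (hf.congr_deriv_ae (ψ := fun _ => 0) h).eq_add_integral ht

theorem hasDerivWithinAt (hf : HasACDeriv a b f φ) (hφ : ContinuousOn φ (Set.Icc a b)) {t : ℝ}
    (ht : t ∈ Set.Icc a b) : HasDerivWithinAt f (φ t) (Set.Icc a b) t := by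
  have hint : IntervalIntegrable φ volume a t :=
    (hφ.mono (by rw [Set.uIcc_of_le ht.1]; exact Set.Icc_subset_Icc le_rfl ht.2)).intervalIntegrable
  have : Fact (t ∈ Set.Icc a b) := ⟨ht⟩
  have hprim : HasDerivWithinAt (fun t => ∫ s in a..t, φ s) (φ t) (Set.Icc a b) t :=
    integral_hasDerivWithinAt_right hint
      (hφ.stronglyMeasurableAtFilter_nhdsWithin measurableSet_Icc t) (hφ t ht)
  exact (hprim.const_add (f a)).congr (fun s hs => hf.eq_add_integral hs) (hf.eq_add_integral ht)

theorem of_lipschitzWith {K : NNReal} (hf : LipschitzWith K f) : HasACDeriv a b f (deriv f) := by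
  refine ⟨hf.lipschitzOnWith.absolutelyContinuousOnInterval, ?_⟩
  filter_upwards [hf.ae_differentiableAt_real] with t ht _ using ht.hasDerivAt

theorem of_hasDerivAt_continuous (hab : a ≤ b) (hf : ∀ t, HasDerivAt f (φ t) t)
    (hφ : Continuous φ) : HasACDeriv a b f φ := by
  refine of_eq_add_integral hab (hφ.intervalIntegrable a b) fun t _ => ?_
  rw [intervalIntegral.integral_eq_sub_of_hasDerivAt (fun s _ => hf s) (hφ.intervalIntegrable a t)]
  ring

theorem glue {c : ℝ} (hac : a ≤ c) (hcb : c ≤ b) (hleft : HasACDeriv a c f φ)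
    (hright : HasACDeriv c b f φ) : HasACDeriv a b f φ := by
  have hint₁ := hleft.intervalIntegrable hac
  have hint₂ := hright.intervalIntegrable hcb
  refine of_eq_add_integral (hac.trans hcb) (hint₁.trans hint₂) fun t ht => ?_
  rcases le_total t c with htc | hct
  · exact hleft.eq_add_integral ⟨ht.1, htc⟩
  · have hint : IntervalIntegrable φ volume c t :=
      (hright.mono le_rfl hct ht.2).intervalIntegrable hct
    rw [← integral_add_adjacent_intervals hint₁ hint, ← add_assoc,
      ← hleft.eq_add_integral ⟨hac, le_rfl⟩]
    exact hright.eq_add_integral ⟨hct, ht.2⟩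

theorem comp_mul_left {T k : ℝ} (hk : 0 < k) (hT : 0 ≤ T) (hf : HasACDeriv 0 T f φ) :
    HasACDeriv 0 (T / k) (fun t => f (k * t)) (fun t => k * φ (k * t)) := by
  refine of_eq_add_integral (by positivity) ?_ fun t ht => ?_
  · simpa using ((hf.intervalIntegrable hT).comp_mul_left (c := k)).const_mul k
  · have hkt : k * t ∈ Set.Icc 0 T :=
      ⟨mul_nonneg hk.le ht.1, by linarith [(le_div_iff₀ hk).1 ht.2]⟩
    rw [intervalIntegral.integral_const_mul, intervalIntegral.mul_integral_comp_mul_left]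
    simpa using hf.eq_add_integral hkt

end HasACDeriv

/-! ### Trajectories -/

/-- `v` is a trajectory of the linear equation `v' = F_S(v) + u·G_S(v)` on `[a, b]`, where `v` is
any curve in `ℝ³`, not necessarily on the sphere. Both vector fields being infinitesimal
rotations, such curves are moved by a common family of rotations. -/
def IsTrajectory (α a b : ℝ) (u : ℝ → ℝ) (v : ℝ → Fin 3 → ℝ) : Prop :=
  ∀ i, HasACDeriv a b (fun t => v t i) (fun t => FS α (v t) i + u t * GS α (v t) i)

/-- The component of `x` along `(c sin α, 0, cos α)`, the axis of the rotations generated by the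
constant control `c`. -/
noncomputable def axisComponent (α c : ℝ) (x : Fin 3 → ℝ) : ℝ := c * sin α * x 0 + cos α * x 2

namespace IsTrajectory

variable {α a b : ℝ} {u u' : ℝ → ℝ} {v w : ℝ → Fin 3 → ℝ}

theorem hasACDeriv_zero (h : IsTrajectory α a b u v) :
    HasACDeriv a b (fun t => v t 0) (fun t => -(cos α * v t 1)) := by
  simpa [FS, GS] using h 0

theorem hasACDeriv_one (h : IsTrajectory α a b u v) :
    HasACDeriv a b (fun t => v t 1) (fun t => cos α * v t 0 - u t * sin α * v t 2) := by
  simpa [FS, GS, mul_assoc, sub_eq_add_neg] using h 1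

theorem hasACDeriv_two (h : IsTrajectory α a b u v) :
    HasACDeriv a b (fun t => v t 2) (fun t => u t * sin α * v t 1) := by
  simpa [FS, GS, mul_assoc] using h 2

theorem of_hasACDeriv (h₀ : HasACDeriv a b (fun t => v t 0) (fun t => -(cos α * v t 1)))
    (h₁ : HasACDeriv a b (fun t => v t 1) (fun t => cos α * v t 0 - u t * sin α * v t 2))
    (h₂ : HasACDeriv a b (fun t => v t 2) (fun t => u t * sin α * v t 1)) :
    IsTrajectory α a b u v := by
  rw [IsTrajectory, Fin.forall_fin_succ, Fin.forall_fin_two]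
  refine ⟨?_, ?_, ?_⟩
  · simpa [FS, GS] using h₀
  · simpa [FS, GS, mul_assoc, sub_eq_add_neg] using h₁
  · simpa [FS, GS, mul_assoc] using h₂

theorem mono {a' b' : ℝ} (h : IsTrajectory α a b u v) (ha : a ≤ a') (hab : a' ≤ b')
    (hb : b' ≤ b) : IsTrajectory α a' b' u v :=
  fun i => (h i).mono ha hab hb

theorem congr_control_ae (h : IsTrajectory α a b u v)
    (hu : ∀ᵐ t, t ∈ Set.Ioo a b → u t = u' t) : IsTrajectory α a b u' v := fun i =>
  (h i).congr_deriv_ae (by filter_upwards [hu] with t heq ht using by rw [heq ht])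

theorem congr (hab : a ≤ b) (h : IsTrajectory α a b u v) (hv : Set.EqOn v w (Set.Icc a b))
    (hu : Set.EqOn u u' (Set.Ioo a b)) : IsTrajectory α a b u' w := fun i =>
  (h i).congr hab (fun t ht => by rw [hv ht]) fun t ht => by
    simp only [hv (Set.Ioo_subset_Icc_self ht), hu ht]

theorem glue {c : ℝ} (hac : a ≤ c) (hcb : c ≤ b) (hleft : IsTrajectory α a c u v)
    (hright : IsTrajectory α c b u v) : IsTrajectory α a b u v :=
  fun i => (hleft i).glue hac hcb (hright i)

theorem continuousOn_apply (h : IsTrajectory α a b u v) (i : Fin 3) :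
    ContinuousOn (fun t => v t i) (Set.Icc a b) :=
  (h i).continuousOn

theorem continuousOn (h : IsTrajectory α a b u v) : ContinuousOn v (Set.Icc a b) :=
  continuousOn_pi.2 h.continuousOn_apply

theorem add (hv : IsTrajectory α a b u v) (hw : IsTrajectory α a b u w) (hab : a ≤ b) :
    IsTrajectory α a b u (fun t => v t + w t) := fun i =>
  ((hv i).add (hw i)).congr hab (fun _ _ => rfl) fun t _ => by
    fin_cases i <;> simp [FS, GS] <;> ring

theorem smul (c : ℝ) (h : IsTrajectory α a b u v) (hab : a ≤ b) :
    IsTrajectory α a b u (fun t => c • v t) := fun i =>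
  ((h i).const_mul c).congr hab (fun _ _ => rfl) fun t _ => by
    fin_cases i <;> simp [FS, GS] <;> ring

theorem sub (hv : IsTrajectory α a b u v) (hw : IsTrajectory α a b u w) (hab : a ≤ b) :
    IsTrajectory α a b u (fun t => v t - w t) := by
  simpa [sub_eq_add_neg] using hv.add (hw.smul (-1) hab) hab

theorem dotProduct_eq_left (hv : IsTrajectory α a b u v) (hw : IsTrajectory α a b u w) {t : ℝ}
    (ht : t ∈ Set.Icc a b) : v t ⬝ᵥ w t = v a ⬝ᵥ w a := by
  simp only [dotProduct, Fin.sum_univ_three]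
  refine HasACDeriv.eq_left_of_ae_eq_zero
    (((hv.hasACDeriv_zero.mul hw.hasACDeriv_zero).add
      (hv.hasACDeriv_one.mul hw.hasACDeriv_one)).add (hv.hasACDeriv_two.mul hw.hasACDeriv_two))
    (Filter.Eventually.of_forall fun t _ => ?_) ht
  ring

theorem cross (hv : IsTrajectory α a b u v) (hw : IsTrajectory α a b u w) (hab : a ≤ b) :
    IsTrajectory α a b u (fun t => v t ⨯₃ w t) := by
  have hv₀ := hv.hasACDeriv_zero; have hv₁ := hv.hasACDeriv_one; have hv₂ := hv.hasACDeriv_two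
  have hw₀ := hw.hasACDeriv_zero; have hw₁ := hw.hasACDeriv_one; have hw₂ := hw.hasACDeriv_two
  refine of_hasACDeriv (((hv₁.mul hw₂).sub (hv₂.mul hw₁)).congr hab ?_ ?_)
    (((hv₂.mul hw₀).sub (hv₀.mul hw₂)).congr hab ?_ ?_)
    (((hv₀.mul hw₁).sub (hv₁.mul hw₀)).congr hab ?_ ?_) <;> intro t _ <;>
    simp [cross_apply] <;> ring

theorem eqOn_of_eq (hv : IsTrajectory α a b u v) (hw : IsTrajectory α a b u w) {t₀ : ℝ}
    (ht₀ : t₀ ∈ Set.Icc a b) (heq : v t₀ = w t₀) : Set.EqOn v w (Set.Icc a b) := by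
  intro t ht
  have hdiff := hv.sub hw (ht.1.trans ht.2)
  have hnorm : (v t - w t) ⬝ᵥ (v t - w t) = 0 := by
    rw [hdiff.dotProduct_eq_left hdiff ht, ← hdiff.dotProduct_eq_left hdiff ht₀, heq, sub_self,
      zero_dotProduct]
  exact sub_eq_zero.1 (dotProduct_self_eq_zero.1 hnorm)

theorem axisComponent_eq_left {c : ℝ} (h : IsTrajectory α a b u v)
    (hu : ∀ᵐ t, t ∈ Set.Ioo a b → u t = c) {t : ℝ} (ht : t ∈ Set.Icc a b) :
    axisComponent α c (v t) = axisComponent α c (v a) := by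
  refine HasACDeriv.eq_left_of_ae_eq_zero ((h.hasACDeriv_zero.const_mul (c * sin α)).add
    (h.hasACDeriv_two.const_mul (cos α))) ?_ ht
  filter_upwards [hu] with s hs hsab
  rw [hs hsab]; ring

end IsTrajectory

namespace AdmissiblePairS

variable {α a b : ℝ} {γ : ℝ → Fin 3 → ℝ} {u : ℝ → ℝ}

theorem dotProduct_self (h : AdmissiblePairS α a b γ u) {t : ℝ} (ht : t ∈ Set.Icc a b) :
    γ t ⬝ᵥ γ t = 1 := by
  rw [← h.hsph t ht, dotProduct, Fin.sum_univ_three]; ring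

theorem isTrajectory (h : AdmissiblePairS α a b γ u) : IsTrajectory α a b u γ := by
  intro i
  have hFG : ∀ X : (Fin 3 → ℝ) → Fin 3 → ℝ, Continuous X →
      ContinuousOn (fun t => X (γ t) i) (Set.uIcc a b) := fun X hX => by
    rw [Set.uIcc_of_le h.hab]
    exact (continuous_apply i).comp_continuousOn (hX.comp_continuousOn h.hcont)
  have hF : Continuous (FS α) := by unfold FS; fun_prop
  have hG : Continuous (GS α) := by unfold GS; fun_prop
  refine HasACDeriv.of_eq_add_integral h.hab ((hFG _ hF).intervalIntegrable.add ?_)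
    fun t ht => h.hode t ht i
  have hint := (hFG _ hG).intervalIntegrable (μ := volume)
  refine intervalIntegrable_iff.2
    (Integrable.bdd_mul (c := 1) (intervalIntegrable_iff.1 hint) h.humeas.aestronglyMeasurable ?_)
  refine (ae_restrict_iff' measurableSet_uIoc).2 (Filter.Eventually.of_forall fun t ht => ?_)
  rw [Set.uIoc_of_le h.hab] at ht
  exact h.hubound t (Set.Ioc_subset_Icc_self ht)

theorem of_isTrajectory (hab : a ≤ b) (hu : Measurable u) (hbound : ∀ t ∈ Set.Icc a b, |u t| ≤ 1)
    (h : IsTrajectory α a b u γ) (ha : γ a ⬝ᵥ γ a = 1) : AdmissiblePairS α a b γ u where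
  hab := hab
  humeas := hu
  hubound := hbound
  hsph t ht := by
    rw [← ha, ← h.dotProduct_eq_left h ht, dotProduct, Fin.sum_univ_three]; ring
  hcont := h.continuousOn
  hode t ht i := (h i).eq_add_integral ht

end AdmissiblePairS

/-! ### Volterra operators -/

theorem isUnit_one_sub_of_norm_pow_lt_one {R : Type*} [NormedRing R] [HasSummableGeomSeries R]
    {x : R} {n : ℕ} (h : ‖x ^ n‖ < 1) : IsUnit (1 - x) := by
  have hcomm : Commute (1 - x) (∑ i ∈ Finset.range n, x ^ i) :=
    (mul_neg_geom_sum x n).trans (geom_sum_mul_neg x n).symm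
  refine (hcomm.isUnit_mul_iff.1 ?_).1
  rw [mul_neg_geom_sum]
  exact isUnit_one_sub_of_norm_lt_one h

section Volterra

variable {V : Type*} [NormedAddCommGroup V] [NormedSpace ℝ V] {T : ℝ}

/-- The growth estimate of an integral operator `y ↦ (t ↦ ∫₀ᵗ k(s) y(s) ds)` whose kernel is
bounded by `C`: integration gains a power of `t`. It makes the operator quasinilpotent. -/
def IsVolterra (C : ℝ) (K : C(Set.Icc (0 : ℝ) T, V) →L[ℝ] C(Set.Icc (0 : ℝ) T, V)) : Prop :=
  ∀ (y : C(Set.Icc (0 : ℝ) T, V)) (n : ℕ) (M : ℝ),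
    (∀ s : Set.Icc (0 : ℝ) T, ‖y s‖ ≤ M * (s : ℝ) ^ n) →
    ∀ t : Set.Icc (0 : ℝ) T, ‖K y t‖ ≤ C * M * ((t : ℝ) ^ (n + 1) / (n + 1))

namespace IsVolterra

variable {C C' : ℝ} {K K' : C(Set.Icc (0 : ℝ) T, V) →L[ℝ] C(Set.Icc (0 : ℝ) T, V)}

theorem add (hK : IsVolterra C K) (hK' : IsVolterra C' K') : IsVolterra (C + C') (K + K') := by
  intro y n M hy t
  calc ‖(K + K') y t‖ ≤ ‖K y t‖ + ‖K' y t‖ := norm_add_le _ _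
    _ ≤ C * M * ((t : ℝ) ^ (n + 1) / (n + 1)) + C' * M * ((t : ℝ) ^ (n + 1) / (n + 1)) :=
        add_le_add (hK y n M hy t) (hK' y n M hy t)
    _ = (C + C') * M * ((t : ℝ) ^ (n + 1) / (n + 1)) := by ring

theorem const_smul (c : ℝ) (hK : IsVolterra C K) : IsVolterra (|c| * C) (c • K) := by
  intro y n M hy t
  calc ‖(c • K) y t‖ = |c| * ‖K y t‖ := norm_smul c (K y t)
    _ ≤ |c| * (C * M * ((t : ℝ) ^ (n + 1) / (n + 1))) :=
        mul_le_mul_of_nonneg_left (hK y n M hy t) (abs_nonneg c)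
    _ = |c| * C * M * ((t : ℝ) ^ (n + 1) / (n + 1)) := by ring

theorem norm_pow_apply_le (hK : IsVolterra C K) (n : ℕ) (y : C(Set.Icc (0 : ℝ) T, V))
    (t : Set.Icc (0 : ℝ) T) : ‖(K ^ n) y t‖ ≤ C ^ n * ‖y‖ / n.factorial * (t : ℝ) ^ n := by
  induction n generalizing t with
  | zero => simpa using y.norm_coe_le_norm t
  | succ n ih =>
    rw [pow_succ']
    refine (hK ((K ^ n) y) n _ ih t).trans_eq ?_
    rw [Nat.factorial_succ]
    push_cast
    field_simp
    ring

theorem norm_pow_le (hK : IsVolterra C K) (hC : 0 ≤ C) (hT : 0 ≤ T) (n : ℕ) :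
    ‖K ^ n‖ ≤ (C * T) ^ n / n.factorial := by
  refine ContinuousLinearMap.opNorm_le_bound _ (by positivity) fun y => ?_
  rw [ContinuousMap.norm_le _ (by positivity)]
  intro t
  have ht : (t : ℝ) ^ n ≤ T ^ n := pow_le_pow_left₀ t.2.1 t.2.2 n
  calc ‖(K ^ n) y t‖ ≤ C ^ n * ‖y‖ / n.factorial * (t : ℝ) ^ n := hK.norm_pow_apply_le n y t
    _ ≤ C ^ n * ‖y‖ / n.factorial * T ^ n := by gcongr
    _ = (C * T) ^ n / n.factorial * ‖y‖ := by rw [mul_pow]; ring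

theorem isUnit_one_sub [CompleteSpace V] (hK : IsVolterra C K) (hC : 0 ≤ C) (hT : 0 ≤ T) :
    IsUnit (1 - K) := by
  obtain ⟨n, hn⟩ := ((FloorSemiring.tendsto_pow_div_factorial_atTop (C * T)).eventually
    (gt_mem_nhds zero_lt_one)).exists
  exact isUnit_one_sub_of_norm_pow_lt_one
    (R := C(Set.Icc (0 : ℝ) T, V) →L[ℝ] C(Set.Icc (0 : ℝ) T, V))
    ((hK.norm_pow_le hC hT n).trans_lt hn)

end IsVolterra

end Volterra

theorem ringInverse_one_sub_apply {E : Type*} [NormedAddCommGroup E] [NormedSpace ℝ E]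
    {K : E →L[ℝ] E} (hK : IsUnit (1 - K)) (z : E) :
    Ring.inverse (1 - K) z = z + K (Ring.inverse (1 - K) z) := by
  have h := congrArg (fun A : E →L[ℝ] E => A z) (Ring.mul_inverse_cancel _ hK)
  simp only [mul_apply_eq_comp, sub_apply, one_apply_eq_self] at h
  rwa [sub_eq_iff_eq_add] at h

/-- Bounded Borel functions on the line: the controls, and the directions in which a control may
be varied. -/
def boundedMeasurable : Submodule ℝ (ℝ → ℝ) where
  carrier := {w | Measurable w ∧ ∃ B, ∀ t, |w t| ≤ B}
  add_mem' := fun ⟨hv, B, hB⟩ ⟨hw, C, hC⟩ =>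
    ⟨hv.add hw, B + C, fun t => (abs_add_le _ _).trans (add_le_add (hB t) (hC t))⟩
  zero_mem' := ⟨measurable_const, 0, fun t => by simp⟩
  smul_mem' := fun c w ⟨hw, B, hB⟩ => ⟨hw.const_smul c, |c| * B, fun t => by
    rw [Pi.smul_apply, smul_eq_mul, abs_mul]
    exact mul_le_mul_of_nonneg_left (hB t) (abs_nonneg c)⟩

theorem intervalIntegrable_weight_smul {V : Type*} [NormedAddCommGroup V] [NormedSpace ℝ V]
    (w : boundedMeasurable) {φ : ℝ → V} (hφ : Continuous φ) (a b : ℝ) :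
    IntervalIntegrable (fun s => (w : ℝ → ℝ) s • φ s) volume a b := by
  obtain ⟨w, hw, B, hB⟩ := w
  have hint := intervalIntegrable_iff.1 (hφ.intervalIntegrable (μ := volume) a b)
  exact intervalIntegrable_iff.2
    (hint.bdd_smul B hw.aestronglyMeasurable (Filter.Eventually.of_forall hB))

section Volterra

variable {V : Type*} [NormedAddCommGroup V] [NormedSpace ℝ V] {T : ℝ} (hT : 0 ≤ T)
  (L : V →L[ℝ] V)

theorem norm_smul_IccExtend_le {c B : ℝ} (hc : |c| ≤ B) (y : C(Set.Icc (0 : ℝ) T, V)) {s M : ℝ}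
    (hM : ‖Set.IccExtend hT y s‖ ≤ M) :
    ‖c • L (Set.IccExtend hT y s)‖ ≤ B * ‖L‖ * M := by
  rw [norm_smul, mul_assoc]
  exact mul_le_mul hc ((L.le_opNorm _).trans (by gcongr)) (norm_nonneg _)
    ((abs_nonneg c).trans hc)

/-- The integral operator `y ↦ (t ↦ ∫₀ᵗ w(s) L(y(s)) ds)` on continuous curves, as a linear
function of the weight `w`. -/
noncomputable def volterra :
    boundedMeasurable →ₗ[ℝ] (C(Set.Icc (0 : ℝ) T, V) →L[ℝ] C(Set.Icc (0 : ℝ) T, V)) where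
  toFun w := LinearMap.mkContinuousOfExistsBound
    { toFun := fun y => ⟨fun t => ∫ s in (0 : ℝ)..t, (w : ℝ → ℝ) s • L (Set.IccExtend hT y s),
        (intervalIntegral.continuous_primitive
          (intervalIntegrable_weight_smul w (by fun_prop)) 0).comp continuous_subtype_val⟩
      map_add' := fun x y => by
        ext1 t
        simp only [ContinuousMap.coe_mk, ContinuousMap.add_apply]
        rw [← intervalIntegral.integral_add (intervalIntegrable_weight_smul w (by fun_prop) _ _)
          (intervalIntegrable_weight_smul w (by fun_prop) _ _)]
        simp [Set.IccExtend_apply]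
      map_smul' := fun c x => by
        ext1 t
        simp only [ContinuousMap.coe_mk, ContinuousMap.smul_apply, RingHom.id_apply]
        rw [← intervalIntegral.integral_smul]
        simp [Set.IccExtend_apply, smul_comm c] } <| by
      obtain ⟨w, -, B, hB⟩ := w
      have hB₀ : 0 ≤ B := (abs_nonneg _).trans (hB 0)
      refine ⟨B * ‖L‖ * T, fun y => ?_⟩
      rw [ContinuousMap.norm_le _ (by positivity)]
      intro t
      refine (intervalIntegral.norm_integral_le_of_norm_le_const fun s _ =>
        norm_smul_IccExtend_le hT L (hB s) y (y.norm_coe_le_norm _)).trans ?_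
      rw [sub_zero, abs_of_nonneg t.2.1, mul_right_comm]
      gcongr
      exact t.2.2
  map_add' v w := by
    ext y t : 2
    simp only [LinearMap.mkContinuousOfExistsBound_apply, LinearMap.coe_mk, AddHom.coe_mk,
      ContinuousMap.coe_mk, add_apply, ContinuousMap.add_apply]
    rw [← intervalIntegral.integral_add (intervalIntegrable_weight_smul v (by fun_prop) _ _)
      (intervalIntegrable_weight_smul w (by fun_prop) _ _)]
    simp [add_smul]
  map_smul' c w := by
    ext y t : 2
    simp only [LinearMap.mkContinuousOfExistsBound_apply, LinearMap.coe_mk, AddHom.coe_mk,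
      ContinuousMap.coe_mk, smul_apply, ContinuousMap.smul_apply, RingHom.id_apply]
    rw [← intervalIntegral.integral_smul]
    simp [mul_smul]

theorem volterra_apply (w : boundedMeasurable) (y : C(Set.Icc (0 : ℝ) T, V))
    (t : Set.Icc (0 : ℝ) T) : volterra hT L w y t
      = ∫ s in (0 : ℝ)..t, (w : ℝ → ℝ) s • L (Set.IccExtend hT y s) := rfl

theorem isVolterra_volterra {w : boundedMeasurable} {B : ℝ} (hB : ∀ t, |(w : ℝ → ℝ) t| ≤ B) :
    IsVolterra (B * ‖L‖) (volterra hT L w) := by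
  intro y n M hy t
  have hint : B * ‖L‖ * M * ((t : ℝ) ^ (n + 1) / (n + 1))
      = ∫ s in (0 : ℝ)..t, B * ‖L‖ * (M * s ^ n) := by
    rw [intervalIntegral.integral_const_mul, intervalIntegral.integral_const_mul, integral_pow]
    simp; ring
  rw [volterra_apply, hint]
  refine intervalIntegral.norm_integral_le_of_norm_le t.2.1
    (Filter.Eventually.of_forall fun s hs => norm_smul_IccExtend_le hT L (hB s) y ?_)
    (Continuous.intervalIntegrable (by fun_prop) _ _)
  have hs' : s ∈ Set.Icc 0 T := ⟨hs.1.le, hs.2.trans t.2.2⟩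
  rw [Set.IccExtend_of_mem _ _ hs']
  exact hy ⟨s, hs'⟩

end Volterra

/-! ### First-order perturbation of a resolvent -/

section Perturbation

open Filter Topology

variable {E W : Type*} [NormedAddCommGroup E] [NormedSpace ℝ E] [CompleteSpace E]
  [NormedAddCommGroup W] [NormedSpace ℝ W] [FiniteDimensional ℝ W]

theorem exists_level_curve_of_hasStrictFDerivAt {f : E → W} {f' : E →L[ℝ] W} {x c : E}
    (hf : HasStrictFDerivAt f f' x) (hf' : f'.range = ⊤) (hc : f' c = 0) :
    ∃ p : ℝ → E, HasDerivAt p c 0 ∧ p 0 = x ∧ ∀ᶠ η in 𝓝 0, f (p η) = f x := by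
  have := FiniteDimensional.complete ℝ W
  let k : f'.ker := ⟨c, hc⟩
  let p : ℝ → E := fun η => hf.implicitFunction f f' hf' (f x) (η • k)
  have hline : HasDerivAt (fun η : ℝ => η • k) k 0 := by
    simpa using (hasDerivAt_id (0 : ℝ)).smul_const k
  have hcurve : HasFDerivAt (hf.implicitFunction f f' hf' (f x)) f'.ker.subtypeL
      ((0 : ℝ) • k) := by
    rw [zero_smul]; exact (hf.to_implicitFunction hf').hasFDerivAt
  refine ⟨p, HasFDerivAt.comp_hasDerivAt (f := fun η : ℝ => η • k) 0 hcurve hline, ?_, ?_⟩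
  · simp [p, hf.implicitFunction_apply_image hf']
  · have hpair : Tendsto (fun η : ℝ => (f x, η • k)) (𝓝 0) (𝓝 (f x, 0)) := by
      rw [nhds_prod_eq]
      refine tendsto_const_nhds.prodMk ?_
      simpa using hline.continuousAt.tendsto
    exact hpair.eventually (hf.map_implicitFunction_eq hf')

theorem exists_positive_spanning_of_zero_mem_interior {C : Set W} (hC : (0 : W) ∈ interior C) :
    ∃ (n : ℕ) (b : Fin n ⊕ Fin n → W), (∀ i, b i ∈ C) ∧
      ∀ a, ∃ c : Fin n ⊕ Fin n → ℝ, (∀ i, 0 < c i) ∧ ∑ i, c i • b i = a := by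
  let e := Module.finBasis ℝ W
  have hmem : ∀ v : W, ∀ᶠ ρ : ℝ in 𝓝[>] 0, ρ • v ∈ C := fun v => by
    have hcont : Tendsto (fun ρ : ℝ => ρ • v) (𝓝 0) (𝓝 0) := by
      simpa using (tendsto_id (α := ℝ) (x := 𝓝 0)).smul_const v
    exact (hcont.eventually (mem_interior_iff_mem_nhds.1 hC)).filter_mono nhdsWithin_le_nhds
  obtain ⟨ρ, hρC, hρ : 0 < ρ⟩ := ((eventually_all.2 fun i : Fin _ =>
    (hmem (e i)).and (hmem (-e i))).and self_mem_nhdsWithin).exists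
  refine ⟨_, Sum.elim (fun i => ρ • e i) (fun i => ρ • -e i), ?_, fun a => ?_⟩
  · rintro (i | i)
    exacts [(hρC i).1, (hρC i).2]
  · refine ⟨Sum.elim (fun i => 1 + |e.repr a i| / ρ + e.repr a i / ρ)
      (fun i => 1 + |e.repr a i| / ρ), ?_, ?_⟩
    · rintro (i | i)
      · have habs : 0 ≤ |e.repr a i| / ρ + e.repr a i / ρ := by
          rw [← add_div]
          exact div_nonneg (by linarith [neg_abs_le (e.repr a i)]) hρ.le
        simp only [Sum.elim_inl]; linarith
      · simp only [Sum.elim_inr]; positivity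
    · rw [Fintype.sum_sum_type, ← Finset.sum_add_distrib]
      conv_rhs => rw [← e.sum_repr a]
      refine Finset.sum_congr rfl fun i _ => ?_
      simp only [Sum.elim_inl, Sum.elim_inr, smul_neg, smul_smul, ← sub_eq_add_neg, ← sub_smul]
      congr 1
      field_simp
      ring

theorem exists_ne_zero_forall_le_zero_of_zero_notMem_interior {C : Set W} (hC : Convex ℝ C)
    (h0 : (0 : W) ∈ C) (hi : (0 : W) ∉ interior C) :
    ∃ l : W →L[ℝ] ℝ, l ≠ 0 ∧ ∀ x ∈ C, l x ≤ 0 := by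
  by_cases hne : (interior C).Nonempty
  · obtain ⟨l, hl⟩ := geometric_hahn_banach_open_point hC.interior isOpen_interior hi
    rw [map_zero] at hl
    refine ⟨l, ?_, fun x hx => ?_⟩
    · rintro rfl
      obtain ⟨x, hx⟩ := hne
      simpa using hl x hx
    · have hcl : C ⊆ closure (interior C) := by
        rw [hC.closure_interior_eq_closure_of_nonempty_interior hne]; exact subset_closure
      exact closure_minimal (fun x hx => (hl x hx).le)
        (isClosed_le l.continuous continuous_const) (hcl hx)
  · have hspan : Submodule.span ℝ C < ⊤ := by
      rw [lt_top_iff_ne_top]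
      intro h
      refine hne (hC.interior_nonempty_iff_affineSpan_eq_top.2 ?_)
      rw [AffineSubspace.affineSpan_eq_top_iff_vectorSpan_eq_top_of_nonempty ℝ _ _ ⟨0, h0⟩,
        vectorSpan_eq_span_vsub_set_right ℝ h0]
      simpa using h
    obtain ⟨l, hl0, hl⟩ := Submodule.exists_le_ker_of_lt_top _ hspan
    refine ⟨LinearMap.toContinuousLinearMap l, by simpa using hl0, fun x hx => le_of_eq ?_⟩
    exact hl (Submodule.subset_span hx)

theorem hasStrictFDerivAt_ringInverse_one_sub {R P : Type*} [NormedRing R] [HasSummableGeomSeries R]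
    [NormedAlgebra ℝ R] [NormedAddCommGroup P] [NormedSpace ℝ P] {A : P → R} {A' : P →L[ℝ] R}
    {x : P} (hA : HasStrictFDerivAt A A' x) (hx : IsUnit (1 - A x)) :
    HasStrictFDerivAt (fun p => Ring.inverse (1 - A p))
      (ContinuousLinearMap.mulLeftRight ℝ R (Ring.inverse (1 - A x)) (Ring.inverse (1 - A x)) ∘L A')
      x := by
  obtain ⟨U, hU⟩ := hx
  have hinv := hasStrictFDerivAt_ringInverse (𝕜 := ℝ) U
  rw [hU] at hinv
  refine (hinv.comp x (hA.const_sub 1)).congr_fderiv ?_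
  ext p
  simp [← hU]

theorem eventually_pos_of_hasDerivAt {p : ℝ → ℝ} {c : ℝ} (hp : HasDerivAt p c 0) (h0 : p 0 = 0)
    (hc : 0 < c) : ∀ᶠ η in 𝓝[>] 0, 0 < p η := by
  have hsign := eventually_nhdsWithin_sign_eq_of_deriv_pos (hp.deriv.symm ▸ hc) h0
  filter_upwards [nhdsWithin_le_nhds hsign, self_mem_nhdsWithin] with η hη hη₀
  rwa [sub_zero, sign_pos (show 0 < η from hη₀), sign_eq_one_iff] at hη

section Resolvent

variable {ι : Type*} [Fintype ι] {K : E →L[ℝ] E} {D : ι → E →L[ℝ] E}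

theorem exists_hasStrictFDerivAt_resolvent (hK : IsUnit (1 - K)) (D : ι → E →L[ℝ] E) (e : E) :
    ∃ f' : ℝ × (ι → ℝ) →L[ℝ] E,
      HasStrictFDerivAt
        (fun p => (Ring.inverse (1 - (1 + p.1) • (K + ∑ i, p.2 i • D i)) : E →L[ℝ] E) e) f' 0 ∧
      ∀ p, f' p = Ring.inverse (1 - K)
        ((p.1 • K + ∑ i, p.2 i • D i) (Ring.inverse (1 - K) e)) := by
  let L : ℝ × (ι → ℝ) →L[ℝ] E →L[ℝ] E :=
    ∑ i, (ContinuousLinearMap.proj i ∘L ContinuousLinearMap.snd ℝ ℝ (ι → ℝ)).smulRight (D i)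
  have hL : HasStrictFDerivAt (fun p : ℝ × (ι → ℝ) => K + ∑ i, p.2 i • D i) L 0 := by
    simpa [L, Function.comp_def] using L.hasStrictFDerivAt.const_add K
  have hA := (hasStrictFDerivAt_fst.const_add (1 : ℝ)).smul hL
  refine ⟨_, ((ContinuousLinearMap.apply ℝ E e).hasStrictFDerivAt.comp 0
    (hasStrictFDerivAt_ringInverse_one_sub hA (by simpa using hK))), fun p => ?_⟩
  simp [L, add_comm]

/-- Speeding up time by a factor `1 + p.1 < 1` can be compensated to first order by a positive
combination of the perturbations `D i`, and then exactly by the implicit function theorem. -/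
theorem exists_resolvent_perturbation {Λ : E →L[ℝ] W} {e : E} (hK : IsUnit (1 - K))
    (hspan : ∀ a, ∃ c : ι → ℝ, (∀ i, 0 < c i) ∧
      ∑ i, c i • Λ (Ring.inverse (1 - K) (D i (Ring.inverse (1 - K) e))) = a)
    {U : Set (ℝ × (ι → ℝ))} (hU : U ∈ 𝓝 0) :
    ∃ p ∈ U, p.1 < 0 ∧ (∀ i, 0 < p.2 i) ∧
      Λ (Ring.inverse (1 - (1 + p.1) • (K + ∑ i, p.2 i • D i)) e) = Λ (Ring.inverse (1 - K) e) := by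
  obtain ⟨f', hf, hf'⟩ := exists_hasStrictFDerivAt_resolvent hK D e
  have hΛf' : ∀ σ ε, (Λ ∘L f') (σ, ε) = σ • Λ (Ring.inverse (1 - K) (K (Ring.inverse (1 - K) e)))
      + ∑ i, ε i • Λ (Ring.inverse (1 - K) (D i (Ring.inverse (1 - K) e))) := fun σ ε => by
    simp [hf', map_sum]
  have hrange : (Λ ∘L f').range = ⊤ := by
    refine LinearMap.range_eq_top.2 fun a => ?_
    obtain ⟨c, -, hc⟩ := hspan a
    exact ⟨(0, c), by simpa [hc] using hΛf' 0 c⟩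
  obtain ⟨c, hc_pos, hc⟩ := hspan (Λ (Ring.inverse (1 - K) (K (Ring.inverse (1 - K) e))))
  obtain ⟨p, hp, hp0, hlevel⟩ := exists_level_curve_of_hasStrictFDerivAt
    (Λ.hasStrictFDerivAt.comp 0 hf) hrange (c := (-1, c)) (by simp [hΛf', hc])
  have hfst : ∀ᶠ η in 𝓝[>] 0, 0 < -(p η).1 := eventually_pos_of_hasDerivAt
    ((hasFDerivAt_fst.comp_hasDerivAt 0 hp).neg) (by simp [hp0]) (by simp)
  have hsnd : ∀ᶠ η in 𝓝[>] 0, ∀ i, 0 < (p η).2 i := Filter.eventually_all.2 fun i =>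
    eventually_pos_of_hasDerivAt (hasDerivAt_pi.1 (hasFDerivAt_snd.comp_hasDerivAt 0 hp) i)
      (by simp [hp0]) (hc_pos i)
  have hmem : ∀ᶠ η in 𝓝 0, p η ∈ U := hp.continuousAt.eventually (hp0.symm ▸ hU)
  obtain ⟨η, hη₁, hη₂, hηU, hη⟩ := (hfst.and (hsnd.and
    ((hmem.and hlevel).filter_mono nhdsWithin_le_nhds))).exists
  exact ⟨p η, hηU, neg_pos.1 hη₁, hη₂, hη.trans (by simp)⟩

theorem exists_resolvent_perturbation_mem_nhds {Λ : E →L[ℝ] W} {e : E} (hK : IsUnit (1 - K))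
    (hspan : ∀ a, ∃ c : ι → ℝ, (∀ i, 0 < c i) ∧
      ∑ i, c i • Λ (Ring.inverse (1 - K) (D i (Ring.inverse (1 - K) e))) = a)
    {V : Set E} (hV : V ∈ 𝓝 (Ring.inverse (1 - K) e)) :
    ∃ c : ℝ, 0 < c ∧ c < 1 ∧ ∃ ε : ι → ℝ, (∀ i, 0 < ε i) ∧ ∑ i, ε i ≤ 1 ∧
      Ring.inverse (1 - c • (K + ∑ i, ε i • D i)) e ∈ V ∧
      Λ (Ring.inverse (1 - c • (K + ∑ i, ε i • D i)) e) = Λ (Ring.inverse (1 - K) e) := by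
  obtain ⟨_, hf, -⟩ := exists_hasStrictFDerivAt_resolvent hK D e
  have hmem := hf.hasFDerivAt.continuousAt.eventually_mem (by simpa using hV)
  have hclock : ∀ᶠ p : ℝ × (ι → ℝ) in 𝓝 0, -1 < p.1 :=
    continuous_fst.continuousAt.eventually (lt_mem_nhds (by simp))
  have hsum : ∀ᶠ p : ℝ × (ι → ℝ) in 𝓝 0, ∑ i, p.2 i < 1 :=
    (Continuous.continuousAt (by fun_prop)).eventually (gt_mem_nhds (by simp))
  obtain ⟨p, ⟨⟨hp₁, hp₂⟩, hpV⟩, hσ, hε, hend⟩ :=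
    exists_resolvent_perturbation hK hspan ((hclock.and hsum).and hmem)
  exact ⟨1 + p.1, by linarith, by linarith, p.2, hε, hp₂.le, hpV, hend⟩

end Resolvent

end Perturbation

/-! ### The maximum principle -/

section StateOperator

/-- The drift field `FS α` as a linear map. -/
noncomputable def driftCLM (α : ℝ) : (Fin 3 → ℝ) →L[ℝ] (Fin 3 → ℝ) :=
  LinearMap.toContinuousLinearMap
    { toFun := FS α
      map_add' := fun x y => by ext i; fin_cases i <;> simp [FS] <;> ring
      map_smul' := fun c x => by ext i; fin_cases i <;> simp [FS] <;> ring }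

/-- The controlled field `GS α` as a linear map. -/
noncomputable def controlCLM (α : ℝ) : (Fin 3 → ℝ) →L[ℝ] (Fin 3 → ℝ) :=
  LinearMap.toContinuousLinearMap
    { toFun := GS α
      map_add' := fun x y => by ext i; fin_cases i <;> simp [GS] <;> ring
      map_smul' := fun c x => by ext i; fin_cases i <;> simp [GS] <;> ring }

variable {α T : ℝ} (hT : 0 ≤ T) (w : boundedMeasurable)

/-- The integral operator `K` for which `y = v + K y` is the control system with control `w` and
initial value `v`. -/
noncomputable def stateOperator (α : ℝ) (w : boundedMeasurable) :
    C(Set.Icc (0 : ℝ) T, Fin 3 → ℝ) →L[ℝ] C(Set.Icc (0 : ℝ) T, Fin 3 → ℝ) :=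
  volterra hT (driftCLM α) ⟨1, measurable_const, 1, fun _ => by simp⟩ +
    volterra hT (controlCLM α) w

theorem isUnit_one_sub_smul_stateOperator (c : ℝ) : IsUnit (1 - c • stateOperator hT α w) := by
  obtain ⟨B, hB⟩ := w.2.2
  have hB₀ : 0 ≤ B := (abs_nonneg _).trans (hB 0)
  exact (((isVolterra_volterra hT (driftCLM α) (B := 1) fun _ => by simp).add
    (isVolterra_volterra hT (controlCLM α) hB)).const_smul c).isUnit_one_sub (by positivity) hT

theorem hasACDeriv_IccExtend_of_eq_add_integral {y : C(Set.Icc (0 : ℝ) T, Fin 3 → ℝ)}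
    {v : Fin 3 → ℝ} {Φ : ℝ → Fin 3 → ℝ} (hΦ : IntervalIntegrable Φ volume 0 T)
    (h : ∀ t, y t = v + ∫ s in (0 : ℝ)..t, Φ s) :
    Set.IccExtend hT y 0 = v ∧
      ∀ i, HasACDeriv 0 T (fun t => Set.IccExtend hT y t i) (fun t => Φ t i) := by
  have h0 : Set.IccExtend hT y 0 = v := by
    rw [Set.IccExtend_of_mem hT y ⟨le_rfl, hT⟩, h]; simp
  refine ⟨h0, fun i => HasACDeriv.of_eq_add_integral hT ?_ fun t ht => ?_⟩
  · rw [intervalIntegrable_iff] at hΦ ⊢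
    exact (ContinuousLinearMap.proj (R := ℝ) (φ := fun _ : Fin 3 => ℝ) i).integrable_comp hΦ
  · have hint : IntervalIntegrable Φ volume 0 t := hΦ.mono_set <| by
      rw [Set.uIcc_of_le ht.1, Set.uIcc_of_le hT]
      exact Set.Icc_subset_Icc le_rfl ht.2
    have hcomm := (ContinuousLinearMap.proj (R := ℝ) (φ := fun _ : Fin 3 => ℝ)
      i).intervalIntegral_comp_comm hint
    simp only [ContinuousLinearMap.proj_apply] at hcomm
    rw [h0, Set.IccExtend_of_mem hT y ht, h, hcomm]
    rfl

theorem hasACDeriv_of_eq_add_stateOperator {y z : C(Set.Icc (0 : ℝ) T, Fin 3 → ℝ)}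
    {v : Fin 3 → ℝ} {c : ℝ} {δ : boundedMeasurable}
    (h : y = ContinuousMap.const _ v + c • stateOperator hT α w y +
      volterra hT (controlCLM α) δ z) :
    Set.IccExtend hT y 0 = v ∧ ∀ i, HasACDeriv 0 T (fun t => Set.IccExtend hT y t i) fun t =>
      c * (FS α (Set.IccExtend hT y t) i + (w : ℝ → ℝ) t * GS α (Set.IccExtend hT y t) i) +
        (δ : ℝ → ℝ) t * GS α (Set.IccExtend hT z t) i := by
  have hF : ∀ a b, IntervalIntegrable (fun t => driftCLM α (Set.IccExtend hT y t)) volume a b :=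
    Continuous.intervalIntegrable (by fun_prop)
  have hG := intervalIntegrable_weight_smul w
    (φ := fun t => controlCLM α (Set.IccExtend hT y t)) (by fun_prop)
  have hδ := intervalIntegrable_weight_smul δ
    (φ := fun t => controlCLM α (Set.IccExtend hT z t)) (by fun_prop)
  have hFG : ∀ a b, IntervalIntegrable (fun t => c • (driftCLM α (Set.IccExtend hT y t) +
      (w : ℝ → ℝ) t • controlCLM α (Set.IccExtend hT y t))) volume a b :=
    fun a b => ((hF a b).add (hG a b)).smul c
  refine hasACDeriv_IccExtend_of_eq_add_integral hT
    (Φ := fun t => c • (driftCLM α (Set.IccExtend hT y t) +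
      (w : ℝ → ℝ) t • controlCLM α (Set.IccExtend hT y t)) +
        (δ : ℝ → ℝ) t • controlCLM α (Set.IccExtend hT z t))
    ((hFG 0 T).add (hδ 0 T)) fun t => ?_
  conv_lhs => rw [h]
  rw [intervalIntegral.integral_add (hFG 0 t) (hδ 0 t), intervalIntegral.integral_smul,
    intervalIntegral.integral_add (hF 0 t) (hG 0 t), ← add_assoc]
  simp only [stateOperator, add_apply, ContinuousMap.add_apply,
    ContinuousMap.smul_apply, ContinuousMap.const_apply, volterra_apply, Pi.one_apply, one_smul]

theorem hasACDeriv_scaled_solution (c : ℝ) (v : Fin 3 → ℝ) {y : C(Set.Icc (0 : ℝ) T, Fin 3 → ℝ)}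
    (hy : y = Ring.inverse (1 - c • stateOperator hT α w) (ContinuousMap.const _ v)) :
    Set.IccExtend hT y 0 = v ∧ ∀ i, HasACDeriv 0 T (fun t => Set.IccExtend hT y t i) fun t =>
      c * (FS α (Set.IccExtend hT y t) i + (w : ℝ → ℝ) t * GS α (Set.IccExtend hT y t) i) := by
  have hfix := ringInverse_one_sub_apply (isUnit_one_sub_smul_stateOperator (α := α) hT w c)
    (ContinuousMap.const _ v)
  rw [← hy] at hfix
  simpa using hasACDeriv_of_eq_add_stateOperator hT w (δ := 0) (z := 0) (by simpa using hfix)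

/-- The trajectory of the control `w` with initial value `v`, as a continuous curve on `[0, T]`. -/
noncomputable def stateSolution (α : ℝ) (w : boundedMeasurable) (v : Fin 3 → ℝ) :
    C(Set.Icc (0 : ℝ) T, Fin 3 → ℝ) :=
  Ring.inverse (1 - stateOperator hT α w) (ContinuousMap.const _ v)

theorem stateSolution_zero (v : Fin 3 → ℝ) :
    Set.IccExtend hT (stateSolution hT α w v) 0 = v :=
  (hasACDeriv_scaled_solution hT w 1 v (by rw [one_smul]; rfl)).1

theorem isTrajectory_stateSolution (v : Fin 3 → ℝ) :
    IsTrajectory α 0 T w (Set.IccExtend hT (stateSolution hT α w v)) := fun i => by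
  simpa using (hasACDeriv_scaled_solution hT w 1 v (by rw [one_smul]; rfl)).2 i

/-- The first variation of a trajectory under `w + δ` satisfies an inhomogeneous linear equation,
and pairing with a solution of the homogeneous one integrates it. -/
theorem variation_dotProduct_eq_integral (δ : boundedMeasurable)
    (z : C(Set.Icc (0 : ℝ) T, Fin 3 → ℝ)) {p : ℝ → Fin 3 → ℝ} (hp : IsTrajectory α 0 T w p) :
    Ring.inverse (1 - stateOperator hT α w) (volterra hT (controlCLM α) δ z) ⟨T, hT, le_rfl⟩ ⬝ᵥ p T
      = ∫ t in (0 : ℝ)..T, (δ : ℝ → ℝ) t * (GS α (Set.IccExtend hT z t) ⬝ᵥ p t) := by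
  set d := Ring.inverse (1 - stateOperator hT α w) (volterra hT (controlCLM α) δ z) with hd
  have hfix := ringInverse_one_sub_apply
    (by simpa using isUnit_one_sub_smul_stateOperator hT w (α := α) 1)
    (volterra hT (controlCLM α) δ z)
  rw [← hd] at hfix
  obtain ⟨h0, hderiv⟩ := hasACDeriv_of_eq_add_stateOperator hT w (α := α) (y := d) (z := z)
    (v := 0) (c := 1) (δ := δ) (by rw [one_smul]; exact hfix.trans (by ext1 t; simp [add_comm]))
  have hprod : HasACDeriv 0 T (fun t => Set.IccExtend hT d t ⬝ᵥ p t)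
      (fun t => (δ : ℝ → ℝ) t * (GS α (Set.IccExtend hT z t) ⬝ᵥ p t)) :=
    (((hderiv 0).mul (hp 0)).add ((hderiv 1).mul (hp 1))).add ((hderiv 2).mul (hp 2)) |>.congr hT
      (fun t _ => by simp [dotProduct, Fin.sum_univ_three])
      (fun t _ => by simp [dotProduct, Fin.sum_univ_three, FS, GS]; ring)
  have hint := hprod.eq_add_integral (Set.right_mem_Icc.2 hT)
  rwa [h0, zero_dotProduct, zero_add, Set.IccExtend_of_mem hT d ⟨hT, le_rfl⟩] at hint

end StateOperator

theorem eq_cross_of_orthogonal {p q y : Fin 3 → ℝ} (hy : y ⬝ᵥ y = 1)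
    (hpq : (p ⨯₃ q) ⬝ᵥ (p ⨯₃ q) = 1) (hp : p ⬝ᵥ y = 0) (hq : q ⬝ᵥ y = 0)
    (hpos : 0 < (p ⨯₃ q) ⬝ᵥ y) : y = p ⨯₃ q := by
  have hcross : (p ⨯₃ q) ⨯₃ y = 0 := by
    rw [cross_cross_eq_smul_sub_smul, hp, hq]; simp
  have hsq : ((p ⨯₃ q) ⬝ᵥ y) * ((p ⨯₃ q) ⬝ᵥ y) = 1 := by
    have h := cross_dot_cross (p ⨯₃ q) y (p ⨯₃ q) y
    rw [hcross, zero_dotProduct, hpq, hy, dotProduct_comm y] at h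
    linarith
  have hone : (p ⨯₃ q) ⬝ᵥ y = 1 := by nlinarith
  have hdiff : (y - p ⨯₃ q) ⬝ᵥ (y - p ⨯₃ q) = 0 := by
    simp only [sub_dotProduct, dotProduct_sub, dotProduct_comm y (p ⨯₃ q), hone, hy, hpq]
    norm_num
  exact sub_eq_zero.1 (dotProduct_self_eq_zero.1 hdiff)

theorem IsTrajectory.of_scaled {α T c : ℝ} {u : ℝ → ℝ} {v : ℝ → Fin 3 → ℝ} (hT : 0 ≤ T)
    (hc : 0 < c)
    (h : ∀ i, HasACDeriv 0 T (fun t => v t i) fun t => c * (FS α (v t) i + u t * GS α (v t) i)) :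
    IsTrajectory α 0 (c * T) (fun t => u (c⁻¹ * t)) (fun t => v (c⁻¹ * t)) := by
  intro i
  have hscaled := (h i).comp_mul_left (inv_pos.2 hc) hT
  rw [div_inv_eq_mul, mul_comm] at hscaled
  exact hscaled.congr_deriv_ae (.of_forall fun t _ => inv_mul_cancel_left₀ hc.ne' _)

section FirstVariation

open Filter Topology

variable {α T : ℝ} (hT : 0 ≤ T) (w : boundedMeasurable)

/-- The pairings of the endpoint of a curve with the first two vectors of the orthonormal frame
transported by the control `w`; they are coordinates transverse to the third one, the trajectory
from the north pole. -/
noncomputable def transverseEndpoint (α : ℝ) (w : boundedMeasurable) :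
    C(Set.Icc (0 : ℝ) T, Fin 3 → ℝ) →L[ℝ] (Fin 2 → ℝ) :=
  ContinuousLinearMap.pi fun j =>
    (∑ i, stateSolution hT α w (Pi.single j.castSucc 1) ⟨T, hT, le_rfl⟩ i •
      ContinuousLinearMap.proj i) ∘L ContinuousMap.evalCLM ℝ ⟨T, hT, le_rfl⟩

theorem transverseEndpoint_apply (y : C(Set.Icc (0 : ℝ) T, Fin 3 → ℝ)) (j : Fin 2) :
    transverseEndpoint hT α w y j = stateSolution hT α w (Pi.single j.castSucc 1) ⟨T, hT, le_rfl⟩ ⬝ᵥ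
      y ⟨T, hT, le_rfl⟩ := by
  simp [transverseEndpoint, dotProduct]

/-- The derivative, at the control `w`, of the transverse coordinates of the endpoint of the
trajectory from the north pole. -/
noncomputable def firstVariation (α : ℝ) (w : boundedMeasurable) :
    boundedMeasurable →ₗ[ℝ] (Fin 2 → ℝ) where
  toFun δ := transverseEndpoint hT α w (Ring.inverse (1 - stateOperator hT α w)
    (volterra hT (controlCLM α) δ (stateSolution hT α w ![0, 0, 1])))
  map_add' := by simp
  map_smul' := by simp

theorem stateSolution_northPole_eq_cross :
    stateSolution hT α w ![0, 0, 1] ⟨T, hT, le_rfl⟩ =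
      stateSolution hT α w (Pi.single 0 1) ⟨T, hT, le_rfl⟩ ⨯₃
        stateSolution hT α w (Pi.single 1 1) ⟨T, hT, le_rfl⟩ := by
  have htraj := isTrajectory_stateSolution (α := α) hT w
  have h := (htraj ![0, 0, 1]).eqOn_of_eq ((htraj (Pi.single 0 1)).cross (htraj (Pi.single 1 1)) hT)
    (Set.left_mem_Icc.2 hT) (by
      simp only [stateSolution_zero]
      ext i
      fin_cases i <;> simp [cross_apply]) (Set.right_mem_Icc.2 hT)
  simpa using h

theorem abs_add_sum_smul_le {ι : Type*} [Fintype ι] {δ : ι → boundedMeasurable}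
    (hδ : ∀ i t, |((w + δ i : boundedMeasurable) : ℝ → ℝ) t| ≤ 1)
    (hw : ∀ t, |(w : ℝ → ℝ) t| ≤ 1) {ε : ι → ℝ} (hε : ∀ i, 0 < ε i) (hsum : ∑ i, ε i ≤ 1) (t : ℝ) :
    |((w + ∑ i, ε i • δ i : boundedMeasurable) : ℝ → ℝ) t| ≤ 1 := by
  have hcombo : ((w + ∑ i, ε i • δ i : boundedMeasurable) : ℝ → ℝ) t
      = (1 - ∑ i, ε i) * (w : ℝ → ℝ) t +
        ∑ i, ε i * ((w + δ i : boundedMeasurable) : ℝ → ℝ) t := by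
    simp [mul_add, Finset.sum_add_distrib, sub_mul, Finset.sum_mul, ← add_assoc]
  rw [hcombo]
  calc |(1 - ∑ i, ε i) * (w : ℝ → ℝ) t + ∑ i, ε i * ((w + δ i : boundedMeasurable) : ℝ → ℝ) t|
      ≤ |(1 - ∑ i, ε i) * (w : ℝ → ℝ) t|
        + ∑ i, |ε i * ((w + δ i : boundedMeasurable) : ℝ → ℝ) t| :=
        (abs_add_le _ _).trans (by gcongr; exact Finset.abs_sum_le_sum_abs _ _)
    _ ≤ (1 - ∑ i, ε i) * 1 + ∑ i, ε i * 1 := by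
        simp only [abs_mul, abs_of_pos (hε _), abs_of_nonneg (sub_nonneg.2 hsum)]
        exact add_le_add (mul_le_mul_of_nonneg_left (hw t) (sub_nonneg.2 hsum))
          (Finset.sum_le_sum fun i _ => mul_le_mul_of_nonneg_left (hδ i t) (hε i).le)
    _ = 1 := by rw [← Finset.sum_mul]; ring

theorem transverseEndpoint_northPole :
    transverseEndpoint hT α w (stateSolution hT α w ![0, 0, 1]) = 0 := by
  ext j
  rw [transverseEndpoint_apply, stateSolution_northPole_eq_cross]
  fin_cases j
  exacts [dot_self_cross _ _, dot_cross_self _ _]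

theorem isTrajectory_scaled_solution {c : ℝ} (hc : 0 < c) (v : Fin 3 → ℝ)
    {y : C(Set.Icc (0 : ℝ) T, Fin 3 → ℝ)}
    (hy : y = Ring.inverse (1 - c • stateOperator hT α w) (ContinuousMap.const _ v)) :
    IsTrajectory α 0 (c * T) (fun t => (w : ℝ → ℝ) (c⁻¹ * t))
      (fun t => Set.IccExtend hT y (c⁻¹ * t)) :=
  IsTrajectory.of_scaled (u := w) hT hc (hasACDeriv_scaled_solution hT w c v hy).2

theorem scaled_solution_right {c : ℝ} (hc : 0 < c) (y : C(Set.Icc (0 : ℝ) T, Fin 3 → ℝ)) :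
    Set.IccExtend hT y (c⁻¹ * (c * T)) = y ⟨T, hT, le_rfl⟩ := by
  rw [inv_mul_cancel_left₀ hc.ne', Set.IccExtend_of_mem hT y ⟨hT, le_rfl⟩]

theorem dotProduct_self_scaled_solution_right {c : ℝ} (hc : 0 < c) (v : Fin 3 → ℝ)
    {y : C(Set.Icc (0 : ℝ) T, Fin 3 → ℝ)}
    (hy : y = Ring.inverse (1 - c • stateOperator hT α w) (ContinuousMap.const _ v)) :
    y ⟨T, hT, le_rfl⟩ ⬝ᵥ y ⟨T, hT, le_rfl⟩ = v ⬝ᵥ v := by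
  have htraj := isTrajectory_scaled_solution hT w hc v hy
  have h := htraj.dotProduct_eq_left htraj (Set.right_mem_Icc.2 (by positivity))
  rwa [scaled_solution_right hT hc, mul_zero, (hasACDeriv_scaled_solution hT w c v hy).1] at h

theorem dotProduct_self_stateSolution_northPole :
    stateSolution hT α w ![0, 0, 1] ⟨T, hT, le_rfl⟩ ⬝ᵥ
      stateSolution hT α w ![0, 0, 1] ⟨T, hT, le_rfl⟩ = 1 := by
  simpa using dotProduct_self_scaled_solution_right (α := α) hT w one_pos ![0, 0, 1]
    (by rw [one_smul]; rfl)

theorem eq_stateSolution_of_transverseEndpoint_eq_zero {w' : boundedMeasurable} {c : ℝ}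
    (hc : 0 < c) {y : C(Set.Icc (0 : ℝ) T, Fin 3 → ℝ)}
    (hy : y = Ring.inverse (1 - c • stateOperator hT α w') (ContinuousMap.const _ ![0, 0, 1]))
    (hend : transverseEndpoint hT α w y = 0)
    (hside : 0 < stateSolution hT α w ![0, 0, 1] ⟨T, hT, le_rfl⟩ ⬝ᵥ y ⟨T, hT, le_rfl⟩) :
    y ⟨T, hT, le_rfl⟩ = stateSolution hT α w ![0, 0, 1] ⟨T, hT, le_rfl⟩ := by
  have hunit := dotProduct_self_stateSolution_northPole (α := α) hT w
  have hyy := dotProduct_self_scaled_solution_right hT w' hc _ hy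
  have horth := fun j => (transverseEndpoint_apply hT w y j).symm.trans (congrFun hend j)
  rw [stateSolution_northPole_eq_cross] at hunit hside ⊢
  exact eq_cross_of_orthogonal (by simpa using hyy) hunit (horth 0) (horth 1) hside

/-- To first order the variations of the control can move the endpoint in every transverse
direction, hence compensate the displacement caused by accelerating the clock. -/
theorem exists_scaled_solution_of_zero_mem_interior (hw : ∀ t, |(w : ℝ → ℝ) t| ≤ 1)
    (h0 : (0 : Fin 2 → ℝ) ∈ interior (firstVariation hT α w ''
      {δ | ∀ t, |((w + δ : boundedMeasurable) : ℝ → ℝ) t| ≤ 1})) :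
    ∃ c : ℝ, 0 < c ∧ c < 1 ∧ ∃ w' : boundedMeasurable, (∀ t, |(w' : ℝ → ℝ) t| ≤ 1) ∧
      (Ring.inverse (1 - c • stateOperator hT α w') :
        C(Set.Icc (0 : ℝ) T, Fin 3 → ℝ) →L[ℝ] C(Set.Icc (0 : ℝ) T, Fin 3 → ℝ))
          (ContinuousMap.const _ ![0, 0, 1]) ⟨T, hT, le_rfl⟩ =
        stateSolution hT α w ![0, 0, 1] ⟨T, hT, le_rfl⟩ := by
  set g := stateSolution hT α w ![0, 0, 1]
  obtain ⟨n, b, hbC, hspan⟩ := exists_positive_spanning_of_zero_mem_interior h0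
  choose δ hδ hδb using hbC
  obtain rfl : (fun i => firstVariation hT α w (δ i)) = b := funext hδb
  have hK : IsUnit (1 - stateOperator hT α w) := by
    simpa using isUnit_one_sub_smul_stateOperator (α := α) hT w 1
  have hside : {z : C(Set.Icc (0 : ℝ) T, Fin 3 → ℝ) |
      0 < g ⟨T, hT, le_rfl⟩ ⬝ᵥ z ⟨T, hT, le_rfl⟩} ∈ 𝓝 g :=
    (isOpen_lt continuous_const (by fun_prop)).mem_nhds
      (one_pos.trans_eq (dotProduct_self_stateSolution_northPole hT w).symm)
  obtain ⟨c, hc, hc', ε, hε, hsum, hpos, hend⟩ := exists_resolvent_perturbation_mem_nhds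
    (Λ := transverseEndpoint hT α w) (D := fun i => volterra hT (controlCLM α) (δ i)) hK hspan hside
  have hstate : stateOperator hT α w + ∑ i, ε i • volterra hT (controlCLM α) (δ i) =
      stateOperator hT α (w + ∑ i, ε i • δ i) := by
    simp only [stateOperator, map_add, map_sum, map_smul, add_assoc]
  rw [hstate] at hpos hend
  exact ⟨c, hc, hc', w + ∑ i, ε i • δ i, abs_add_sum_smul_le w hδ hw hε hsum,
    eq_stateSolution_of_transverseEndpoint_eq_zero hT w hc rfl
      (hend.trans (transverseEndpoint_northPole hT w)) hpos⟩

end FirstVariation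

section MaximumPrinciple

variable {α T : ℝ}

theorem ae_mul_eq_abs_of_forall_integral_le_zero (hT : 0 ≤ T) {w : boundedMeasurable}
    (hw : ∀ t, |(w : ℝ → ℝ) t| ≤ 1) {ψ : ℝ → ℝ} (hψ : Continuous ψ)
    (h : ∀ δ : boundedMeasurable, (∀ t, |((w + δ : boundedMeasurable) : ℝ → ℝ) t| ≤ 1) →
      ∫ t in (0 : ℝ)..T, (δ : ℝ → ℝ) t * ψ t ≤ 0) :
    ∀ᵐ t, t ∈ Set.Ioo 0 T → (w : ℝ → ℝ) t * ψ t = |ψ t| := by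
  let s : ℝ → ℝ := fun t => if 0 ≤ ψ t then 1 else -1
  have hs_meas : Measurable s :=
    .ite (measurableSet_le measurable_const hψ.measurable) measurable_const measurable_const
  have hs_abs : ∀ t, |s t| ≤ 1 := fun t => by by_cases ht : 0 ≤ ψ t <;> simp [s, ht]
  have hs_mul : ∀ t, s t * ψ t = |ψ t| := fun t => by
    by_cases ht : 0 ≤ ψ t
    · simp [s, ht, abs_of_nonneg ht]
    · simp [s, ht, abs_of_neg (not_le.1 ht)]
  let δ : boundedMeasurable := ⟨s, hs_meas, 1, hs_abs⟩ - w
  have hδ_mul : ∀ t, (δ : ℝ → ℝ) t * ψ t = |ψ t| - (w : ℝ → ℝ) t * ψ t := fun t => by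
    rw [← hs_mul t, ← sub_mul]; rfl
  have hδ_nonneg : ∀ t, 0 ≤ (δ : ℝ → ℝ) t * ψ t := fun t => by
    rw [hδ_mul, sub_nonneg]
    calc (w : ℝ → ℝ) t * ψ t ≤ |(w : ℝ → ℝ) t| * |ψ t| := (le_abs_self _).trans (abs_mul _ _).le
      _ ≤ |ψ t| := mul_le_of_le_one_left (abs_nonneg _) (hw t)
  have hzero : ∫ t in (0 : ℝ)..T, (δ : ℝ → ℝ) t * ψ t = 0 :=
    (h δ fun t => by simpa [δ] using hs_abs t).antisymm
      (intervalIntegral.integral_nonneg hT fun t _ => hδ_nonneg t)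
  have hae := (intervalIntegral.integral_eq_zero_iff_of_le_of_nonneg_ae hT
    (.of_forall hδ_nonneg) (intervalIntegrable_weight_smul δ hψ 0 T)).1 hzero
  rw [Filter.EventuallyEq, ae_restrict_iff' measurableSet_Ioc] at hae
  filter_upwards [hae] with t ht hmem
  have := (hδ_mul t).symm.trans (ht ⟨hmem.1, hmem.2.le⟩)
  simp only [Pi.zero_apply] at this
  linarith

theorem GS_dotProduct_eq_cross (α : ℝ) (x p : Fin 3 → ℝ) :
    GS α x ⬝ᵥ p = sin α * (x ⨯₃ p) 0 := by
  simp [GS, dotProduct, Fin.sum_univ_three, cross_apply]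
  ring

theorem apply_eq_of_fin_two (l : (Fin 2 → ℝ) →L[ℝ] ℝ) (x : Fin 2 → ℝ) :
    l x = x 0 * l (Pi.single 0 1) + x 1 * l (Pi.single 1 1) := by
  have hx : x = x 0 • Pi.single 0 1 + x 1 • Pi.single 1 1 := by
    ext i
    fin_cases i <;> simp
  conv_lhs => rw [hx, map_add, map_smul, map_smul, smul_eq_mul, smul_eq_mul]

/-- The adjoint trajectory with terminal value representing the functional `l` in the transverse
coordinates. -/
noncomputable def adjointTrajectory (hT : 0 ≤ T) (α : ℝ) (w : boundedMeasurable)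
    (l : (Fin 2 → ℝ) →L[ℝ] ℝ) (t : ℝ) : Fin 3 → ℝ :=
  l (Pi.single 0 1) • Set.IccExtend hT (stateSolution hT α w (Pi.single 0 1)) t +
    l (Pi.single 1 1) • Set.IccExtend hT (stateSolution hT α w (Pi.single 1 1)) t

variable (hT : 0 ≤ T) (w : boundedMeasurable) (l : (Fin 2 → ℝ) →L[ℝ] ℝ)

theorem isTrajectory_adjointTrajectory : IsTrajectory α 0 T w (adjointTrajectory hT α w l) :=
  ((isTrajectory_stateSolution hT w _).smul _ hT).add
    ((isTrajectory_stateSolution hT w _).smul _ hT) hT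

theorem adjointTrajectory_zero :
    adjointTrajectory hT α w l 0 = ![l (Pi.single 0 1), l (Pi.single 1 1), 0] := by
  simp only [adjointTrajectory, stateSolution_zero]
  ext i
  fin_cases i <;> simp

theorem apply_firstVariation (δ : boundedMeasurable) :
    l (firstVariation hT α w δ) = ∫ t in (0 : ℝ)..T, (δ : ℝ → ℝ) t *
      (GS α (Set.IccExtend hT (stateSolution hT α w ![0, 0, 1]) t) ⬝ᵥ
        adjointTrajectory hT α w l t) := by
  rw [← variation_dotProduct_eq_integral hT w δ _ (isTrajectory_adjointTrajectory hT w l),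
    dotProduct_comm, adjointTrajectory, Set.IccExtend_of_mem hT _ ⟨hT, le_rfl⟩,
    Set.IccExtend_of_mem hT _ ⟨hT, le_rfl⟩, add_dotProduct, smul_dotProduct, smul_dotProduct]
  rw [apply_eq_of_fin_two l]
  simp only [firstVariation, LinearMap.coe_mk, AddHom.coe_mk, transverseEndpoint_apply,
    smul_eq_mul, mul_comm]
  rfl

theorem dotProduct_self_adjointTrajectory_zero_pos (hl : l ≠ 0) :
    0 < adjointTrajectory hT α w l 0 ⬝ᵥ adjointTrajectory hT α w l 0 := by
  refine (Finset.sum_nonneg fun i _ => mul_self_nonneg _).lt_of_ne' fun h => hl ?_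
  have hzero := dotProduct_self_eq_zero.1 h
  rw [adjointTrajectory_zero] at hzero
  ext x
  have h₀ : l (Pi.single 0 1) = 0 := congrFun hzero 0
  have h₁ : l (Pi.single 1 1) = 0 := congrFun hzero 1
  rw [apply_eq_of_fin_two, h₀, h₁]
  simp

theorem convex_setOf_abs_add_le : Convex ℝ
    {δ : boundedMeasurable | ∀ t, |((w + δ : boundedMeasurable) : ℝ → ℝ) t| ≤ 1} := by
  intro δ hδ δ' hδ' a b ha hb hab t
  have hcombo : ((w + (a • δ + b • δ') : boundedMeasurable) : ℝ → ℝ) t =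
      a • ((w + δ : boundedMeasurable) : ℝ → ℝ) t +
        b • ((w + δ' : boundedMeasurable) : ℝ → ℝ) t := by
    simp only [Submodule.coe_add, Submodule.coe_smul, Pi.add_apply, Pi.smul_apply, smul_eq_mul]
    linear_combination -(w : ℝ → ℝ) t * hab
  rw [hcombo]
  exact abs_le.2 (convex_Icc _ _ (abs_le.1 (hδ t)) (abs_le.1 (hδ' t)) ha hb hab)

theorem exists_momentum_of_zero_notMem_interior (hs : 0 < sin α) (hw : ∀ t, |(w : ℝ → ℝ) t| ≤ 1)
    (h0 : (0 : Fin 2 → ℝ) ∉ interior (firstVariation hT α w ''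
      {δ | ∀ t, |((w + δ : boundedMeasurable) : ℝ → ℝ) t| ≤ 1})) :
    ∃ M : ℝ → Fin 3 → ℝ, IsTrajectory α 0 T w M ∧ M 0 ⬝ᵥ M 0 = 1 ∧
      (∀ t, M t ⬝ᵥ Set.IccExtend hT (stateSolution hT α w ![0, 0, 1]) t = 0) ∧ M 0 2 = 0 ∧
      ∀ᵐ t, t ∈ Set.Ioo 0 T → (w : ℝ → ℝ) t * M t 0 = |M t 0| := by
  set g := Set.IccExtend hT (stateSolution hT α w ![0, 0, 1])
  obtain ⟨l, hl_ne, hl⟩ := exists_ne_zero_forall_le_zero_of_zero_notMem_interior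
    ((convex_setOf_abs_add_le w).linear_image (firstVariation hT α w))
    ⟨0, by simpa using hw, map_zero _⟩ h0
  set p := adjointTrajectory hT α w l with hp
  have hcont : Continuous fun t => GS α (g t) ⬝ᵥ p t := by
    have : Continuous p := by unfold p adjointTrajectory; fun_prop
    exact ((controlCLM α).continuous.comp (by fun_prop : Continuous g)).dotProduct this
  have hmax := ae_mul_eq_abs_of_forall_integral_le_zero hT hw hcont fun δ hδ => by
    rw [← apply_firstVariation]
    exact hl _ ⟨δ, hδ, rfl⟩
  have hr : 0 < √(p 0 ⬝ᵥ p 0) := Real.sqrt_pos.2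
    (dotProduct_self_adjointTrajectory_zero_pos hT w l hl_ne)
  have hg0 : g 0 = ![0, 0, 1] := stateSolution_zero hT w _
  refine ⟨fun t => (√(p 0 ⬝ᵥ p 0))⁻¹ • (g t ⨯₃ p t),
    ((isTrajectory_stateSolution hT w _).cross (isTrajectory_adjointTrajectory hT w l) hT).smul _
      hT,
    ?_, fun t => ?_, ?_, ?_⟩
  · have hgp : g 0 ⬝ᵥ p 0 = 0 := by
      rw [hg0, hp, adjointTrajectory_zero]; simp
    have hgg : g 0 ⬝ᵥ g 0 = 1 := by
      rw [hg0]; simp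
    simp only [smul_dotProduct, dotProduct_smul, cross_dot_cross, hgp, hgg, smul_eq_mul]
    field_simp
    rw [Real.sq_sqrt (Real.sqrt_pos.1 hr).le]
    ring
  · rw [dotProduct_comm, dotProduct_smul, dot_self_cross, smul_zero]
  · simp [hg0, cross_apply]
  · filter_upwards [hmax] with t ht hmem
    have hmul := ht hmem
    simp only [GS_dotProduct_eq_cross, abs_mul, abs_of_pos hs, Pi.smul_apply, smul_eq_mul,
      abs_of_pos (inv_pos.2 hr), mul_left_comm _ (sin α), mul_left_comm _ (√(p 0 ⬝ᵥ p 0))⁻¹]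
      at hmul ⊢
    rw [mul_left_cancel₀ hs.ne' hmul]

namespace AdmissiblePairS

variable {γ : ℝ → Fin 3 → ℝ} {u : ℝ → ℝ}

theorem abs_indicator_le (h : AdmissiblePairS α 0 T γ u) (t : ℝ) :
    |(Set.Icc 0 T).indicator u t| ≤ 1 := by
  by_cases ht : t ∈ Set.Icc 0 T
  · rw [Set.indicator_of_mem ht]
    exact h.hubound t ht
  · simp [Set.indicator_of_notMem ht]

/-- The control of an admissible pair on `[0, T]`, extended by zero. -/
noncomputable def extendedControl (h : AdmissiblePairS α 0 T γ u) : boundedMeasurable :=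
  ⟨(Set.Icc 0 T).indicator u, h.humeas.indicator measurableSet_Icc, 1, h.abs_indicator_le⟩

theorem extendedControl_apply (h : AdmissiblePairS α 0 T γ u) {t : ℝ} (ht : t ∈ Set.Ioo 0 T) :
    (h.extendedControl : ℝ → ℝ) t = u t :=
  Set.indicator_of_mem (Set.Ioo_subset_Icc_self ht) u

theorem eqOn_stateSolution (h : AdmissiblePairS α 0 T γ u) {v : Fin 3 → ℝ} (hγ : γ 0 = v) :
    Set.EqOn γ (Set.IccExtend h.hab (stateSolution h.hab α h.extendedControl v))
      (Set.Icc 0 T) :=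
  (h.isTrajectory.congr_control_ae (.of_forall fun _ ht => (h.extendedControl_apply ht).symm)
    ).eqOn_of_eq (isTrajectory_stateSolution _ _ _) (Set.left_mem_Icc.2 h.hab)
      (hγ.trans (stateSolution_zero _ _ _).symm)

end AdmissiblePairS

namespace TimeOptimalS

variable {γ : ℝ → Fin 3 → ℝ} {u : ℝ → ℝ}

theorem admissible (h : TimeOptimalS α 0 T γ u) : AdmissiblePairS α 0 T γ u := h.1

theorem zero_notMem_interior_firstVariation (hT : 0 < T) (h : TimeOptimalS α 0 T γ u)
    (hγ : γ 0 = ![0, 0, 1]) :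
    (0 : Fin 2 → ℝ) ∉ interior (firstVariation h.admissible.hab α h.admissible.extendedControl ''
      {δ | ∀ t, |((h.admissible.extendedControl + δ : boundedMeasurable) : ℝ → ℝ) t| ≤ 1}) := by
  intro h0
  obtain ⟨c, hc, hc1, w, hw, hend⟩ := exists_scaled_solution_of_zero_mem_interior h.admissible.hab
    h.admissible.extendedControl h.admissible.abs_indicator_le h0
  set y : C(Set.Icc (0 : ℝ) T, Fin 3 → ℝ) :=
    Ring.inverse (1 - c • stateOperator h.admissible.hab α w)
      (ContinuousMap.const _ ![0, 0, 1]) with hy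
  have hy0 : Set.IccExtend h.admissible.hab y (c⁻¹ * 0) = ![0, 0, 1] := by
    rw [mul_zero]
    exact (hasACDeriv_scaled_solution h.admissible.hab w c _ hy).1
  have hyT : Set.IccExtend h.admissible.hab y (c⁻¹ * (c * T)) = γ T := by
    rw [scaled_solution_right h.admissible.hab hc, hend,
      h.admissible.eqOn_stateSolution hγ ⟨hT.le, le_rfl⟩,
      Set.IccExtend_of_mem h.admissible.hab _ ⟨hT.le, le_rfl⟩]
  have hadm : AdmissiblePairS α 0 (c * T) (fun t => Set.IccExtend h.admissible.hab y (c⁻¹ * t))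
      (fun t => (w : ℝ → ℝ) (c⁻¹ * t)) :=
    .of_isTrajectory (by positivity) (w.2.1.comp (measurable_const_mul _)) (fun _ _ => hw _)
      (isTrajectory_scaled_solution h.admissible.hab w hc _ hy) (by simp only [hy0]; simp)
  have hle := h.2 _ _ _ _ hadm (hy0.trans hγ.symm) hyT
  nlinarith

/-- Pontryagin's maximum principle: `M` is the vector `γ ⨯₃ p` of the adjoint `p`. -/
theorem exists_momentum (hs : 0 < sin α) (hT : 0 < T) (h : TimeOptimalS α 0 T γ u)
    (hγ : γ 0 = ![0, 0, 1]) :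
    ∃ M : ℝ → Fin 3 → ℝ, IsTrajectory α 0 T u M ∧ (∀ t ∈ Set.Icc 0 T, M t ⬝ᵥ M t = 1) ∧
      (∀ t ∈ Set.Icc 0 T, M t ⬝ᵥ γ t = 0) ∧ M 0 2 = 0 ∧
      ∀ᵐ t, t ∈ Set.Ioo 0 T → u t * M t 0 = |M t 0| := by
  obtain ⟨M, hM, hM_unit, hM_orth, hM₂, hmax⟩ := exists_momentum_of_zero_notMem_interior
    h.admissible.hab h.admissible.extendedControl hs h.admissible.abs_indicator_le
    (h.zero_notMem_interior_firstVariation hT hγ)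
  refine ⟨M, hM.congr_control_ae (.of_forall fun _ ht => h.admissible.extendedControl_apply ht),
    fun t ht => (hM.dotProduct_eq_left hM ht).trans hM_unit, fun t ht => ?_, hM₂, ?_⟩
  · rw [h.admissible.eqOn_stateSolution hγ ht]
    exact hM_orth t
  · filter_upwards [hmax] with t ht hmem
    rw [← h.admissible.extendedControl_apply hmem]
    exact ht hmem

end TimeOptimalS

end MaximumPrinciple

/-! ### Extremals and their switching times -/

theorem eventually_inf_iff_of_hasBasis {X ι : Type*} {l l' : Filter X} {q : ι → Prop}
    {S : ι → Set X} (hl : l.HasBasis q S) {p : X → Prop} :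
    (∀ᶠ y in l ⊓ l', p y) ↔ ∃ i, q i ∧ ∀ᶠ y in l', y ∈ S i → p y := by
  rw [Filter.eventually_inf]
  constructor
  · rintro ⟨s, hs, s', hs', hp⟩
    obtain ⟨i, hi, his⟩ := hl.mem_iff.1 hs
    exact ⟨i, hi, Filter.mem_of_superset hs' fun y hy hyi => hp y ⟨his hyi, hy⟩⟩
  · rintro ⟨i, hi, hp⟩
    exact ⟨S i, hl.mem_of_mem hi, _, hp, fun y hy => hy.2 hy.1⟩

instance neBot_nhdsLT_inf_ae (t : ℝ) : (𝓝[<] t ⊓ ae volume).NeBot := by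
  rw [Filter.neBot_iff, Ne, ← Filter.eventually_false_iff_eq_bot,
    eventually_inf_iff_of_hasBasis (nhdsLT_basis t)]
  rintro ⟨p, hp, h⟩
  have h0 : volume (Set.Ioo p t) = 0 := measure_eq_zero_iff_ae_notMem.2 h
  simp only [Real.volume_Ioo, ENNReal.ofReal_eq_zero] at h0
  linarith

instance neBot_nhdsGT_inf_ae (t : ℝ) : (𝓝[>] t ⊓ ae volume).NeBot := by
  rw [Filter.neBot_iff, Ne, ← Filter.eventually_false_iff_eq_bot,
    eventually_inf_iff_of_hasBasis (nhdsGT_basis t)]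
  rintro ⟨p, hp, h⟩
  have h0 : volume (Set.Ioo t p) = 0 := measure_eq_zero_iff_ae_notMem.2 h
  simp only [Real.volume_Ioo, ENNReal.ofReal_eq_zero] at h0
  linarith

theorem inf_ae_eq_sdiff_inf_ae (s : Set ℝ) (t : ℝ) :
    𝓝[s] t ⊓ ae volume = 𝓝[s \ {t}] t ⊓ ae volume := by
  have hae : ae (volume : Measure ℝ) ≤ Filter.principal {t}ᶜ :=
    Filter.le_principal_iff.2 (compl_mem_ae_iff.2 (measure_singleton t))
  rw [Set.sdiff_eq, nhdsWithin_inter', inf_assoc, inf_eq_right.2 hae]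

theorem isSwitching_iff {a b t : ℝ} {u : ℝ → ℝ} :
    IsSwitching a b u t ↔ t ∈ Set.Icc a b ∧
      ∀ c, c = 1 ∨ c = -1 → ¬ ∀ᶠ s in 𝓝[Set.Icc a b] t ⊓ ae volume, u s = c := by
  refine and_congr_right fun _ => ?_
  simp only [eventually_inf_iff_of_hasBasis Metric.nhdsWithin_basis_ball, Real.ball_eq_Ioo,
    ae_restrict_iff' (measurableSet_Ioo.inter measurableSet_Icc), not_exists, not_and]
  exact ⟨fun h c hc ε hε => h ε hε c hc, fun h ε hε c hc => h c hc ε hε⟩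

theorem isDiscrete_of_eventually_notMem {X : Type*} [TopologicalSpace X] {S : Set X}
    (h : ∀ x ∈ S, ∀ᶠ z in 𝓝[≠] x, z ∉ S) : IsDiscrete S := by
  refine isDiscrete_iff_nhdsNE.2 fun x hx => ?_
  rw [← Filter.empty_mem_iff_bot, Filter.mem_inf_principal]
  filter_upwards [h x hx] with z hz hzS using absurd hzS hz

theorem eventually_mul_pos_of_hasDerivWithinAt {f : ℝ → ℝ} {f' x : ℝ} {s : Set ℝ}
    (hf : HasDerivWithinAt f f' s x) (hf' : f' ≠ 0) (hx : f x = 0) :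
    ∀ᶠ y in 𝓝[s \ {x}] x, 0 < f' * (f y * (y - x)) := by
  have hslope := (hasDerivWithinAt_iff_tendsto_slope.1 hf).const_mul f'
  filter_upwards [hslope.eventually (lt_mem_nhds (mul_self_pos.2 hf')), self_mem_nhdsWithin]
    with y hy hys
  have hne : y - x ≠ 0 := sub_ne_zero.2 hys.2
  have heq : f' * (f y * (y - x)) = f' * slope f x y * (y - x) ^ 2 := by
    rw [slope_def_field, hx, sub_zero]
    field_simp
  rw [heq]
  positivity

namespace HasACDeriv

variable {a b : ℝ} {f φ : ℝ → ℝ}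

/- The points where `f = 0` and `f' ≠ 0` are isolated, hence countably many. -/
theorem ae_deriv_eq_zero_of_eq_zero (hf : HasACDeriv a b f φ) :
    ∀ᵐ t, t ∈ Set.Ioo a b → f t = 0 → φ t = 0 := by
  set S : Set ℝ := {t | f t = 0 ∧ ∃ d ≠ 0, HasDerivAt f d t}
  have hS : S.Countable := by
    refine (HereditarilyLindelofSpace.isLindelof S).countable_of_isDiscrete
      (isDiscrete_of_eventually_notMem ?_)
    rintro t ⟨-, d, hd, hfd⟩
    filter_upwards [hfd.eventually_ne hd] with z hz hzS using hz hzS.1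
  filter_upwards [hf.2, hS.ae_notMem volume] with t hft htS ht h0
  by_contra hne
  exact htS ⟨h0, φ t, hne, hft ht⟩

theorem abs (hf : HasACDeriv a b f φ) :
    HasACDeriv a b (fun t => |f t|) (fun t => SignType.sign (f t) * φ t) := by
  refine ⟨absolutelyContinuousOnInterval_lipschitz_comp lipschitzWith_one_norm hf.1, ?_⟩
  filter_upwards [hf.2, hf.ae_deriv_eq_zero_of_eq_zero] with t hft h0 ht
  rcases eq_or_ne (f t) 0 with hzero | hne
  · have hf0 : HasDerivAt f 0 t := h0 ht hzero ▸ hft ht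
    rw [hasDerivAt_iff_isLittleO] at hf0 ⊢
    simpa [hzero] using hf0
  · exact (hasDerivAt_abs hne).comp t (hft ht)

end HasACDeriv

/-- A normalised Pontryagin extremal on `[0, T]` starting at the north pole: `M` is the momentum,
written as a vector of `ℝ³` orthogonal to `γ`, and `M · 0` is the switching function. -/
structure IsExtremal (α T : ℝ) (γ : ℝ → Fin 3 → ℝ) (u : ℝ → ℝ) (M : ℝ → Fin 3 → ℝ) : Prop where
  mem_Ioo : α ∈ Set.Ioo 0 (π / 4)
  pos : 0 < T
  trajectory : IsTrajectory α 0 T u γ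
  momentum : IsTrajectory α 0 T u M
  apply_zero : γ 0 = ![0, 0, 1]
  momentum_dotProduct_self : ∀ t ∈ Set.Icc 0 T, M t ⬝ᵥ M t = 1
  momentum_dotProduct : ∀ t ∈ Set.Icc 0 T, M t ⬝ᵥ γ t = 0
  momentum_zero_two : M 0 2 = 0
  maximality : ∀ᵐ t, t ∈ Set.Ioo 0 T → u t * M t 0 = |M t 0|

theorem TimeOptimalS.exists_isExtremal {α T : ℝ} {γ : ℝ → Fin 3 → ℝ} {u : ℝ → ℝ}
    (hα : α ∈ Set.Ioo 0 (π / 4)) (hT : 0 < T) (h : TimeOptimalS α 0 T γ u)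
    (h0 : γ 0 = ![0, 0, 1]) : ∃ M, IsExtremal α T γ u M := by
  have hs : 0 < sin α := sin_pos_of_pos_of_lt_pi hα.1 (by linarith [hα.2, pi_pos])
  obtain ⟨M, hM, hMM, hMγ, hM0, hmax⟩ := h.exists_momentum hs hT h0
  exact ⟨M, hα, hT, h.1.isTrajectory, hM, h0, hMM, hMγ, hM0, hmax⟩

namespace IsExtremal

variable {α T : ℝ} {γ M : ℝ → Fin 3 → ℝ} {u : ℝ → ℝ} {t : ℝ}

theorem sin_pos (h : IsExtremal α T γ u M) : 0 < sin α :=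
  sin_pos_of_pos_of_lt_pi h.mem_Ioo.1 (by linarith [h.mem_Ioo.2, pi_pos])

theorem sin_lt_cos (h : IsExtremal α T γ u M) : sin α < cos α := by
  rw [← sin_pi_div_two_sub]
  exact sin_lt_sin_of_lt_of_le_pi_div_two (by linarith [h.mem_Ioo.1, pi_pos])
    (by linarith [h.mem_Ioo.1]) (by linarith [h.mem_Ioo.2])

theorem cos_pos (h : IsExtremal α T γ u M) : 0 < cos α := h.sin_pos.trans h.sin_lt_cos

theorem dotProduct_self (h : IsExtremal α T γ u M) (ht : t ∈ Set.Icc 0 T) :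
    γ t ⬝ᵥ γ t = 1 := by
  rw [h.trajectory.dotProduct_eq_left h.trajectory ht, h.apply_zero]
  simp [dotProduct, Fin.sum_univ_three]

theorem hasDerivWithinAt (h : IsExtremal α T γ u M) (ht : t ∈ Set.Icc 0 T) :
    HasDerivWithinAt (fun t => M t 0) (-(cos α * M t 1)) (Set.Icc 0 T) t :=
  h.momentum.hasACDeriv_zero.hasDerivWithinAt
    (continuousOn_const.mul (h.momentum.continuousOn_apply 1)).neg ht

/- The maximised Hamiltonian is constant. -/
theorem hamiltonian_eq (h : IsExtremal α T γ u M) (ht : t ∈ Set.Icc 0 T) :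
    sin α * |M t 0| + cos α * M t 2 = sin α * |M 0 0| := by
  have hM := h.momentum.hasACDeriv_zero
  have hH := (hM.abs.const_mul (sin α)).add (h.momentum.hasACDeriv_two.const_mul (cos α))
  have hconst := hH.eq_left_of_ae_eq_zero ?_ ht
  · simpa [h.momentum_zero_two] using hconst
  filter_upwards [h.maximality, hM.ae_deriv_eq_zero_of_eq_zero] with t hmax hzero ht
  have hcontrol : SignType.sign (M t 0) * (cos α * M t 1) = u t * (cos α * M t 1) := by
    rcases eq_or_ne (M t 0) 0 with h0 | h0
    · rw [neg_eq_zero.1 (hzero ht h0), mul_zero, mul_zero]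
    · rw [mul_right_cancel₀ h0 ((hmax ht).trans (sign_mul_self _).symm)]
  linear_combination -sin α * hcontrol

/-- The common value `(sin α / cos α) |M₀(0)|` of the third component of the momentum at the zeros
of the switching function. -/
noncomputable def level (_ : IsExtremal α T γ u M) : ℝ := sin α * |M 0 0| / cos α

theorem cos_mul_level (h : IsExtremal α T γ u M) : cos α * h.level = sin α * |M 0 0| :=
  mul_div_cancel₀ _ h.cos_pos.ne'

theorem level_nonneg (h : IsExtremal α T γ u M) : 0 ≤ h.level :=
  div_nonneg (mul_nonneg h.sin_pos.le (abs_nonneg _)) h.cos_pos.le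

theorem cos_mul_level_le (h : IsExtremal α T γ u M) : cos α * h.level ≤ sin α := by
  have hM := h.momentum_dotProduct_self 0 ⟨le_rfl, h.pos.le⟩
  simp only [dotProduct, Fin.sum_univ_three] at hM
  have hle : |M 0 0| ≤ 1 := abs_le_one_iff_mul_self_le_one.2 (by nlinarith)
  rw [h.cos_mul_level]
  exact mul_le_of_le_one_right h.sin_pos.le hle

theorem level_lt_one (h : IsExtremal α T γ u M) : h.level < 1 :=
  lt_of_mul_lt_mul_left (by linarith [h.cos_mul_level_le, h.sin_lt_cos]) h.cos_pos.le

theorem momentum_two_eq_level (h : IsExtremal α T γ u M) (ht : t ∈ Set.Icc 0 T)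
    (h0 : M t 0 = 0) : M t 2 = h.level := by
  have hH := h.hamiltonian_eq ht
  rw [h0, abs_zero, mul_zero, zero_add, ← h.cos_mul_level] at hH
  exact mul_left_cancel₀ h.cos_pos.ne' hH

theorem momentum_one_sq (h : IsExtremal α T γ u M) (ht : t ∈ Set.Icc 0 T) (h0 : M t 0 = 0) :
    M t 1 ^ 2 = 1 - h.level ^ 2 := by
  have hM := h.momentum_dotProduct_self t ht
  rw [dotProduct, Fin.sum_univ_three, h0, h.momentum_two_eq_level ht h0] at hM
  linarith

theorem momentum_one_ne_zero (h : IsExtremal α T γ u M) (ht : t ∈ Set.Icc 0 T)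
    (h0 : M t 0 = 0) : M t 1 ≠ 0 := by
  intro h1
  have hsq := h.momentum_one_sq ht h0
  rw [h1] at hsq
  nlinarith [h.level_lt_one, h.level_nonneg]

theorem deriv_ne_zero (h : IsExtremal α T γ u M) (ht : t ∈ Set.Icc 0 T) (h0 : M t 0 = 0) :
    -(cos α * M t 1) ≠ 0 :=
  neg_ne_zero.2 (mul_ne_zero h.cos_pos.ne' (h.momentum_one_ne_zero ht h0))

/-- The zeros of the switching function in the open interval `(0, T)`. -/
def zeros (_ : IsExtremal α T γ u M) : Set ℝ := {t | t ∈ Set.Ioo 0 T ∧ M t 0 = 0}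

theorem finite_zeros (h : IsExtremal α T γ u M) : h.zeros.Finite := by
  have hfin : (Set.Icc 0 T ∩ (fun t => M t 0) ⁻¹' {0}).Finite := by
    refine IsCompact.finite (isCompact_Icc.of_isClosed_subset
      ((h.momentum.continuousOn_apply 0).preimage_isClosed_of_isClosed isClosed_Icc
        isClosed_singleton) Set.inter_subset_left) (isDiscrete_of_eventually_notMem ?_)
    rintro t ⟨ht, h0⟩
    have hne := (h.hasDerivWithinAt ht).eventually_ne (c := 0) (h.deriv_ne_zero ht h0)
    rw [Set.sdiff_eq, Set.inter_comm, nhdsWithin_inter', Filter.eventually_inf_principal] at hne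
    filter_upwards [hne] with z hz hzS using hz hzS.1 hzS.2
  exact hfin.subset fun t ht => ⟨Set.Ioo_subset_Icc_self ht.1, ht.2⟩

theorem eventually_control_eq (h : IsExtremal α T γ u M) {l : Filter ℝ} {e : ℝ}
    (he : e = 1 ∨ e = -1) (hl : ∀ᶠ s in l, s ∈ Set.Icc 0 T) (hpos : ∀ᶠ s in l, 0 < e * M s 0) :
    ∀ᶠ s in l ⊓ ae volume, u s = e := by
  filter_upwards [hl.filter_mono inf_le_left, hpos.filter_mono inf_le_left,
    (ae_mem_Ioo_iff_ae_mem_Icc.1 h.maximality).filter_mono inf_le_right] with s hs hpos hmax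
  have hmax := hmax hs
  rcases he with rfl | rfl
  · rw [one_mul] at hpos
    exact mul_right_cancel₀ hpos.ne' (by rw [hmax, abs_of_pos hpos, one_mul])
  · have hneg : M s 0 < 0 := by linarith
    exact mul_right_cancel₀ hneg.ne (by rw [hmax, abs_of_neg hneg, neg_one_mul])

theorem exists_eventually_pos (h : IsExtremal α T γ u M) (ht : t ∈ Set.Icc 0 T)
    (h0 : M t 0 ≠ 0) : ∃ e : ℝ, (e = 1 ∨ e = -1) ∧ ∀ᶠ s in 𝓝[Set.Icc 0 T] t, 0 < e * M s 0 := by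
  have hcont := h.momentum.continuousOn_apply 0 t ht
  rcases h0.lt_or_gt with hneg | hpos
  · refine ⟨-1, Or.inr rfl, ?_⟩
    filter_upwards [hcont.eventually_lt_const hneg] with s hs using by linarith
  · refine ⟨1, Or.inl rfl, ?_⟩
    filter_upwards [hcont.eventually_const_lt hpos] with s hs using by linarith

theorem exists_eventually_pos_of_eq_zero (h : IsExtremal α T γ u M) (ht : t ∈ Set.Icc 0 T)
    (h0 : M t 0 = 0) : ∃ e : ℝ, (e = 1 ∨ e = -1) ∧ 0 < e * M t 1 ∧
      ∀ᶠ s in 𝓝[Set.Icc 0 T \ {t}] t, 0 < e * M s 0 * (t - s) := by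
  have hev := eventually_mul_pos_of_hasDerivWithinAt (h.hasDerivWithinAt ht)
    (h.deriv_ne_zero ht h0) h0
  rcases (h.momentum_one_ne_zero ht h0).lt_or_gt with hneg | hpos
  · refine ⟨-1, Or.inr rfl, by linarith, ?_⟩
    filter_upwards [hev] with s hs
    have := pos_of_mul_pos_right (a := -(cos α * M t 1)) hs (by nlinarith [h.cos_pos])
    linarith
  · refine ⟨1, Or.inl rfl, by linarith, ?_⟩
    filter_upwards [hev] with s hs
    have := pos_of_mul_pos_right (a := cos α * M t 1) (b := M s 0 * (t - s)) (by linarith)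
      (by nlinarith [h.cos_pos])
    linarith

theorem exists_control_germs (h : IsExtremal α T γ u M) (ht : t ∈ Set.Ioo 0 T) :
    ∃ e e' : ℝ, (e = 1 ∨ e = -1) ∧ (e' = 1 ∨ e' = -1) ∧ (M t 0 = 0 ↔ e' = -e) ∧
      (∀ᶠ s in 𝓝[<] t ⊓ ae volume, u s = e) ∧ ∀ᶠ s in 𝓝[>] t ⊓ ae volume, u s = e' := by
  have htI := Set.Ioo_subset_Icc_self ht
  have hl : ∀ᶠ s in 𝓝 t, s ∈ Set.Icc 0 T := Icc_mem_nhds ht.1 ht.2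
  have hleft := hl.filter_mono (nhdsWithin_le_nhds (s := Set.Iio t))
  have hright := hl.filter_mono (nhdsWithin_le_nhds (s := Set.Ioi t))
  by_cases h0 : M t 0 = 0
  · obtain ⟨e, he, -, hev⟩ := h.exists_eventually_pos_of_eq_zero htI h0
    rw [eventually_nhdsWithin_iff] at hev
    refine ⟨e, -e, he, by rcases he with rfl | rfl <;> simp, iff_of_true h0 rfl,
      h.eventually_control_eq he hleft ?_, h.eventually_control_eq
        (by rcases he with rfl | rfl <;> simp) hright ?_⟩
    · filter_upwards [hev.filter_mono nhdsWithin_le_nhds, hleft, self_mem_nhdsWithin]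
        with s hs hsI hlt
      exact pos_of_mul_pos_left (hs ⟨hsI, hlt.ne⟩) (sub_pos.2 hlt).le
    · filter_upwards [hev.filter_mono nhdsWithin_le_nhds, hright, self_mem_nhdsWithin]
        with s hs hsI hlt
      have hs := hs ⟨hsI, ne_of_gt hlt⟩
      exact pos_of_mul_pos_left (b := s - t) (by linarith) (sub_pos.2 hlt).le
  · obtain ⟨e, he, hev⟩ := h.exists_eventually_pos htI h0
    rw [nhdsWithin_eq_nhds.2 (Icc_mem_nhds ht.1 ht.2)] at hev
    refine ⟨e, e, he, he, iff_of_false h0 (by rcases he with rfl | rfl <;> norm_num),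
      h.eventually_control_eq he hleft (hev.filter_mono nhdsWithin_le_nhds),
      h.eventually_control_eq he hright (hev.filter_mono nhdsWithin_le_nhds)⟩

theorem not_isSwitching_left (h : IsExtremal α T γ u M) : ¬ IsSwitching 0 T u 0 := by
  rw [isSwitching_iff, inf_ae_eq_sdiff_inf_ae]
  rintro ⟨ht, hsw⟩
  by_cases h0 : M 0 0 = 0
  · obtain ⟨e, he, -, hev⟩ := h.exists_eventually_pos_of_eq_zero ht h0
    refine hsw (-e) (by rcases he with rfl | rfl <;> simp) (h.eventually_control_eq
      (by rcases he with rfl | rfl <;> simp)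
      (Filter.mem_of_superset self_mem_nhdsWithin Set.sdiff_subset) ?_)
    filter_upwards [hev, self_mem_nhdsWithin] with s hs hsI
    exact pos_of_mul_pos_left (b := s) (by linarith) hsI.1.1
  · obtain ⟨e, he, hev⟩ := h.exists_eventually_pos ht h0
    exact hsw e he (h.eventually_control_eq he
      (Filter.mem_of_superset self_mem_nhdsWithin Set.sdiff_subset)
      (hev.filter_mono (nhdsWithin_mono _ Set.sdiff_subset)))

theorem not_isSwitching_right (h : IsExtremal α T γ u M) : ¬ IsSwitching 0 T u T := by
  rw [isSwitching_iff, inf_ae_eq_sdiff_inf_ae]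
  rintro ⟨ht, hsw⟩
  by_cases h0 : M T 0 = 0
  · obtain ⟨e, he, -, hev⟩ := h.exists_eventually_pos_of_eq_zero ht h0
    refine hsw e he (h.eventually_control_eq he
      (Filter.mem_of_superset self_mem_nhdsWithin Set.sdiff_subset) ?_)
    filter_upwards [hev, self_mem_nhdsWithin] with s hs hsI
    exact pos_of_mul_pos_left hs (sub_nonneg.2 hsI.1.2)
  · obtain ⟨e, he, hev⟩ := h.exists_eventually_pos ht h0
    exact hsw e he (h.eventually_control_eq he
      (Filter.mem_of_superset self_mem_nhdsWithin Set.sdiff_subset)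
      (hev.filter_mono (nhdsWithin_mono _ Set.sdiff_subset)))

theorem setOf_isSwitching_eq_zeros (h : IsExtremal α T γ u M) :
    {t | IsSwitching 0 T u t} = h.zeros := by
  ext t
  constructor
  · intro hsw
    have htI := hsw.1
    have ht : t ∈ Set.Ioo 0 T :=
      ⟨htI.1.lt_of_ne (by rintro rfl; exact h.not_isSwitching_left hsw),
        htI.2.lt_of_ne (by rintro rfl; exact h.not_isSwitching_right hsw)⟩
    refine ⟨ht, by_contra fun h0 => ?_⟩
    obtain ⟨e, he, hev⟩ := h.exists_eventually_pos htI h0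
    exact (isSwitching_iff.1 hsw).2 e he (h.eventually_control_eq he self_mem_nhdsWithin hev)
  · rintro ⟨ht, h0⟩
    refine isSwitching_iff.2 ⟨Set.Ioo_subset_Icc_self ht, fun c hc hev => ?_⟩
    obtain ⟨e, e', -, -, hjump, hleft, hright⟩ := h.exists_control_germs ht
    rw [nhdsWithin_eq_nhds.2 (Icc_mem_nhds ht.1 ht.2)] at hev
    obtain ⟨s, hs, hs'⟩ := (hleft.and (hev.filter_mono
      (inf_le_inf_right _ nhdsWithin_le_nhds))).exists
    obtain ⟨r, hr, hr'⟩ := (hright.and (hev.filter_mono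
      (inf_le_inf_right _ nhdsWithin_le_nhds))).exists
    have := hjump.1 h0
    rcases hc with rfl | rfl <;> linarith

/- The endpoint of a zero-free interval, if it is a zero, is approached from one side only, which
fixes the sign of the derivative of the switching function there. -/
theorem exists_sign_of_forall_ne_zero (h : IsExtremal α T γ u M) {p q : ℝ} (hp : 0 ≤ p)
    (hpq : p < q) (hq : q ≤ T) (hz : ∀ t ∈ Set.Ioo p q, M t 0 ≠ 0) :
    ∃ e : ℝ, (e = 1 ∨ e = -1) ∧ (∀ t ∈ Set.Ioo p q, 0 < e * M t 0) ∧
      (∀ᵐ t, t ∈ Set.Ioo p q → u t = e) ∧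
      (M q 0 = 0 → 0 < e * M q 1) ∧ (M p 0 = 0 → e * M p 1 < 0) := by
  have hsub : Set.Ioo p q ⊆ Set.Icc 0 T := fun t ht => ⟨hp.trans ht.1.le, ht.2.le.trans hq⟩
  obtain ⟨e, he, hpos⟩ : ∃ e : ℝ, (e = 1 ∨ e = -1) ∧ ∀ t ∈ Set.Ioo p q, 0 < e * M t 0 := by
    by_contra! hno
    obtain ⟨x, hx, hx0⟩ := hno 1 (Or.inl rfl)
    obtain ⟨y, hy, hy0⟩ := hno (-1) (Or.inr rfl)
    obtain ⟨z, hzI, hz0⟩ := isPreconnected_Ioo.intermediate_value hx hy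
      ((h.momentum.continuousOn_apply 0).mono hsub)
      (show (0 : ℝ) ∈ Set.Icc (M x 0) (M y 0) from ⟨by linarith, by linarith⟩)
    exact hz z hzI hz0
  refine ⟨e, he, hpos, ?_, fun hq0 => ?_, fun hp0 => ?_⟩
  · have := h.eventually_control_eq (l := Filter.principal (Set.Ioo p q)) he hsub hpos
    rwa [inf_comm, Filter.eventually_inf_principal] at this
  · have : (𝓝[Set.Ioo p q] q).NeBot := right_nhdsWithin_Ioo_neBot hpq
    obtain ⟨e', he', hM, hev⟩ := h.exists_eventually_pos_of_eq_zero ⟨hp.trans hpq.le, hq⟩ hq0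
    obtain ⟨s, hs, hsI⟩ := ((hev.filter_mono (nhdsWithin_mono q
      (show Set.Ioo p q ⊆ Set.Icc 0 T \ {q} from fun s hs => ⟨hsub hs, hs.2.ne⟩))).and
      self_mem_nhdsWithin).exists
    have := pos_of_mul_pos_left hs (sub_pos.2 hsI.2).le
    rcases he with rfl | rfl <;> rcases he' with rfl | rfl <;> linarith [hpos s hsI]
  · have : (𝓝[Set.Ioo p q] p).NeBot := left_nhdsWithin_Ioo_neBot hpq
    obtain ⟨e', he', hM, hev⟩ := h.exists_eventually_pos_of_eq_zero ⟨hp, hpq.le.trans hq⟩ hp0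
    obtain ⟨s, hs, hsI⟩ := ((hev.filter_mono (nhdsWithin_mono p
      (show Set.Ioo p q ⊆ Set.Icc 0 T \ {p} from fun s hs => ⟨hsub hs, hs.1.ne'⟩))).and
      self_mem_nhdsWithin).exists
    have : 0 < -(e' * M s 0) :=
      pos_of_mul_pos_left (b := s - p) (by linarith) (sub_pos.2 hsI.1).le
    rcases he with rfl | rfl <;> rcases he' with rfl | rfl <;> linarith [hpos s hsI]

end IsExtremal

/-! ### The angles of the switching points -/

section FiniteChain

variable {X : Type*} [LinearOrder X] {Z : Set X}

theorem finite_chain_induction (hZ : Z.Finite) {P : X → Prop}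
    (first : ∀ t ∈ Z, (∀ s ∈ Z, t ≤ s) → P t)
    (next : ∀ s ∈ Z, ∀ t ∈ Z, s < t → (∀ r ∈ Z, r ≤ s ∨ t ≤ r) → P s → P t) :
    ∀ t ∈ Z, P t := by
  intro t ht
  refine (hZ.wellFoundedOn (r := (· < ·))).induction ht fun t ht ih => ?_
  by_cases hfirst : ∀ s ∈ Z, t ≤ s
  · exact first t ht hfirst
  · push Not at hfirst
    obtain ⟨r, hr, hrt⟩ := hfirst
    obtain ⟨s, ⟨hs, hst⟩, hmax⟩ := (hZ.inter_of_left (Set.Iio t)).exists_maximal ⟨r, hr, hrt⟩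
    exact next s hs t ht hst (fun z hz => (lt_or_ge z t).imp_left
      fun hzt => not_lt.1 fun hsz => not_le.2 hsz (hmax ⟨hz, hzt⟩ hsz.le)) (ih s hs hst)

theorem ncard_inter_Iic_eq_one {t : X} (ht : t ∈ Z) (hfirst : ∀ s ∈ Z, t ≤ s) :
    (Z ∩ Set.Iic t).ncard = 1 := by
  rw [Set.ncard_eq_one]
  exact ⟨t, Set.Subset.antisymm (fun s hs => le_antisymm hs.2 (hfirst s hs.1))
    (Set.singleton_subset_iff.2 ⟨ht, le_rfl⟩)⟩

theorem ncard_inter_Iic_eq_succ (hZ : Z.Finite) {s t : X} (ht : t ∈ Z) (hst : s < t)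
    (hnext : ∀ r ∈ Z, r ≤ s ∨ t ≤ r) :
    (Z ∩ Set.Iic t).ncard = (Z ∩ Set.Iic s).ncard + 1 := by
  rw [← Set.ncard_insert_of_notMem (a := t) (fun h => not_le.2 hst h.2) (hZ.inter_of_left _)]
  congr 1
  ext r
  constructor
  · rintro ⟨hr, hrt⟩
    exact (hnext r hr).elim (fun hrs => Or.inr ⟨hr, hrs⟩) fun htr => Or.inl (le_antisymm hrt htr)
  · rintro (rfl | ⟨hr, hrs⟩)
    exacts [⟨ht, le_rfl⟩, ⟨hr, hrs.trans hst.le⟩]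

theorem exists_isGreatest_ncard_inter_Iic (hZ : Z.Finite) (hne : Z.Nonempty) :
    ∃ t, IsGreatest Z t ∧ (Z ∩ Set.Iic t).ncard = Z.ncard := by
  obtain ⟨t, ht, hmax⟩ := hZ.exists_maximal hne
  have hle : ∀ s ∈ Z, s ≤ t := fun s hs => (le_total s t).elim id (hmax hs)
  exact ⟨t, ⟨ht, hle⟩, congrArg Set.ncard (Set.inter_eq_left.2 hle)⟩

end FiniteChain

theorem sqrt_mul_cos_arctan {x : ℝ} (hx : 0 < x) (y : ℝ) :
    √(x ^ 2 + y ^ 2) * cos (arctan (y / x)) = x := by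
  have hsum : x ^ 2 + y ^ 2 = x ^ 2 * (1 + (y / x) ^ 2) := by field_simp
  have : 0 < √(1 + (y / x) ^ 2) := sqrt_pos.2 (by positivity)
  rw [cos_arctan, hsum, sqrt_mul (sq_nonneg x), sqrt_sq hx.le]
  field_simp

theorem sqrt_mul_sin_arctan {x : ℝ} (hx : 0 < x) (y : ℝ) :
    √(x ^ 2 + y ^ 2) * sin (arctan (y / x)) = y := by
  have htan : tan (arctan (y / x)) = y / x := tan_arctan _
  rw [tan_eq_sin_div_cos, div_eq_iff (cos_arctan_pos _).ne'] at htan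
  rw [htan, mul_left_comm, sqrt_mul_cos_arctan hx, div_mul_cancel₀ _ hx.ne']

namespace IsExtremal

variable {α T : ℝ} {γ M : ℝ → Fin 3 → ℝ} {u : ℝ → ℝ} {p q t : ℝ}

/-- The modulus of `M t 1` at the zeros of the switching function. -/
noncomputable def coLevel (h : IsExtremal α T γ u M) : ℝ := √(1 - h.level ^ 2)

/-- Half of the increment of the switching angle (see `IsSwitchingAngle`) between consecutive
zeros of the switching function. -/
noncomputable def halfStep (h : IsExtremal α T γ u M) : ℝ :=
  arctan (sin α / (cos α * h.coLevel))

/-- The modulus of the vector `(cos α * coLevel, sin α)`, whose argument is `halfStep`. -/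
noncomputable def amplitude (h : IsExtremal α T γ u M) : ℝ :=
  √((cos α * h.coLevel) ^ 2 + sin α ^ 2)

theorem coLevel_sq (h : IsExtremal α T γ u M) : h.coLevel ^ 2 = 1 - h.level ^ 2 :=
  sq_sqrt (by nlinarith [h.level_lt_one, h.level_nonneg])

theorem coLevel_pos (h : IsExtremal α T γ u M) : 0 < h.coLevel :=
  sqrt_pos.2 (by nlinarith [h.level_lt_one, h.level_nonneg])

theorem coLevel_lt_one (h : IsExtremal α T γ u M) (hlevel : 0 < h.level) : h.coLevel < 1 := by
  nlinarith [h.coLevel_sq, h.coLevel_pos, mul_pos hlevel hlevel]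

theorem amplitude_pos (h : IsExtremal α T γ u M) : 0 < h.amplitude :=
  have := h.sin_pos
  sqrt_pos.2 (by positivity)

theorem amplitude_mul_cos (h : IsExtremal α T γ u M) :
    h.amplitude * cos h.halfStep = cos α * h.coLevel :=
  sqrt_mul_cos_arctan (mul_pos h.cos_pos h.coLevel_pos) _

theorem amplitude_mul_sin (h : IsExtremal α T γ u M) : h.amplitude * sin h.halfStep = sin α :=
  sqrt_mul_sin_arctan (mul_pos h.cos_pos h.coLevel_pos) _

theorem arctan_sin_div_cos (h : IsExtremal α T γ u M) : arctan (sin α / cos α) = α := by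
  rw [← tan_eq_sin_div_cos]
  exact arctan_tan (by linarith [h.mem_Ioo.1, pi_pos]) (by linarith [h.mem_Ioo.2, pi_pos])

theorem abs_arctan_le (h : IsExtremal α T γ u M) {m : ℝ} (hm : |m| ≤ 1) :
    |arctan (sin α * m / cos α)| ≤ α := by
  have hle : ∀ x ≤ 1, arctan (sin α * x / cos α) ≤ α := fun x hx => by
    conv_rhs => rw [← h.arctan_sin_div_cos]
    exact arctan_mono (div_le_div_of_nonneg_right (mul_le_of_le_one_right h.sin_pos.le hx)
      h.cos_pos.le)
  refine abs_le.2 ⟨neg_le.2 ?_, hle m (abs_le.1 hm).2⟩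
  rw [← arctan_neg, ← neg_div, ← mul_neg]
  exact hle (-m) (neg_le.2 (abs_le.1 hm).1)

theorem halfStep_lt (h : IsExtremal α T γ u M) : h.halfStep < π / 2 := arctan_lt_pi_div_two _

theorem lt_halfStep (h : IsExtremal α T γ u M) (hlevel : 0 < h.level) : α < h.halfStep := by
  conv_lhs => rw [← h.arctan_sin_div_cos]
  exact arctan_strictMono (div_lt_div_of_pos_left h.sin_pos (mul_pos h.cos_pos h.coLevel_pos)
    (mul_lt_of_lt_one_right h.cos_pos (h.coLevel_lt_one hlevel)))

theorem halfStep_eq (h : IsExtremal α T γ u M) (hlevel : h.level = 0) : h.halfStep = α := by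
  have hco : h.coLevel = 1 := by simp [coLevel, hlevel]
  rw [halfStep, hco, mul_one, h.arctan_sin_div_cos]

theorem le_halfStep (h : IsExtremal α T γ u M) : α ≤ h.halfStep :=
  h.level_nonneg.eq_or_lt.elim (fun h0 => (h.halfStep_eq h0.symm).ge)
    fun h0 => (h.lt_halfStep h0).le

/-- `ψ` is the angle of the point `γ t`, where `t` is a zero of the switching function: at such
times `(γ t 2, M t 1 * γ t 0)` lies on the circle of radius `coLevel`. -/
def IsSwitchingAngle (h : IsExtremal α T γ u M) (t ψ : ℝ) : Prop :=
  γ t 2 = h.coLevel * cos ψ ∧ M t 1 * γ t 0 = h.coLevel * sin ψ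

theorem momentum_one_eq (h : IsExtremal α T γ u M) {e : ℝ} (he : e = 1 ∨ e = -1)
    (ht : t ∈ Set.Icc 0 T) (h0 : M t 0 = 0) (hpos : 0 < e * M t 1) : M t 1 = e * h.coLevel := by
  have hsq := h.momentum_one_sq ht h0
  rw [← h.coLevel_sq, sq_eq_sq_iff_eq_or_eq_neg] at hsq
  have := h.coLevel_pos
  rcases he with rfl | rfl <;> rcases hsq with hsq | hsq <;> linarith

/- `M × γ` is the second vector orthogonal to `γ` that moves with the rotations. -/
theorem momentum_one_mul_cross (h : IsExtremal α T γ u M) (ht : t ∈ Set.Icc 0 T)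
    (h0 : M t 0 = 0) : M t 1 * (M t ⨯₃ γ t) 0 = γ t 2 := by
  have hM := h.momentum_dotProduct_self t ht
  have hMγ := h.momentum_dotProduct t ht
  simp only [dotProduct, Fin.sum_univ_three, h0] at hM hMγ
  simp only [cross_apply, Matrix.cons_val_zero]
  linear_combination γ t 2 * hM - M t 2 * hMγ

theorem cross_two (h0 : M t 0 = 0) : (M t ⨯₃ γ t) 2 = -(M t 1 * γ t 0) := by
  simp [cross_apply, h0]

theorem isSwitchingAngle_of_axisComponent (h : IsExtremal α T γ u M) {e ψ : ℝ}
    (he : e = 1 ∨ e = -1) (ht : t ∈ Set.Icc 0 T) (h0 : M t 0 = 0) (hpos : 0 < e * M t 1)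
    (hcos : axisComponent α e (γ t) = h.amplitude * cos ψ)
    (hsin : axisComponent α e (M t ⨯₃ γ t) = -(h.amplitude * sin ψ)) :
    h.IsSwitchingAngle t (ψ + h.halfStep) := by
  have hcross := h.momentum_one_mul_cross ht h0
  have hM := h.momentum_one_eq he ht h0 hpos
  have hee : e * e = 1 := by rcases he with rfl | rfl <;> norm_num
  rw [axisComponent] at hcos
  rw [axisComponent, cross_two h0] at hsin
  have hA := h.amplitude_pos.ne'
  have hx : γ t 2 * cos h.halfStep + M t 1 * γ t 0 * sin h.halfStep = h.coLevel * cos ψ := by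
    refine mul_left_cancel₀ hA ?_
    linear_combination γ t 2 * h.amplitude_mul_cos + M t 1 * γ t 0 * h.amplitude_mul_sin
      + h.coLevel * hcos + sin α * γ t 0 * hM
  have hy : M t 1 * γ t 0 * cos h.halfStep - γ t 2 * sin h.halfStep = h.coLevel * sin ψ := by
    refine mul_left_cancel₀ hA ?_
    linear_combination M t 1 * γ t 0 * h.amplitude_mul_cos - γ t 2 * h.amplitude_mul_sin
      - h.coLevel * hsin - sin α * (M t ⨯₃ γ t) 0 * hM + sin α * hcross
  have hone := sin_sq_add_cos_sq h.halfStep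
  constructor
  · rw [cos_add]
    linear_combination cos h.halfStep * hx - sin h.halfStep * hy - γ t 2 * hone
  · rw [sin_add]
    linear_combination sin h.halfStep * hx + cos h.halfStep * hy - M t 1 * γ t 0 * hone

namespace IsSwitchingAngle

variable {h : IsExtremal α T γ u M} {e ψ : ℝ}

theorem axisComponent_apply (hψ : h.IsSwitchingAngle t ψ) (hM : M t 1 = -e * h.coLevel) :
    axisComponent α e (γ t) = h.amplitude * cos (ψ + h.halfStep) := by
  have hsin : -e * γ t 0 = sin ψ := by
    refine mul_left_cancel₀ h.coLevel_pos.ne' ?_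
    linear_combination hψ.2 - γ t 0 * hM
  rw [axisComponent, cos_add, hψ.1]
  linear_combination -sin α * hsin - cos ψ * h.amplitude_mul_cos + sin ψ * h.amplitude_mul_sin

theorem axisComponent_cross (hψ : h.IsSwitchingAngle t ψ) (ht : t ∈ Set.Icc 0 T)
    (h0 : M t 0 = 0) (hM : M t 1 = -e * h.coLevel) :
    axisComponent α e (M t ⨯₃ γ t) = -(h.amplitude * sin (ψ + h.halfStep)) := by
  have hcos : -e * (M t ⨯₃ γ t) 0 = cos ψ := by
    refine mul_left_cancel₀ h.coLevel_pos.ne' ?_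
    linear_combination h.momentum_one_mul_cross ht h0 + hψ.1 - (M t ⨯₃ γ t) 0 * hM
  rw [axisComponent, cross_two h0, hψ.2, sin_add]
  linear_combination -sin α * hcos + sin ψ * h.amplitude_mul_cos + cos ψ * h.amplitude_mul_sin

end IsSwitchingAngle

theorem cross_axisComponent_eq_left (h : IsExtremal α T γ u M) {e : ℝ} (hp : 0 ≤ p)
    (hpq : p ≤ q) (hq : q ≤ T) (hu : ∀ᵐ t, t ∈ Set.Ioo p q → u t = e) :
    axisComponent α e (M q ⨯₃ γ q) = axisComponent α e (M p ⨯₃ γ p) :=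
  ((h.momentum.cross h.trajectory h.pos.le).mono hp hpq hq).axisComponent_eq_left hu
    ⟨hpq, le_rfl⟩

theorem isSwitchingAngle_next (h : IsExtremal α T γ u M) {ψ : ℝ} (hp : p ∈ h.zeros)
    (hq : q ∈ h.zeros) (hpq : p < q) (hnext : ∀ r ∈ h.zeros, r ≤ p ∨ q ≤ r)
    (hψ : h.IsSwitchingAngle p ψ) : h.IsSwitchingAngle q (ψ + 2 * h.halfStep) := by
  have hpI := Set.Ioo_subset_Icc_self hp.1
  have hqI := Set.Ioo_subset_Icc_self hq.1
  obtain ⟨e, he, -, hu, hMq, hMp⟩ := h.exists_sign_of_forall_ne_zero hpI.1 hpq hqI.2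
    fun t ht h0 => (hnext t ⟨⟨hpI.1.trans_lt ht.1, ht.2.trans_le hqI.2⟩, h0⟩).elim
      (not_le.2 ht.1) (not_le.2 ht.2)
  have hM : M p 1 = -e * h.coLevel := h.momentum_one_eq (by rcases he with rfl | rfl <;> simp)
    hpI hp.2 (by linarith [hMp hp.2])
  rw [two_mul, ← add_assoc]
  refine h.isSwitchingAngle_of_axisComponent he hqI hq.2 (hMq hq.2) ?_ ?_
  · rw [(h.trajectory.mono hpI.1 hpq.le hqI.2).axisComponent_eq_left hu ⟨hpq.le, le_rfl⟩,
      hψ.axisComponent_apply hM]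
  · rw [h.cross_axisComponent_eq_left hpI.1 hpq.le hqI.2 hu,
      hψ.axisComponent_cross hpI hp.2 hM]

theorem amplitude_sq (h : IsExtremal α T γ u M) :
    (cos α * h.coLevel) ^ 2 + sin α ^ 2 = cos α ^ 2 + (sin α * M 0 1) ^ 2 := by
  have hM := h.momentum_dotProduct_self 0 ⟨le_rfl, h.pos.le⟩
  rw [dotProduct, Fin.sum_univ_three, h.momentum_zero_two] at hM
  have hlevel : (cos α * h.level) ^ 2 = (sin α * M 0 0) ^ 2 := by
    rw [h.cos_mul_level, mul_pow, sq_abs, mul_pow]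
  rw [mul_pow, h.coLevel_sq]
  linear_combination -hlevel - sin α ^ 2 * hM

theorem exists_isSwitchingAngle_first (h : IsExtremal α T γ u M) (ht : t ∈ h.zeros)
    (hfirst : ∀ s ∈ h.zeros, t ≤ s) :
    ∃ δ, |δ| ≤ α ∧ (h.level = 0 → δ = α) ∧ h.IsSwitchingAngle t (δ + h.halfStep) := by
  have htI := Set.Ioo_subset_Icc_self ht.1
  have hM := h.momentum_dotProduct_self 0 ⟨le_rfl, h.pos.le⟩
  rw [dotProduct, Fin.sum_univ_three, h.momentum_zero_two] at hM
  obtain ⟨e, he, -, hu, hMt, hM0⟩ := h.exists_sign_of_forall_ne_zero le_rfl ht.1.1 htI.2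
    fun s hs h0 => not_le.2 hs.2 (hfirst s ⟨⟨hs.1, hs.2.trans ht.1.2⟩, h0⟩)
  set m : ℝ := -e * M 0 1 with hm
  have hmsq : m ^ 2 = M 0 1 ^ 2 := by rcases he with rfl | rfl <;> simp [hm]
  have hmabs : |m| ≤ 1 := (sq_le_one_iff_abs_le_one m).1 (by nlinarith [sq_nonneg (M 0 0)])
  have hA : √(cos α ^ 2 + (sin α * m) ^ 2) = h.amplitude := by
    rw [amplitude, h.amplitude_sq, mul_pow _ m, hmsq, ← mul_pow]
  refine ⟨arctan (sin α * m / cos α), h.abs_arctan_le hmabs, fun hlevel => ?_,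
    h.isSwitchingAngle_of_axisComponent he htI ht.2 (hMt ht.2) ?_ ?_⟩
  · have h0 : M 0 0 = 0 := by simpa [hlevel, h.sin_pos.ne'] using h.cos_mul_level
    have hm1 : m = 1 := by nlinarith [hM0 h0]
    rw [hm1, mul_one, h.arctan_sin_div_cos]
  · rw [(h.trajectory.mono le_rfl ht.1.1.le htI.2).axisComponent_eq_left hu ⟨ht.1.1.le, le_rfl⟩,
      ← hA, sqrt_mul_cos_arctan h.cos_pos]
    simp [axisComponent, h.apply_zero]
  · rw [h.cross_axisComponent_eq_left le_rfl ht.1.1.le htI.2 hu, ← hA,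
      sqrt_mul_sin_arctan h.cos_pos]
    simp only [axisComponent, cross_apply, h.apply_zero, Matrix.cons_val, hm]
    ring

theorem exists_isSwitchingAngle (h : IsExtremal α T γ u M) :
    ∃ δ, |δ| ≤ α ∧ (h.level = 0 → δ = α) ∧ ∀ t ∈ h.zeros,
      h.IsSwitchingAngle t (δ + (2 * (h.zeros ∩ Set.Iic t).ncard - 1) * h.halfStep) := by
  rcases h.zeros.eq_empty_or_nonempty with hempty | hne
  · exact ⟨α, (abs_of_pos h.mem_Ioo.1).le, fun _ => rfl, by simp [hempty]⟩
  obtain ⟨t₁, ht₁, hmin⟩ := h.finite_zeros.exists_minimal hne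
  have hfirst : ∀ s ∈ h.zeros, t₁ ≤ s := fun s hs => (le_total t₁ s).elim id (hmin hs)
  obtain ⟨δ, hδ, hδα, hψ⟩ := h.exists_isSwitchingAngle_first ht₁ hfirst
  refine ⟨δ, hδ, hδα, finite_chain_induction h.finite_zeros (fun t ht hle => ?_)
    fun s hs t ht hst hnext hψs => ?_⟩
  · rw [ncard_inter_Iic_eq_one ht hle, le_antisymm (hle t₁ ht₁) (hfirst t ht)]
    convert hψ using 2
    push_cast
    ring
  · rw [ncard_inter_Iic_eq_succ h.finite_zeros ht hst hnext]
    convert h.isSwitchingAngle_next hs ht hst hnext hψs using 1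
    push_cast
    ring

/- The angle starts below `3π/2` and grows by steps smaller than `π`, so it cannot jump over the
interval `(π/2, 3π/2)` of negative cosines. -/
theorem switchingAngle_le (h : IsExtremal α T γ u M) (hγ : ∀ t ∈ Set.Icc 0 T, 0 ≤ γ t 2) {δ : ℝ}
    (hδ : |δ| ≤ α) (hψ : ∀ t ∈ h.zeros,
      h.IsSwitchingAngle t (δ + (2 * (h.zeros ∩ Set.Iic t).ncard - 1) * h.halfStep)) :
    ∀ t ∈ h.zeros, δ + (2 * (h.zeros ∩ Set.Iic t).ncard - 1) * h.halfStep ≤ π / 2 := by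
  have hle : ∀ t ∈ h.zeros, ∀ ψ, h.IsSwitchingAngle t ψ → ψ < 3 * π / 2 → ψ ≤ π / 2 := by
    intro t ht ψ hψ hlt
    by_contra! hgt
    have hneg := cos_neg_of_pi_div_two_lt_of_lt hgt (by linarith)
    have := hγ t (Set.Ioo_subset_Icc_self ht.1)
    rw [hψ.1] at this
    exact not_lt.2 this (mul_neg_of_pos_of_neg h.coLevel_pos hneg)
  have hstep := h.halfStep_lt
  refine finite_chain_induction h.finite_zeros (fun t ht hfirst => hle t ht _ (hψ t ht) ?_)
    fun s _ t ht hst hnext hs' => hle t ht _ (hψ t ht) ?_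
  · rw [ncard_inter_Iic_eq_one ht hfirst]
    push_cast
    linarith [(abs_le.1 hδ).2, h.mem_Ioo.2, pi_pos]
  · rw [ncard_inter_Iic_eq_succ h.finite_zeros ht hst hnext]
    push_cast
    linarith

theorem ncard_zeros_lt (h : IsExtremal α T γ u M) (hγ : ∀ t ∈ Set.Icc 0 T, 0 ≤ γ t 2) :
    2 * α * ((h.zeros.ncard : ℝ) - 1) < π / 2 := by
  have hα := h.mem_Ioo.1
  rcases h.zeros.eq_empty_or_nonempty with hempty | hne
  · rw [hempty, Set.ncard_empty]
    push_cast
    linarith [pi_pos]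
  obtain ⟨t, ht, hcard⟩ := exists_isGreatest_ncard_inter_Iic h.finite_zeros hne
  obtain ⟨δ, hδ, hδα, hψ⟩ := h.exists_isSwitchingAngle
  have hle := h.switchingAngle_le hγ hδ hψ t ht.1
  have hpos : 0 < δ + h.halfStep := by
    rcases h.level_nonneg.eq_or_lt with hlevel | hlevel
    · linarith [hδα hlevel.symm, h.halfStep_eq hlevel.symm]
    · linarith [(abs_le.1 hδ).1, h.lt_halfStep hlevel]
  have hone : (1 : ℝ) ≤ h.zeros.ncard := by
    exact_mod_cast (Set.ncard_pos h.finite_zeros).2 hne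
  rw [hcard] at hle
  nlinarith [h.le_halfStep]

end IsExtremal

/-! ### Optimal trajectories cross the equator at most once -/

namespace IsExtremal

variable {α T : ℝ} {γ M γ' M' : ℝ → Fin 3 → ℝ} {u u' : ℝ → ℝ} {t : ℝ}

theorem exists_related_control_germs (h : IsExtremal α T γ u M) (h' : IsExtremal α T γ' u' M')
    (ht : t ∈ Set.Ioo 0 T) {c : ℝ} (hleft : ∀ᶠ s in 𝓝[<] t, u' s = u s)
    (hright : ∀ᶠ s in 𝓝[>] t, u' s = c * u s) :
    ∃ e f : ℝ, (e = 1 ∨ e = -1) ∧ (f = 1 ∨ f = -1) ∧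
      (M t 0 = 0 ↔ f = -e) ∧ (M' t 0 = 0 ↔ c * f = -e) := by
  obtain ⟨e, f, he, hf, hjump, hue, huf⟩ := h.exists_control_germs ht
  obtain ⟨e', f', -, -, hjump', hue', huf'⟩ := h'.exists_control_germs ht
  obtain ⟨s, ⟨hs, hs'⟩, hss'⟩ := ((hue.and hue').and (hleft.filter_mono inf_le_left)).exists
  obtain ⟨r, ⟨hr, hr'⟩, hrr'⟩ := ((huf.and huf').and (hright.filter_mono inf_le_left)).exists
  rw [hs, hs'] at hss'
  rw [hr, hr'] at hrr'
  subst hss' hrr'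
  exact ⟨e', f, he, hf, hjump, hjump'⟩

theorem apply_two_ne_zero_of_first (h : IsExtremal α T γ u M) (ht : t ∈ h.zeros)
    (hfirst : ∀ s ∈ h.zeros, t ≤ s) : γ t 2 ≠ 0 := by
  intro h0
  have htI := Set.Ioo_subset_Icc_self ht.1
  obtain ⟨e, he, -, hu, -⟩ := h.exists_sign_of_forall_ne_zero le_rfl ht.1.1 htI.2
    fun s hs hs0 => not_le.2 hs.2 (hfirst s ⟨⟨hs.1, hs.2.trans ht.1.2⟩, hs0⟩)
  have haxis : e * sin α * γ t 0 = cos α := by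
    have := (h.trajectory.mono le_rfl htI.1 htI.2).axisComponent_eq_left hu ⟨htI.1, le_rfl⟩
    simpa [axisComponent, h.apply_zero, h0] using this
  have hγ := h.dotProduct_self htI
  simp only [dotProduct, Fin.sum_univ_three, h0] at hγ
  have hle := abs_le.1 (abs_le_one_iff_mul_self_le_one.2
    (show γ t 0 * γ t 0 ≤ 1 by nlinarith [sq_nonneg (γ t 1)]))
  rcases he with rfl | rfl <;> nlinarith [h.sin_pos, h.sin_lt_cos]

/- At a zero of the switching function both momenta lie on the line of the `y₂y₃`-plane
orthogonal to `γ t`. -/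
theorem exists_smul_momentum_eq (h : IsExtremal α T γ u M) (h' : IsExtremal α T γ' u' M')
    (ht : t ∈ Set.Icc 0 T) (hγ : γ' t = γ t) (h2 : γ t 2 ≠ 0) (h0 : M t 0 = 0)
    (h0' : M' t 0 = 0) : ∃ κ : ℝ, κ • M t = M' t := by
  have hM1 := h.momentum_one_ne_zero ht h0
  have horth := h.momentum_dotProduct t ht
  have horth' := h'.momentum_dotProduct t ht
  simp only [dotProduct, Fin.sum_univ_three, hγ, h0, h0', zero_mul, zero_add] at horth horth'
  refine ⟨M' t 1 / M t 1, ?_⟩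
  ext i
  fin_cases i
  · simp [h0, h0']
  · simp [hM1]
  · refine mul_right_cancel₀ h2 ?_
    simp only [Fin.reduceFinMk, Pi.smul_apply, smul_eq_mul]
    rw [div_mul_eq_mul_div, div_mul_eq_mul_div, div_eq_iff hM1]
    linear_combination M' t 1 * horth - M t 1 * horth'

/- Both momenta vanish at the first zero of `M · 0`, where they are therefore proportional. -/
theorem momentum_zero_eq_zero_of_eqOn (h : IsExtremal α T γ u M) (h' : IsExtremal α T γ' u' M')
    (hγ : Set.EqOn γ' γ (Set.Icc 0 t)) (hu : Set.EqOn u' u (Set.Ioo 0 t)) (ht : t ∈ h.zeros)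
    (h2 : γ t 2 = 0) : M' t 0 = 0 := by
  obtain ⟨τ, hτ, hmin⟩ := h.finite_zeros.exists_minimal ⟨t, ht⟩
  have hfirst : ∀ s ∈ h.zeros, τ ≤ s := fun s hs => (le_total τ s).elim id (hmin hs)
  have hτ2 := h.apply_two_ne_zero_of_first hτ hfirst
  have hτt : τ < t := (hfirst t ht).lt_of_ne (by rintro rfl; exact hτ2 h2)
  have hev : ∀ᶠ s in 𝓝 τ, u' s = u s := by
    filter_upwards [Ioo_mem_nhds hτ.1.1 hτt] with s hs using hu hs
  obtain ⟨e, f, -, -, hM, hM'⟩ := h.exists_related_control_germs h' hτ.1 (c := 1)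
    (hev.filter_mono nhdsWithin_le_nhds)
    (by simpa using hev.filter_mono (nhdsWithin_le_nhds (s := Set.Ioi τ)))
  rw [one_mul, ← hM] at hM'
  obtain ⟨κ, hκ⟩ := h.exists_smul_momentum_eq h' (Set.Ioo_subset_Icc_self hτ.1)
    (hγ ⟨hτ.1.1.le, hτt.le⟩) hτ2 hτ.2 (hM'.2 hτ.2)
  have hkM := (h.momentum.mono le_rfl ht.1.1.le ht.1.2.le).smul κ ht.1.1.le
  have hM't : IsTrajectory α 0 t u M' :=
    (h'.momentum.mono le_rfl ht.1.1.le ht.1.2.le).congr ht.1.1.le (fun _ _ => rfl) hu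
  rw [← hkM.eqOn_of_eq hM't ⟨hτ.1.1.le, hτt.le⟩ hκ ⟨ht.1.1.le, le_rfl⟩]
  simp [ht.2]

end IsExtremal

/-- The reflection of `ℝ³` across the plane of the equator. -/
def equatorReflection (x : Fin 3 → ℝ) : Fin 3 → ℝ := ![x 0, x 1, -x 2]

theorem equatorReflection_eq_self {x : Fin 3 → ℝ} (hx : x 2 = 0) : equatorReflection x = x := by
  ext i
  fin_cases i <;> simp [equatorReflection, hx]

namespace IsTrajectory

variable {α a b : ℝ} {u : ℝ → ℝ} {v : ℝ → Fin 3 → ℝ}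

theorem equatorReflection (h : IsTrajectory α a b u v) (hab : a ≤ b) :
    IsTrajectory α a b (-u) fun t => equatorReflection (v t) :=
  of_hasACDeriv
    (h.hasACDeriv_zero.congr hab (fun _ _ => rfl) fun t _ => by simp [_root_.equatorReflection])
    (h.hasACDeriv_one.congr hab (fun _ _ => rfl) fun t _ => by simp [_root_.equatorReflection])
    (h.hasACDeriv_two.neg.congr hab (fun _ _ => rfl) fun t _ => by
      simp [_root_.equatorReflection])

theorem piecewise_equatorReflection (h : IsTrajectory α a b u v) {t₁ t₂ : ℝ} (ht₁ : a ≤ t₁)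
    (ht : t₁ ≤ t₂) (ht₂ : t₂ ≤ b) (h₁ : v t₁ 2 = 0) (h₂ : v t₂ 2 = 0) :
    IsTrajectory α a b ((Set.Ioo t₁ t₂).piecewise (-u) u)
      ((Set.Ioo t₁ t₂).piecewise (fun t => _root_.equatorReflection (v t)) v) := by
  have hout : ∀ s, s ≤ t₁ ∨ t₂ ≤ s → s ∉ Set.Ioo t₁ t₂ := fun s hs hmem =>
    hs.elim (not_le.2 hmem.1) (not_le.2 hmem.2)
  refine glue ht₁ (ht.trans ht₂) ((h.mono le_rfl ht₁ (ht.trans ht₂)).congr ht₁ ?_ ?_)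
    (glue ht ht₂ (((h.mono ht₁ ht ht₂).equatorReflection ht).congr ht ?_ ?_)
      ((h.mono (ht₁.trans ht) ht₂ le_rfl).congr ht₂ ?_ ?_))
  · exact fun s hs => (Set.piecewise_eq_of_notMem _ _ _ (hout s (Or.inl hs.2))).symm
  · exact fun s hs => (Set.piecewise_eq_of_notMem _ _ _ (hout s (Or.inl hs.2.le))).symm
  · intro s hs
    by_cases hsI : s ∈ Set.Ioo t₁ t₂
    · rw [Set.piecewise_eq_of_mem _ _ _ hsI]
    · have hs2 : v s 2 = 0 := by
        rcases hs.1.eq_or_lt with rfl | hlt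
        · exact h₁
        · rw [hs.2.antisymm (not_lt.1 fun hlt' => hsI ⟨hlt, hlt'⟩), h₂]
      rw [Set.piecewise_eq_of_notMem _ _ _ hsI]
      exact equatorReflection_eq_self hs2
  · exact fun s hs => (Set.piecewise_eq_of_mem _ _ _ hs).symm
  · exact fun s hs => (Set.piecewise_eq_of_notMem _ _ _ (hout s (Or.inr hs.1))).symm
  · exact fun s hs => (Set.piecewise_eq_of_notMem _ _ _ (hout s (Or.inr hs.1.le))).symm

end IsTrajectory

namespace TimeOptimalS

variable {α T : ℝ} {γ : ℝ → Fin 3 → ℝ} {u : ℝ → ℝ}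

theorem of_endpoints_eq {a b : ℝ} {η : ℝ → Fin 3 → ℝ} {v : ℝ → ℝ} (h : TimeOptimalS α a b γ u)
    (hη : AdmissiblePairS α a b η v) (ha : η a = γ a) (hb : η b = γ b) :
    TimeOptimalS α a b η v :=
  ⟨hη, fun a' b' η' v' hη' ha' hb' => h.2 a' b' η' v' hη' (ha'.trans ha) (hb'.trans hb)⟩

theorem piecewise_equatorReflection {a b : ℝ} (h : TimeOptimalS α a b γ u) {t₁ t₂ : ℝ}
    (ht₁ : a ≤ t₁) (ht : t₁ ≤ t₂) (ht₂ : t₂ ≤ b) (h₁ : γ t₁ 2 = 0) (h₂ : γ t₂ 2 = 0) :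
    TimeOptimalS α a b ((Set.Ioo t₁ t₂).piecewise (fun t => equatorReflection (γ t)) γ)
      ((Set.Ioo t₁ t₂).piecewise (-u) u) := by
  have ha : (Set.Ioo t₁ t₂).piecewise (fun t => equatorReflection (γ t)) γ a = γ a :=
    Set.piecewise_eq_of_notMem _ _ _ fun hmem => not_le.2 hmem.1 ht₁
  have hb : (Set.Ioo t₁ t₂).piecewise (fun t => equatorReflection (γ t)) γ b = γ b :=
    Set.piecewise_eq_of_notMem _ _ _ fun hmem => not_le.2 hmem.2 ht₂
  refine h.of_endpoints_eq (.of_isTrajectory h.1.hab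
    (h.1.humeas.neg.piecewise measurableSet_Ioo h.1.humeas) (fun s hs => ?_)
    (h.1.isTrajectory.piecewise_equatorReflection ht₁ ht ht₂ h₁ h₂) ?_) ha hb
  · by_cases hsI : s ∈ Set.Ioo t₁ t₂
    · rw [Set.piecewise_eq_of_mem _ _ _ hsI, Pi.neg_apply, abs_neg]
      exact h.1.hubound s hs
    · rw [Set.piecewise_eq_of_notMem _ _ _ hsI]
      exact h.1.hubound s hs
  · rw [ha]
    exact h.1.dotProduct_self ⟨le_rfl, h.1.hab⟩

/- Reflecting the part between two crossings of the equator gives another optimal trajectory, and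
exactly one of the two switches at the first crossing. -/
theorem apply_two_ne_zero_of_lt (hα : α ∈ Set.Ioo 0 (π / 4)) (h : TimeOptimalS α 0 T γ u)
    (h0 : γ 0 = ![0, 0, 1]) {t₁ t₂ : ℝ} (ht₁ : 0 < t₁) (ht : t₁ < t₂) (ht₂ : t₂ ≤ T)
    (h₁ : γ t₁ 2 = 0) : γ t₂ 2 ≠ 0 := by
  intro h₂
  have hT : 0 < T := ht₁.trans (ht.trans_le ht₂)
  have htT : t₁ ∈ Set.Ioo 0 T := ⟨ht₁, ht.trans_le ht₂⟩
  have hrefl := h.piecewise_equatorReflection ht₁.le ht.le ht₂ h₁ h₂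
  set γ' := (Set.Ioo t₁ t₂).piecewise (fun t => equatorReflection (γ t)) γ
  set u' := (Set.Ioo t₁ t₂).piecewise (-u) u
  have hγ : Set.EqOn γ' γ (Set.Iic t₁) := fun s hs =>
    Set.piecewise_eq_of_notMem _ _ _ fun hmem => not_le.2 hmem.1 hs
  have hu : Set.EqOn u' u (Set.Iio t₁) := fun s hs =>
    Set.piecewise_eq_of_notMem _ _ _ fun hmem => not_lt.2 hmem.1.le hs
  obtain ⟨M, hM⟩ := h.exists_isExtremal hα hT h0
  obtain ⟨M', hM'⟩ := hrefl.exists_isExtremal hα hT ((hγ ht₁.le).trans h0)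
  obtain ⟨e, f, he, hf, hjump, hjump'⟩ := hM.exists_related_control_germs hM' htT (c := -1)
    (by filter_upwards [self_mem_nhdsWithin] with s hs using hu hs)
    (by filter_upwards [Ioo_mem_nhdsGT ht] with s hs
        rw [neg_one_mul]
        exact Set.piecewise_eq_of_mem _ _ _ hs)
  have hiff : M t₁ 0 = 0 ↔ M' t₁ 0 = 0 :=
    ⟨fun hz => hM.momentum_zero_eq_zero_of_eqOn hM' (fun s hs => hγ hs.2)
      (fun s hs => hu hs.2) ⟨htT, hz⟩ h₁,
    fun hz => hM'.momentum_zero_eq_zero_of_eqOn hM (fun s hs => (hγ hs.2).symm)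
      (fun s hs => (hu hs.2).symm) ⟨htT, hz⟩ (by rw [hγ (le_refl t₁), h₁])⟩
  rw [hjump, hjump'] at hiff
  rcases he with rfl | rfl <;> rcases hf with rfl | rfl <;> norm_num at hiff

theorem apply_two_nonneg (hα : α ∈ Set.Ioo 0 (π / 4)) (h : TimeOptimalS α 0 T γ u)
    (h0 : γ 0 = ![0, 0, 1]) (hend : 0 ≤ γ T 2) : ∀ t ∈ Set.Icc 0 T, 0 ≤ γ t 2 := by
  intro t ht
  by_contra! hneg
  have hcont := h.1.isTrajectory.continuousOn_apply 2
  obtain ⟨t₁, ht₁, h₁⟩ := intermediate_value_Icc' ht.1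
    (hcont.mono (Set.Icc_subset_Icc_right ht.2)) ⟨hneg.le, by simp [h0]⟩
  obtain ⟨t₂, ht₂, h₂⟩ := intermediate_value_Icc ht.2
    (hcont.mono (Set.Icc_subset_Icc_left ht.1)) ⟨hneg.le, hend⟩
  have hpos : 0 < t₁ := ht₁.1.lt_of_ne (by rintro rfl; simp [h0] at h₁)
  have hlt : t₁ < t₂ := (ht₁.2.trans ht₂.1).lt_of_ne (by
    rintro rfl
    rw [ht₁.2.antisymm ht₂.1] at h₁
    exact hneg.ne h₁)
  exact h.apply_two_ne_zero_of_lt hα h0 hpos hlt ht₂.2 h₁ h₂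

end TimeOptimalS

/-! ### Existence of optimal trajectories -/

theorem isCompact_setOf_lipschitzWith_apply_eq {X Y : Type*} [PseudoMetricSpace X] [MetricSpace Y]
    [ProperSpace Y] (K : NNReal) (x₀ : X) (y₀ : Y) :
    IsCompact {f : C(X, Y) | LipschitzWith K f ∧ f x₀ = y₀} := by
  refine ArzelaAscoli.isCompact_of_equicontinuous _ ?_
    (LipschitzWith.uniformEquicontinuous _ K fun f => f.2.1).equicontinuous
  have himage : ContinuousMap.toFun '' {f : C(X, Y) | LipschitzWith K f ∧ f x₀ = y₀} =
      {f : X → Y | LipschitzWith K f} ∩ {f | f x₀ = y₀} := by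
    ext f
    exact ⟨by rintro ⟨f, hf, rfl⟩; exact hf, fun hf => ⟨⟨f, hf.1.continuous⟩, hf, rfl⟩⟩
  rw [himage]
  refine (isCompact_univ_pi fun x => isCompact_closedBall y₀ (K * dist x x₀)).of_isClosed_subset
    ((isClosed_setOfPred_lipschitzWith K).inter
      (isClosed_eq (continuous_apply x₀) continuous_const)) ?_
  rintro f ⟨hf, rfl⟩ x -
  exact hf.dist_le_mul x x₀

theorem HasACDeriv.lipschitzOnWith {a b : ℝ} {f φ : ℝ → ℝ} {K : NNReal} (h : HasACDeriv a b f φ)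
    (hφ : ∀ t ∈ Set.Icc a b, |φ t| ≤ K) : LipschitzOnWith K f (Set.Icc a b) := by
  refine LipschitzOnWith.of_dist_le_mul fun s hs t ht => ?_
  wlog hst : s ≤ t generalizing s t
  · rw [dist_comm, dist_comm s]
    exact this t ht s hs (le_of_not_ge hst)
  rw [dist_comm, dist_comm s, dist_eq_norm, Real.dist_eq,
    (h.mono hs.1 (hst.trans ht.2) le_rfl).eq_add_integral ⟨hst, ht.2⟩, add_sub_cancel_left]
  refine intervalIntegral.norm_integral_le_of_norm_le_const fun r hr => ?_
  rw [Set.uIoc_of_le hst] at hr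
  exact hφ r ⟨hs.1.trans hr.1.le, hr.2.trans ht.2⟩

/-- The rotation of `ℝ³` by the angle `θ` about the `y₁`-axis, the axis of `GS`. -/
noncomputable def axialRotation (θ : ℝ) (x : Fin 3 → ℝ) : Fin 3 → ℝ :=
  ![x 0, cos θ * x 1 - sin θ * x 2, sin θ * x 1 + cos θ * x 2]

theorem axialRotation_zero (x : Fin 3 → ℝ) : axialRotation 0 x = x := by
  ext i
  fin_cases i <;> simp [axialRotation]

theorem axialRotation_axialRotation_neg (θ : ℝ) (x : Fin 3 → ℝ) :
    axialRotation θ (axialRotation (-θ) x) = x := by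
  ext i
  fin_cases i
  · rfl
  · simp [axialRotation]; linear_combination x 1 * sin_sq_add_cos_sq θ
  · simp [axialRotation]; linear_combination x 2 * sin_sq_add_cos_sq θ

theorem continuous_axialRotation :
    Continuous fun p : ℝ × (Fin 3 → ℝ) => axialRotation p.1 p.2 := by
  refine continuous_pi fun i => ?_
  fin_cases i <;> (dsimp [axialRotation]; fun_prop)

theorem HasACDeriv.axialRotation {a b : ℝ} {θ ϑ : ℝ → ℝ} {v φ : ℝ → Fin 3 → ℝ} (hab : a ≤ b)
    (hθ : HasACDeriv a b θ ϑ) (hv : ∀ i, HasACDeriv a b (fun t => v t i) (fun t => φ t i))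
    (i : Fin 3) : HasACDeriv a b (fun t => axialRotation (θ t) (v t) i) (fun t =>
      (axialRotation (θ t) (φ t) + ϑ t • ![0, -axialRotation (θ t) (v t) 2,
        axialRotation (θ t) (v t) 1]) i) := by
  have hcos := hθ.lipschitz_comp lipschitzWith_cos hasDerivAt_cos
  have hsin := hθ.lipschitz_comp lipschitzWith_sin hasDerivAt_sin
  fin_cases i
  · exact (hv 0).congr hab (fun _ _ => rfl) fun t _ => by simp [_root_.axialRotation]
  · refine ((hcos.mul (hv 1)).sub (hsin.mul (hv 2))).congr hab (fun _ _ => rfl) fun t _ => ?_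
    simp [_root_.axialRotation]; ring
  · refine ((hsin.mul (hv 1)).add (hcos.mul (hv 2))).congr hab (fun _ _ => rfl) fun t _ => ?_
    simp [_root_.axialRotation]; ring

/-- The drift seen from the frame rotated by `θ` about the axis of `GS`. If `θ' = u sin α`, then
`w' = rotatedDrift α θ w` says that `axialRotation θ w` solves the control system. -/
noncomputable def rotatedDrift (α θ : ℝ) (w : Fin 3 → ℝ) : Fin 3 → ℝ :=
  axialRotation (-θ) (FS α (axialRotation θ w))

theorem continuous_rotatedDrift (α : ℝ) :
    Continuous fun p : ℝ × (Fin 3 → ℝ) => rotatedDrift α p.1 p.2 := by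
  have hFS : Continuous (FS α) := by
    refine continuous_pi fun i => ?_
    fin_cases i <;> (dsimp [FS]; fun_prop)
  exact continuous_axialRotation.comp
    (continuous_fst.neg.prodMk (hFS.comp continuous_axialRotation))

theorem abs_rotatedDrift_apply_le_one (α : ℝ) {θ : ℝ} {w : Fin 3 → ℝ}
    (hw : axialRotation θ w ⬝ᵥ axialRotation θ w = 1) (i : Fin 3) :
    |rotatedDrift α θ w i| ≤ 1 := by
  set y := axialRotation θ w with hy
  simp only [dotProduct, Fin.sum_univ_three] at hw
  have hy0 : |y 0| ≤ 1 := by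
    rw [abs_le_one_iff_mul_self_le_one]; nlinarith [mul_self_nonneg (y 1), mul_self_nonneg (y 2)]
  have hy1 : |y 1| ≤ 1 := by
    rw [abs_le_one_iff_mul_self_le_one]; nlinarith [mul_self_nonneg (y 0), mul_self_nonneg (y 2)]
  have hmul : ∀ p q : ℝ, |p| ≤ 1 → |q| ≤ 1 → |p * q| ≤ 1 := fun p q hp hq => by
    rw [abs_mul]; exact mul_le_one₀ hp (abs_nonneg _) hq
  fin_cases i <;> simp only [rotatedDrift, ← hy] <;> simp [axialRotation, FS]
  · simpa using hmul _ _ (abs_cos_le_one α) hy1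
  · simpa using hmul _ _ (abs_cos_le_one θ) (hmul _ _ (abs_cos_le_one α) hy0)
  · simpa using hmul _ _ (abs_sin_le_one θ) (hmul _ _ (abs_cos_le_one α) hy0)

/-- Pairs of a time `T ≤ b` and a curve `t ↦ (∫₀ᵗ u, w t)` such that the corresponding trajectory
`axialRotation (sin α * ∫₀ᵗ u) (w t)` of the control system leads from `x` to `y` in time `T`. The
control is encoded by its primitive because the latter converges along uniform limits. -/
def liftedTrajectories (α b : ℝ) (x y : Fin 3 → ℝ) : Set (ℝ × C(ℝ, ℝ × (Fin 3 → ℝ))) :=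
  {p | p.1 ∈ Set.Icc 0 b ∧ (LipschitzWith 1 p.2 ∧ p.2 0 = (0, x)) ∧
    (∀ t ∈ Set.Icc 0 p.1, ∀ i, (p.2 t).2 i =
      x i + ∫ s in (0 : ℝ)..t, rotatedDrift α (sin α * (p.2 s).1) (p.2 s).2 i) ∧
    axialRotation (sin α * (p.2 p.1).1) (p.2 p.1).2 = y}

theorem isCompact_liftedTrajectories (α b : ℝ) (x y : Fin 3 → ℝ) :
    IsCompact (liftedTrajectories α b x y) := by
  have hlip := isCompact_setOf_lipschitzWith_apply_eq 1 (0 : ℝ) ((0 : ℝ), x)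
  refine (isCompact_Icc.prod hlip).of_isClosed_subset ?_ fun p hp => ⟨hp.1, hp.2.1⟩
  have hdrift : Continuous fun q : (ℝ × C(ℝ, ℝ × (Fin 3 → ℝ))) × ℝ =>
      rotatedDrift α (sin α * (q.1.2 q.2).1) (q.1.2 q.2).2 :=
    (continuous_rotatedDrift α).comp (f := fun q : (ℝ × C(ℝ, ℝ × (Fin 3 → ℝ))) × ℝ =>
      (sin α * (q.1.2 q.2).1, (q.1.2 q.2).2)) (by fun_prop)
  have hode : IsClosed {p : ℝ × C(ℝ, ℝ × (Fin 3 → ℝ)) | ∀ t : ℝ, 0 ≤ t → ∀ i,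
      (p.2 (min t p.1)).2 i = x i +
        ∫ s in (0 : ℝ)..min t p.1, rotatedDrift α (sin α * (p.2 s).1) (p.2 s).2 i} := by
    simp only [Set.ofPred_forall]
    refine isClosed_iInter fun t => isClosed_iInter fun _ => isClosed_iInter fun i =>
      isClosed_eq (by fun_prop) (continuous_const.add ?_)
    exact intervalIntegral.continuous_parametric_intervalIntegral_of_continuous
      (f := fun (p : ℝ × C(ℝ, ℝ × (Fin 3 → ℝ))) s =>
        rotatedDrift α (sin α * (p.2 s).1) (p.2 s).2 i)
      ((continuous_apply i).comp hdrift) (by fun_prop)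
  have hend : IsClosed {p : ℝ × C(ℝ, ℝ × (Fin 3 → ℝ)) |
      axialRotation (sin α * (p.2 p.1).1) (p.2 p.1).2 = y} :=
    isClosed_eq (continuous_axialRotation.comp (f := fun p : ℝ × C(ℝ, ℝ × (Fin 3 → ℝ)) =>
      (sin α * (p.2 p.1).1, (p.2 p.1).2)) (by fun_prop)) continuous_const
  convert ((isClosed_Icc (a := 0) (b := b)).preimage continuous_fst).inter
    ((hlip.isClosed.preimage continuous_snd).inter (hode.inter hend)) using 1
  ext p
  refine and_congr_right fun hp => and_congr_right fun _ => and_congr_left fun _ =>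
    ⟨fun h t ht => h _ ⟨le_min ht hp.1, min_le_right _ _⟩, fun h t ht => ?_⟩
  simpa only [min_eq_left ht.2] using h t ht.1

theorem admissiblePairS_of_mem_liftedTrajectories {α b T : ℝ} {x y : Fin 3 → ℝ}
    {f : C(ℝ, ℝ × (Fin 3 → ℝ))} (hx : x ⬝ᵥ x = 1) (h : (T, f) ∈ liftedTrajectories α b x y) :
    AdmissiblePairS α 0 T (fun t => axialRotation (sin α * (f t).1) (f t).2)
      (deriv fun t => (f t).1) := by
  obtain ⟨hT, ⟨hlip, h0⟩, hode, -⟩ := h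
  have hlip₁ : LipschitzWith 1 fun t => (f t).1 := by
    simpa using! LipschitzWith.prod_fst.comp hlip
  have hw : ∀ i, HasACDeriv 0 T (fun t => (f t).2 i)
      (fun t => rotatedDrift α (sin α * (f t).1) (f t).2 i) := fun i =>
    HasACDeriv.of_eq_add_integral hT.1 (Continuous.intervalIntegrable ((continuous_apply i).comp
      ((continuous_rotatedDrift α).comp (f := fun t => (sin α * (f t).1, (f t).2))
        (by fun_prop))) _ _) fun t ht => by simpa [h0] using hode t ht i
  refine .of_isTrajectory hT.1 (measurable_deriv _)
    (fun t _ => by simpa using norm_deriv_le_of_lipschitz hlip₁) (fun i => ?_)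
    (by simpa [h0, axialRotation_zero] using hx)
  refine (((HasACDeriv.of_lipschitzWith hlip₁).const_mul (sin α)).axialRotation hT.1 hw i).congr
    hT.1 (fun _ _ => rfl) fun t _ => ?_
  simp only [rotatedDrift, axialRotation_axialRotation_neg, Pi.add_apply, add_right_inj]
  fin_cases i <;> simp [GS] <;> ring

namespace AdmissiblePairS

variable {α a b T : ℝ} {γ : ℝ → Fin 3 → ℝ} {u : ℝ → ℝ}

theorem comp_add_right (h : AdmissiblePairS α a b γ u) (c : ℝ) :
    AdmissiblePairS α (a - c) (b - c) (fun t => γ (t + c)) (fun t => u (t + c)) := by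
  have hmem : ∀ t ∈ Set.Icc (a - c) (b - c), t + c ∈ Set.Icc a b := fun t ht =>
    ⟨by linarith [ht.1], by linarith [ht.2]⟩
  refine ⟨sub_le_sub_right h.hab c, h.humeas.comp (measurable_add_const c),
    fun t ht => h.hubound _ (hmem t ht), fun t ht => h.hsph _ (hmem t ht),
    h.hcont.comp (by fun_prop) hmem, fun t ht i => ?_⟩
  rw [h.hode _ (hmem t ht) i, intervalIntegral.integral_comp_add_right
    (fun s => FS α (γ s) i + u s * GS α (γ s) i), sub_add_cancel]

theorem hasACDeriv_integral_control (h : AdmissiblePairS α a b γ u) :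
    HasACDeriv a b (fun t => ∫ s in a..t, u s) u := by
  refine HasACDeriv.of_eq_add_integral h.hab
    ((intervalIntegrable_const (c := (1 : ℝ))).mono_fun h.humeas.aestronglyMeasurable ?_) (by simp)
  rw [Filter.EventuallyLE, ae_restrict_iff' measurableSet_uIoc]
  refine Filter.Eventually.of_forall fun t ht => ?_
  rw [Set.uIoc_of_le h.hab] at ht
  simpa using h.hubound t (Set.Ioc_subset_Icc_self ht)

theorem hasACDeriv_rotatedFrame (h : AdmissiblePairS α a b γ u) (i : Fin 3) :
    HasACDeriv a b (fun t => axialRotation (-(sin α * ∫ s in a..t, u s)) (γ t) i)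
      (fun t => axialRotation (-(sin α * ∫ s in a..t, u s)) (FS α (γ t)) i) := by
  refine ((h.hasACDeriv_integral_control.const_mul (sin α)).neg.axialRotation h.hab
    h.isTrajectory i).congr h.hab (fun _ _ => rfl) fun t _ => ?_
  fin_cases i <;> simp [axialRotation, FS, GS] <;> ring

theorem exists_mem_liftedTrajectories (h : AdmissiblePairS α 0 T γ u) (hT : T ≤ b) :
    ∃ f, (T, f) ∈ liftedTrajectories α b (γ 0) (γ T) := by
  set U : ℝ → ℝ := fun t => ∫ s in (0 : ℝ)..t, u s with hU
  set F : ℝ → ℝ × (Fin 3 → ℝ) := fun t => (U t, axialRotation (-(sin α * U t)) (γ t)) with hF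
  have hFγ : ∀ t, axialRotation (sin α * (F t).1) (F t).2 = γ t := fun t =>
    axialRotation_axialRotation_neg _ _
  have hw : ∀ i, HasACDeriv 0 T (fun t => (F t).2 i)
      (fun t => rotatedDrift α (sin α * (F t).1) (F t).2 i) := fun i => by
    simp only [rotatedDrift, hFγ]
    exact h.hasACDeriv_rotatedFrame i
  have hF0 : F 0 = (0, γ 0) := by simp [hF, hU, axialRotation_zero]
  have hlip : LipschitzOnWith 1 F (Set.Icc 0 T) := by
    refine (LipschitzOnWith.prodMk (h.hasACDeriv_integral_control.lipschitzOnWith (K := 1)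
      (by simpa using h.hubound)) (LipschitzOnWith.of_dist_le_mul (K := 1) fun s hs t ht =>
        (dist_pi_le_iff (by positivity)).2 fun i => ?_)).weaken (by simp)
    refine ((hw i).lipschitzOnWith fun r hr => ?_).dist_le_mul s hs t ht
    exact abs_rotatedDrift_apply_le_one α (by rw [hFγ]; exact h.dotProduct_self hr) i
  have hcurve : LipschitzWith 1 (Set.IccExtend h.hab ((Set.Icc 0 T).domRestrict F)) := by
    simpa using! hlip.to_restrict.comp (LipschitzWith.projIcc h.hab)
  have hext : ∀ t ∈ Set.Icc 0 T, Set.IccExtend h.hab ((Set.Icc 0 T).domRestrict F) t = F t :=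
    fun t ht => Set.IccExtend_of_mem _ _ ht
  refine ⟨⟨_, hcurve.continuous⟩, ⟨h.hab, hT⟩, ⟨hcurve, ?_⟩, fun t ht i => ?_, ?_⟩
  · exact (hext 0 ⟨le_rfl, h.hab⟩).trans hF0
  · simp only [ContinuousMap.coe_mk]
    rw [hext t ht, (hw i).eq_add_integral ht, hF0]
    congr 1
    refine intervalIntegral.integral_congr fun s hs => ?_
    rw [Set.uIcc_of_le ht.1] at hs
    simp only [hext s ⟨hs.1, hs.2.trans ht.2⟩]
  · simp only [ContinuousMap.coe_mk]
    rw [hext T ⟨h.hab, le_rfl⟩, hFγ]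

theorem exists_timeOptimalS (h : AdmissiblePairS α a b γ u) :
    ∃ T η v, TimeOptimalS α 0 T η v ∧ η 0 = γ a ∧ η T = γ b := by
  have hlift : ∀ {a' b' γ' u'}, AdmissiblePairS α a' b' γ' u' → γ' a' = γ a → γ' b' = γ b →
      b' - a' ≤ b - a → ∃ f, (b' - a', f) ∈ liftedTrajectories α (b - a) (γ a) (γ b) := by
    intro a' b' γ' u' h' ha hb hle
    have hshift := h'.comp_add_right a'
    rw [sub_self] at hshift
    simpa [ha, hb] using hshift.exists_mem_liftedTrajectories hle
  obtain ⟨f₀, hf₀⟩ := hlift h rfl rfl le_rfl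
  obtain ⟨⟨T, f⟩, hf, hmin⟩ := (isCompact_liftedTrajectories α (b - a) (γ a) (γ b)).exists_isMinOn
    ⟨_, hf₀⟩ continuous_fst.continuousOn
  have h0 : axialRotation (sin α * (f 0).1) (f 0).2 = γ a := by
    simp [hf.2.1.2, axialRotation_zero]
  refine ⟨T, _, _, ⟨admissiblePairS_of_mem_liftedTrajectories
    (h.dotProduct_self ⟨le_rfl, h.hab⟩) hf, ?_⟩, h0, hf.2.2.2⟩
  intro a' b' γ' u' h' ha hb
  rw [sub_zero]
  by_contra! hlt
  obtain ⟨f', hf'⟩ := hlift h' (ha.trans h0) (hb.trans hf.2.2.2) (hlt.le.trans hf.1.2)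
  exact hlt.not_ge (hmin hf')

end AdmissiblePairS

/-! ### Reaching the points of a meridian -/

/-- `y` can be reached from `x` along the control system. -/
def Reachable (α : ℝ) (x y : Fin 3 → ℝ) : Prop :=
  ∃ T γ u, AdmissiblePairS α 0 T γ u ∧ γ 0 = x ∧ γ T = y

namespace Reachable

variable {α : ℝ} {x y z : Fin 3 → ℝ}

theorem refl (α : ℝ) (hx : x ⬝ᵥ x = 1) : Reachable α x x := by
  refine ⟨0, fun _ => x, fun _ => 0, .of_isTrajectory le_rfl measurable_const (by simp) ?_ hx,
    rfl, rfl⟩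
  exact fun i => HasACDeriv.of_eq_add_integral le_rfl (by simp) fun t ht => by
    simp [ht.2.antisymm ht.1]

theorem trans (hxy : Reachable α x y) (hyz : Reachable α y z) : Reachable α x z := by
  obtain ⟨T, γ, u, h, h0, hT⟩ := hxy
  obtain ⟨S, η, v, h', h0', hS⟩ := hyz
  have hshift := h'.comp_add_right (-T)
  simp only [sub_neg_eq_add, zero_add] at hshift
  set ζ := (Set.Iic T).piecewise γ fun t => η (t + -T)
  set w := (Set.Iic T).piecewise u fun t => v (t + -T)
  have hζγ : ∀ t ≤ T, ζ t = γ t := fun t ht => Set.piecewise_eq_of_mem (Set.Iic T) _ _ ht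
  have hwu : ∀ t ≤ T, w t = u t := fun t ht => Set.piecewise_eq_of_mem (Set.Iic T) _ _ ht
  have hwv : ∀ t, T < t → w t = v (t + -T) := fun t ht =>
    Set.piecewise_eq_of_notMem (Set.Iic T) _ _ (not_le.2 ht)
  have hζη : ∀ t, T ≤ t → ζ t = η (t + -T) := fun t ht => by
    rcases ht.eq_or_lt with rfl | hlt
    · rw [hζγ _ le_rfl, hT, add_neg_cancel, h0']
    · exact Set.piecewise_eq_of_notMem (Set.Iic T) _ _ (not_le.2 hlt)
  refine ⟨S + T, ζ, w, .of_isTrajectory (h.hab.trans hshift.hab)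
    (h.humeas.piecewise measurableSet_Iic hshift.humeas) (fun t ht => ?_)
    (.glue h.hab hshift.hab
      (h.isTrajectory.congr h.hab (fun t ht => (hζγ t ht.2).symm)
        fun t ht => (hwu t ht.2.le).symm)
      (hshift.isTrajectory.congr hshift.hab (fun t ht => (hζη t ht.1).symm)
        fun t ht => (hwv t ht.1).symm)) ?_, ?_, ?_⟩
  · rcases le_or_gt t T with htT | hTt
    · exact hwu t htT ▸ h.hubound t ⟨ht.1, htT⟩
    · exact hwv t hTt ▸ hshift.hubound t ⟨hTt.le, ht.2⟩
  · rw [hζγ 0 h.hab]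
    exact h.dotProduct_self ⟨le_rfl, h.hab⟩
  · rw [hζγ 0 h.hab, h0]
  · rw [hζη _ hshift.hab, add_neg_cancel_right, hS]

theorem exists_timeOptimalS (h : Reachable α x y) :
    ∃ T γ u, TimeOptimalS α 0 T γ u ∧ γ 0 = x ∧ γ T = y := by
  obtain ⟨T, γ, u, h, rfl, rfl⟩ := h
  exact h.exists_timeOptimalS

end Reachable

/-- The point at signed colatitude `r` on the great circle `y₂ = 0`. -/
noncomputable def meridian (r : ℝ) : Fin 3 → ℝ := ![sin r, 0, cos r]

theorem meridian_zero : meridian 0 = ![0, 0, 1] := by simp [meridian]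

theorem meridian_dotProduct_self (r : ℝ) : meridian r ⬝ᵥ meridian r = 1 := by
  simp [meridian, dotProduct, Fin.sum_univ_three, ← sq]

/-- The point at angle `s` on the circle of spherical radius `d` about `meridian β`. -/
noncomputable def circleAboutMeridian (β d s : ℝ) : Fin 3 → ℝ :=
  ![cos d * sin β + cos s * (sin d * cos β), sin s * sin d,
    cos d * cos β - cos s * (sin d * sin β)]

theorem circleAboutMeridian_zero (β d : ℝ) : circleAboutMeridian β d 0 = meridian (β + d) := by
  ext i
  fin_cases i <;> simp [circleAboutMeridian, meridian, sin_add, cos_add] <;> ring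

theorem circleAboutMeridian_pi (β d : ℝ) : circleAboutMeridian β d π = meridian (β - d) := by
  ext i
  fin_cases i <;> simp [circleAboutMeridian, meridian, sin_sub, cos_sub] <;> ring

theorem isTrajectory_circleAboutMeridian {α a b β d ρ w : ℝ} (hab : a ≤ b)
    (hcos : ρ * cos β = cos α) (hsin : ρ * sin β = w * sin α) :
    IsTrajectory α a b (fun _ => w) fun t => circleAboutMeridian β d (ρ * t) := by
  have hlin : ∀ t, HasDerivAt (fun t => ρ * t) ρ t := fun t => by
    simpa using (hasDerivAt_id t).const_mul ρ
  have h₀ : ∀ t, HasDerivAt (fun t => circleAboutMeridian β d (ρ * t) 0)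
      (-(cos α * circleAboutMeridian β d (ρ * t) 1)) t := fun t => by
    refine (((hlin t).cos.mul_const (sin d * cos β)).const_add (cos d * sin β)).congr_deriv ?_
    simp [circleAboutMeridian, ← hcos]; ring
  have h₁ : ∀ t, HasDerivAt (fun t => circleAboutMeridian β d (ρ * t) 1)
      (cos α * circleAboutMeridian β d (ρ * t) 0
        - w * sin α * circleAboutMeridian β d (ρ * t) 2) t := fun t => by
    refine ((hlin t).sin.mul_const (sin d)).congr_deriv ?_
    simp [circleAboutMeridian, ← hcos, ← hsin]
    linear_combination -(cos (ρ * t) * sin d * ρ) * sin_sq_add_cos_sq β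
  have h₂ : ∀ t, HasDerivAt (fun t => circleAboutMeridian β d (ρ * t) 2)
      (w * sin α * circleAboutMeridian β d (ρ * t) 1) t := fun t => by
    refine (((hlin t).cos.mul_const (sin d * sin β)).const_sub (cos d * cos β)).congr_deriv ?_
    simp [circleAboutMeridian, ← hsin]; ring
  exact .of_hasACDeriv (.of_hasDerivAt_continuous hab h₀ (by dsimp [circleAboutMeridian]; fun_prop))
    (.of_hasDerivAt_continuous hab h₁ (by dsimp [circleAboutMeridian]; fun_prop))
    (.of_hasDerivAt_continuous hab h₂ (by dsimp [circleAboutMeridian]; fun_prop))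

/- The constant control `tan β / tan α` rotates the sphere about `meridian β`; apply it for half a
turn. -/
theorem reachable_meridian_reflection {α β : ℝ} (hα : α ∈ Set.Ioo 0 (π / 2)) (hβ : |β| ≤ α)
    (r : ℝ) : Reachable α (meridian r) (meridian (2 * β - r)) := by
  obtain ⟨hβ₁, hβ₂⟩ := abs_le.1 hβ
  have hcosα : 0 < cos α := cos_pos_of_mem_Ioo ⟨by linarith [hα.1, pi_pos], hα.2⟩
  have hsinα : 0 < sin α := sin_pos_of_pos_of_lt_pi hα.1 (by linarith [hα.2, pi_pos])
  have hcosβ : 0 < cos β := cos_pos_of_mem_Ioo ⟨by linarith [hα.2], hβ₂.trans_lt hα.2⟩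
  have htan : 0 < tan α := tan_pos_of_pos_of_lt_pi_div_two hα.1 hα.2
  have hcontrol : |tan β / tan α| ≤ 1 := by
    have hmono := strictMonoOn_tan.monotoneOn
    have hmem : ∀ c, |c| ≤ α → c ∈ Set.Ioo (-(π / 2)) (π / 2) := fun c hc =>
      abs_lt.1 (hc.trans_lt hα.2)
    rw [abs_div, abs_of_pos htan, div_le_one htan, abs_le, ← tan_neg]
    have hα' : |α| ≤ α := (abs_of_pos hα.1).le
    exact ⟨hmono (hmem _ (by rwa [abs_neg])) (hmem _ hβ) hβ₁,
      hmono (hmem _ hβ) (hmem _ hα') hβ₂⟩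
  have hρ : 0 < cos α / cos β := by positivity
  have h0 : circleAboutMeridian β (r - β) (cos α / cos β * 0) = meridian r := by
    rw [mul_zero, circleAboutMeridian_zero, add_sub_cancel]
  refine ⟨π / (cos α / cos β), _, _, .of_isTrajectory (by positivity) measurable_const
    (fun _ _ => hcontrol) (isTrajectory_circleAboutMeridian (d := r - β) (by positivity)
      (div_mul_cancel₀ _ hcosβ.ne') ?_) (by rw [h0, meridian_dotProduct_self]), h0, ?_⟩
  · rw [tan_eq_sin_div_cos, tan_eq_sin_div_cos]
    field_simp
  · rw [mul_div_cancel₀ _ hρ.ne', circleAboutMeridian_pi]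
    ring_nf

theorem reachable_meridian_two_mul {α : ℝ} (hα : α ∈ Set.Ioo 0 (π / 2)) (n : ℕ) :
    ∀ δ : ℝ, |δ| ≤ α → Reachable α ![0, 0, 1] (meridian (2 * n * δ)) := by
  induction n with
  | zero =>
    intro δ _
    simpa [meridian_zero] using Reachable.refl α (meridian_dotProduct_self 0)
  | succ n ih =>
    intro δ hδ
    have hstep := (ih (-δ) (by rwa [abs_neg])).trans (reachable_meridian_reflection hα hδ _)
    convert hstep using 2
    push_cast
    ring

theorem reachable_meridian {α r : ℝ} (hα : α ∈ Set.Ioo 0 (π / 2)) {n : ℕ} (hr : |r| ≤ 2 * n * α) :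
    Reachable α ![0, 0, 1] (meridian r) := by
  rcases n.eq_zero_or_pos with rfl | hn
  · have hr0 : r = 0 := by simpa using hr
    simpa [hr0] using reachable_meridian_two_mul hα 0 0 (by simpa using hα.1.le)
  · have hn' : (0 : ℝ) < 2 * n := by positivity
    have hδ : |r / (2 * n)| ≤ α := by
      rw [abs_div, abs_of_pos hn', div_le_iff₀ hn']
      linarith
    simpa only [mul_div_cancel₀ r hn'.ne'] using reachable_meridian_two_mul hα n _ hδ

/-! ### The colatitude along an extremal -/

section Colatitude

variable {α e φ : ℝ} {y z : Fin 3 → ℝ}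

theorem cos_arccos_apply_two (hy : y ⬝ᵥ y = 1) : cos (arccos (y 2)) = y 2 := by
  simp only [dotProduct, Fin.sum_univ_three] at hy
  exact cos_arccos (by nlinarith [sq_nonneg (y 0), sq_nonneg (y 1)])
    (by nlinarith [sq_nonneg (y 0), sq_nonneg (y 1)])

theorem abs_mul_apply_zero_le_sin_arccos (he : |e| ≤ 1) (hy : y ⬝ᵥ y = 1) :
    |e * y 0| ≤ sin (arccos (y 2)) := by
  simp only [dotProduct, Fin.sum_univ_three] at hy
  have hle : |y 0| ≤ sin (arccos (y 2)) := by
    rw [sin_arccos]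
    exact abs_le_sqrt (by nlinarith [sq_nonneg (y 1)])
  rw [abs_mul]
  exact (mul_le_of_le_one_left (abs_nonneg _) he).trans hle

theorem cos_arccos_add_le_axisComponent (hα : 0 ≤ sin α) (he : |e| ≤ 1) (hy : y ⬝ᵥ y = 1) :
    cos (arccos (y 2) + α) ≤ axisComponent α e y := by
  have hle := (abs_le.1 (abs_mul_apply_zero_le_sin_arccos he hy)).1
  rw [cos_add, cos_arccos_apply_two hy, axisComponent]
  nlinarith

theorem axisComponent_le_cos_arccos_sub (hα : 0 ≤ sin α) (he : |e| ≤ 1) (hy : y ⬝ᵥ y = 1) :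
    axisComponent α e y ≤ cos (arccos (y 2) - α) := by
  have hle := (abs_le.1 (abs_mul_apply_zero_le_sin_arccos he hy)).2
  rw [cos_sub, cos_arccos_apply_two hy, axisComponent]
  nlinarith

theorem cos_add_le_axisComponent (hα : 0 ≤ α) (hφ : φ + α ≤ π) (he : |e| ≤ 1)
    (hy : y ⬝ᵥ y = 1) (hyφ : arccos (y 2) ≤ φ) : cos (φ + α) ≤ axisComponent α e y := by
  have h0 := arccos_nonneg (y 2)
  exact (cos_le_cos_of_nonneg_of_le_pi (by linarith) hφ (by linarith)).trans
    (cos_arccos_add_le_axisComponent (sin_nonneg_of_nonneg_of_le_pi hα (by linarith)) he hy)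

/- The circle through `y` about the rotation axis at colatitude `α` has spherical radius at most
`φ + α`. -/
theorem arccos_le_add_of_axisComponent_eq (hα : 0 ≤ α) (hφ : φ + α ≤ π) (he : |e| ≤ 1)
    (hy : y ⬝ᵥ y = 1) (hz : z ⬝ᵥ z = 1) (hyφ : arccos (y 2) ≤ φ)
    (hyz : axisComponent α e z = axisComponent α e y) :
    arccos (z 2) ≤ φ + 2 * α := by
  have h0 := arccos_nonneg (y 2)
  have hle := (cos_add_le_axisComponent hα hφ he hy hyφ).trans (hyz.ge.trans
    (axisComponent_le_cos_arccos_sub (sin_nonneg_of_nonneg_of_le_pi hα (by linarith)) he hz))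
  by_contra! hgt
  exact hle.not_gt (cos_lt_cos_of_nonneg_of_le_pi (by linarith)
    (by linarith [arccos_le_pi (z 2)]) (by linarith))

end Colatitude

theorem axisComponent_one_meridian (α r : ℝ) : axisComponent α 1 (meridian r) = cos (r - α) := by
  simp [axisComponent, meridian, cos_sub]
  ring

theorem axisComponent_neg_one_meridian (α r : ℝ) :
    axisComponent α (-1) (meridian r) = cos (r + α) := by
  simp [axisComponent, meridian, cos_add]
  ring

namespace IsExtremal

variable {α T : ℝ} {γ M : ℝ → Fin 3 → ℝ} {u : ℝ → ℝ} {p q r t φ : ℝ}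

theorem arccos_apply_two_le_add (h : IsExtremal α T γ u M) (hp : 0 ≤ p) (hpq : p < q) (hq : q ≤ T)
    (hne : ∀ t ∈ Set.Ioo p q, M t 0 ≠ 0) (hφ : arccos (γ p 2) ≤ φ) (hφα : φ + α ≤ π) :
    arccos (γ q 2) ≤ φ + 2 * α := by
  obtain ⟨e, he, -, hu, -, -⟩ := h.exists_sign_of_forall_ne_zero hp hpq hq hne
  exact arccos_le_add_of_axisComponent_eq h.mem_Ioo.1.le hφα (by rcases he with rfl | rfl <;> simp)
    (h.dotProduct_self ⟨hp, hpq.le.trans hq⟩) (h.dotProduct_self ⟨hp.trans hpq.le, hq⟩) hφ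
    ((h.trajectory.mono hp hpq.le hq).axisComponent_eq_left hu ⟨hpq.le, le_rfl⟩)

theorem arccos_apply_two_zero (h : IsExtremal α T γ u M) : arccos (γ 0 2) = 0 := by
  simp [h.apply_zero]

theorem arccos_apply_two_le (h : IsExtremal α T γ u M) : ∀ t ∈ h.zeros,
    2 * (h.zeros ∩ Set.Iic t).ncard * α ≤ π →
      arccos (γ t 2) ≤ 2 * (h.zeros ∩ Set.Iic t).ncard * α := by
  have hα := h.mem_Ioo.1
  refine finite_chain_induction h.finite_zeros (fun t ht hfirst => ?_)
    fun s hs t ht hst hnext hle => ?_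
  · rw [ncard_inter_Iic_eq_one ht hfirst]
    push_cast
    intro _
    have := h.arccos_apply_two_le_add le_rfl ht.1.1 ht.1.2.le (fun s hs h0 =>
      not_le.2 hs.2 (hfirst s ⟨⟨hs.1, hs.2.trans ht.1.2⟩, h0⟩)) h.arccos_apply_two_zero.le
      (by linarith [h.mem_Ioo.2, pi_pos])
    linarith
  · rw [ncard_inter_Iic_eq_succ h.finite_zeros ht hst hnext]
    push_cast
    intro hπ
    have := h.arccos_apply_two_le_add hs.1.1.le hst ht.1.2.le (fun r hr h0 =>
      (hnext r ⟨⟨hs.1.1.trans hr.1, hr.2.trans ht.1.2⟩, h0⟩).elim (not_le.2 hr.1) (not_le.2 hr.2))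
      (hle (by linarith)) (by linarith)
    linarith

theorem zeros_nonempty (h : IsExtremal α T γ u M) (hT : 2 * α < arccos (γ T 2)) :
    h.zeros.Nonempty := by
  by_contra! hempty
  have := h.arccos_apply_two_le_add le_rfl h.pos le_rfl
    (fun t ht h0 => Set.eq_empty_iff_forall_notMem.1 hempty t ⟨ht, h0⟩) h.arccos_apply_two_zero.le
    (by linarith [h.mem_Ioo.2, pi_pos])
  linarith

theorem momentum_zero_nonneg_right (h : IsExtremal α T γ u M) (hp : p ∈ Set.Ico 0 T)
    (hpos : ∀ t ∈ Set.Ioo p T, 0 ≤ M t 0) : 0 ≤ M T 0 := by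
  have hcont : ContinuousWithinAt (fun t => M t 0) (Set.Ioo p T) T :=
    (h.momentum.continuousOn_apply 0 T ⟨h.pos.le, le_rfl⟩).mono fun t ht =>
      ⟨hp.1.trans ht.1.le, ht.2.le⟩
  have : (𝓝[Set.Ioo p T] T).NeBot := right_nhdsWithin_Ioo_neBot hp.2
  exact ge_of_tendsto hcont (by filter_upwards [self_mem_nhdsWithin] with t ht using hpos t ht)

/- Orthogonality of `M T` to `meridian r` expresses `M T 2` by `M T 0`, and the conservation of the
axis component of `M` gives `M T 0 * sin (r - α) = -(cos α * level * cos r)`. -/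
theorem level_eq_zero_of_apply_eq_meridian (h : IsExtremal α T γ u M) (ht : t ∈ Set.Ico 0 T)
    (h0 : M t 0 = 0) (hu : ∀ᵐ s, s ∈ Set.Ioo t T → u s = 1) (hM : 0 ≤ M T 0)
    (hγ : γ T = meridian r) (hr : r ∈ Set.Ioo α (π / 2)) : h.level = 0 := by
  have haxis := (h.momentum.mono ht.1 ht.2.le le_rfl).axisComponent_eq_left hu ⟨ht.2.le, le_rfl⟩
  have horth := h.momentum_dotProduct T ⟨h.pos.le, le_rfl⟩
  rw [axisComponent, axisComponent, h0, h.momentum_two_eq_level ⟨ht.1, ht.2.le⟩ h0] at haxis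
  rw [dotProduct, Fin.sum_univ_three, hγ] at horth
  simp only [meridian, Matrix.cons_val] at horth
  have hsin : 0 < sin (r - α) :=
    sin_pos_of_pos_of_lt_pi (by linarith [hr.1]) (by linarith [hr.2, h.mem_Ioo.1, pi_pos])
  have hcos : 0 < cos r := cos_pos_of_mem_Ioo ⟨by linarith [hr.1, h.mem_Ioo.1, pi_pos], hr.2⟩
  have heq : M T 0 * sin (r - α) = -(cos α * cos r * h.level) := by
    rw [sin_sub]
    linear_combination -cos r * haxis + cos α * horth
  refine le_antisymm (le_of_mul_le_mul_left ?_ (mul_pos h.cos_pos hcos)) h.level_nonneg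
  linarith [mul_nonneg hM hsin.le]

theorem axisComponent_apply_of_level_eq_zero (h : IsExtremal α T γ u M) (hlevel : h.level = 0)
    {e : ℝ} (he : e = 1 ∨ e = -1) (ht : t ∈ h.zeros) (hM : e * M t 1 < 0) :
    axisComponent α e (γ t) = cos (2 * (h.zeros ∩ Set.Iic t).ncard * α + α) := by
  obtain ⟨δ, -, hδ, hψ⟩ := h.exists_isSwitchingAngle
  have hM := h.momentum_one_eq (e := -e) (by rcases he with rfl | rfl <;> simp)
    (Set.Ioo_subset_Icc_self ht.1) ht.2 (by linarith)
  have hamplitude : h.amplitude = 1 := by simp [amplitude, coLevel, hlevel]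
  rw [(hψ t ht).axisComponent_apply hM, hamplitude, h.halfStep_eq hlevel, hδ hlevel, one_mul]
  ring_nf

theorem eq_of_apply_eq_meridian (h : IsExtremal α T γ u M) (hγ : γ T = meridian r)
    (hr : r ∈ Set.Ioo (2 * α) (π / 2)) (hcard : 2 * h.zeros.ncard * α < r) :
    r = 2 * (h.zeros.ncard + 1) * α := by
  have hα := h.mem_Ioo
  obtain ⟨hr₁, hr₂⟩ := hr
  have hcard₀ : 0 ≤ 2 * h.zeros.ncard * α := mul_nonneg (by positivity) hα.1.le
  have harccos : arccos (γ T 2) = r := by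
    simpa [hγ, meridian] using arccos_cos (by linarith [hα.1]) (by linarith)
  have hne := h.zeros_nonempty (harccos ▸ hr₁)
  obtain ⟨t, ht, hlast⟩ := exists_isGreatest_ncard_inter_Iic h.finite_zeros hne
  have htI := ht.1.1
  have hle := h.arccos_apply_two_le t ht.1
  rw [hlast] at hle
  obtain ⟨e, he, hpos, hu, -, hM⟩ := h.exists_sign_of_forall_ne_zero htI.1.le htI.2 le_rfl
    fun s hs h0 => not_le.2 hs.1 (ht.2 ⟨⟨htI.1.trans hs.1, hs.2⟩, h0⟩)
  have haxis := (h.trajectory.mono htI.1.le htI.2.le le_rfl).axisComponent_eq_left hu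
    ⟨htI.2.le, le_rfl⟩
  rw [hγ] at haxis
  rcases he with rfl | rfl
  · have hlevel := h.level_eq_zero_of_apply_eq_meridian ⟨htI.1.le, htI.2⟩ ht.1.2 hu
      (h.momentum_zero_nonneg_right ⟨htI.1.le, htI.2⟩ fun s hs => by linarith [hpos s hs])
      hγ ⟨by linarith [hα.1], hr₂⟩
    rw [axisComponent_one_meridian, h.axisComponent_apply_of_level_eq_zero hlevel (Or.inl rfl)
      ht.1 (hM ht.1.2), hlast] at haxis
    have := injOn_cos ⟨by linarith [hα.1], by linarith [hα.1]⟩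
      ⟨by linarith [hα.1], by linarith [hα.2]⟩ haxis
    linarith
  · have hlt : cos (r + α) < cos (2 * h.zeros.ncard * α + α) :=
      cos_lt_cos_of_nonneg_of_le_pi (by linarith [hα.1]) (by linarith [hα.2]) (by linarith)
    rw [← axisComponent_neg_one_meridian, haxis] at hlt
    exact absurd (cos_add_le_axisComponent hα.1.le (by linarith [hα.2]) (by simp)
      (h.dotProduct_self (Set.Ioo_subset_Icc_self htI)) (hle (by linarith))) hlt.not_ge

end IsExtremal

/-! ### The maximum number of switchings -/

theorem NS_eq_ceil (α : ℝ) : NS α = ⌈π / (4 * α)⌉ := by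
  rw [NS, sub_eq_add_neg (_ : ℝ), Int.floor_intCast_add, Int.floor_neg]
  ring

theorem le_NS_iff {α : ℝ} (hα : 0 < α) {m : ℤ} : m ≤ NS α ↔ 2 * (m - 1) * α < π / 2 := by
  rw [NS_eq_ceil, ← Int.sub_one_lt_iff, Int.lt_ceil, lt_div_iff₀ (by positivity)]
  push_cast
  constructor <;> intro h <;> linarith

theorem setOf_isSwitching_self (a : ℝ) (u : ℝ → ℝ) : {t | IsSwitching a a u t} = ∅ := by
  refine Set.eq_empty_of_forall_notMem fun t ht => ht.2 1 one_pos ⟨1, Or.inl rfl, ?_⟩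
  rw [Measure.restrict_eq_zero.2 (measure_mono_null Set.inter_subset_right (by simp))]
  simp

theorem TimeOptimalS.finite_isSwitching_and_ncard_le {α T : ℝ} {γ : ℝ → Fin 3 → ℝ} {u : ℝ → ℝ}
    (h : TimeOptimalS α 0 T γ u) (hα : α ∈ Set.Ioo 0 (π / 4)) (h0 : γ 0 = ![0, 0, 1])
    (hend : 0 ≤ γ T 2) :
    {t | IsSwitching 0 T u t}.Finite ∧ ({t | IsSwitching 0 T u t}.ncard : ℤ) ≤ NS α := by
  rw [le_NS_iff hα.1]
  rcases h.admissible.hab.eq_or_lt with rfl | hT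
  · rw [setOf_isSwitching_self]
    refine ⟨Set.finite_empty, ?_⟩
    simp
    linarith [hα.1, pi_pos]
  · obtain ⟨M, hM⟩ := h.exists_isExtremal hα hT h0
    rw [hM.setOf_isSwitching_eq_zeros]
    exact ⟨hM.finite_zeros, by
      have := hM.ncard_zeros_lt (h.apply_two_nonneg hα h0 hend)
      push_cast
      linarith⟩

theorem TimeOptimalS.NS_le_ncard_isSwitching {α T r : ℝ} {γ : ℝ → Fin 3 → ℝ} {u : ℝ → ℝ}
    (h : TimeOptimalS α 0 T γ u) (hα : α ∈ Set.Ioo 0 (π / 4)) (h0 : γ 0 = ![0, 0, 1])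
    (hT : γ T = meridian r) (hr : r ∈ Set.Ioo (2 * α) (π / 2)) (hNS : 2 * (NS α - 1) * α < r) :
    NS α ≤ {t | IsSwitching 0 T u t}.ncard := by
  have hpos : 0 < T := h.admissible.hab.lt_of_ne fun hT0 => by
    have hsin : sin r = 0 := by simpa [← hT0, h0, meridian] using (congrFun hT 0).symm
    exact (sin_pos_of_pos_of_lt_pi (by linarith [hr.1, hα.1]) (by linarith [hr.2, pi_pos])).ne' hsin
  obtain ⟨M, hM⟩ := h.exists_isExtremal hα hpos h0
  rw [hM.setOf_isSwitching_eq_zeros]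
  by_contra! hlt
  have hcard : ((hM.zeros.ncard : ℤ) : ℝ) ≤ NS α - 1 := by
    exact_mod_cast Int.le_sub_one_of_lt hlt
  push_cast at hcard
  have hrcard := hM.eq_of_apply_eq_meridian hT hr (by nlinarith [hα.1])
  have hle : (hM.zeros.ncard : ℤ) + 2 ≤ NS α := (le_NS_iff hα.1).2 (by
    push_cast
    linarith [hr.2])
  have hle' : (hM.zeros.ncard : ℝ) + 2 ≤ NS α := by exact_mod_cast hle
  nlinarith [hα.1]

theorem exists_timeOptimalS_apply_eq_meridian {α : ℝ} (hα : α ∈ Set.Ioo 0 (π / 4)) :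
    ∃ r ∈ Set.Ioo (2 * α) (π / 2), 2 * (NS α - 1) * α < r ∧
      ∃ T γ u, TimeOptimalS α 0 T γ u ∧ γ 0 = ![0, 0, 1] ∧ γ T = meridian r := by
  have hlt : 2 * (NS α - 1) * α < π / 2 := (le_NS_iff hα.1).1 le_rfl
  obtain ⟨r, hr₁, hr₂⟩ := exists_between (max_lt hlt (by linarith [hα.2] : 2 * α < π / 2))
  obtain ⟨hr₁, hr₁'⟩ := max_lt_iff.1 hr₁
  have hNS : π / 2 ≤ 2 * NS α * α := by
    have := (le_NS_iff hα.1).not.1 (not_le.2 (lt_add_one (NS α)))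
    push_cast at this
    linarith
  obtain ⟨N, hN⟩ := Int.eq_ofNat_of_zero_le ((le_NS_iff hα.1).2 (by
    push_cast
    linarith [hα.1, pi_pos]) : 0 ≤ NS α)
  have hle : |r| ≤ 2 * N * α := by
    rw [abs_of_pos (by linarith [hα.1])]
    rw [hN] at hNS
    exact hr₂.le.trans (by exact_mod_cast hNS)
  exact ⟨r, ⟨hr₁', hr₂⟩, hr₁,
    (reachable_meridian ⟨hα.1, by linarith [hα.2, pi_pos]⟩ hle).exists_timeOptimalS⟩

/-- The maximum number of switchings of time optimal trajectories of `(Σ)_S` starting at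
the north pole and ending in the closed upper hemisphere equals `N_S(α)`. -/
theorem max_switchings_eq_NS (α : ℝ) (hα : α ∈ Set.Ioo 0 (π / 4)) :
    (∀ T : ℝ, ∀ γ : ℝ → Fin 3 → ℝ, ∀ u : ℝ → ℝ, TimeOptimalS α 0 T γ u →
      γ 0 = ![0, 0, 1] → 0 ≤ γ T 2 →
      {t | IsSwitching 0 T u t}.Finite ∧
      ({t | IsSwitching 0 T u t}.ncard : ℤ) ≤ NS α) ∧
    (∃ (T : ℝ) (γ : ℝ → Fin 3 → ℝ) (u : ℝ → ℝ), TimeOptimalS α 0 T γ u ∧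
      γ 0 = ![0, 0, 1] ∧ 0 ≤ γ T 2 ∧
      {t | IsSwitching 0 T u t}.Finite ∧
      ({t | IsSwitching 0 T u t}.ncard : ℤ) = NS α) := by
  refine ⟨fun T γ u h h0 hend => h.finite_isSwitching_and_ncard_le hα h0 hend, ?_⟩
  obtain ⟨r, hr, hNS, T, γ, u, h, h0, hT⟩ := exists_timeOptimalS_apply_eq_meridian hα
  have hend : 0 ≤ γ T 2 := by
    rw [hT]
    exact (cos_pos_of_mem_Ioo ⟨by linarith [hr.1, hα.1, pi_pos], hr.2⟩).le
  obtain ⟨hfin, hle⟩ := h.finite_isSwitching_and_ncard_le hα h0 hend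
  exact ⟨T, γ, u, h, h0, hend, hfin, hle.antisymm (h.NS_le_ncard_isSwitching hα h0 hT hr hNS)⟩
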